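/- arXiv:math/0608328 — 3 statements merged into one kernel-verified Lean document; each statement's English description precedes it below -/
import Mathlib

section
/- Let p ≥ 5 be a prime. Then binom(2p−1, p−1) − 1 ≡ −(2/3)·p³·B_{p−3} (mod p⁴). -/
open Finset

/-- `x ≡ y (mod p^c)` for rationals: `x = y` or the `p`-adic valuation of `x - y`
is at least `c`. -/
def modCong (p : ℕ) (c : ℤ) (x y : ℚ) : Prop :=
  x = y ∨ c ≤ padicValRat p (x - y)

theorem prod_one_add_mul_of_pow_four_eq_zero {R ι : Type*} [CommRing R] {x : R} (hx : x ^ 4 = 0)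
    (s : Finset ι) (u : ι → R) :
    ∃ E F : R, 2 * E = (∑ i ∈ s, u i) ^ 2 - ∑ i ∈ s, u i ^ 2 ∧
      ∏ i ∈ s, (1 + x * u i) = 1 + x * ∑ i ∈ s, u i + x ^ 2 * E + x ^ 3 * F ∧
      ∏ i ∈ s, (1 - x * u i) = 1 - x * ∑ i ∈ s, u i + x ^ 2 * E - x ^ 3 * F := by
  classical
  induction s using Finset.induction_on with
  | empty => exact ⟨0, 0, by simp⟩
  | insert a s ha ih =>
    obtain ⟨E, F, hE, hpos, hneg⟩ := ih
    refine ⟨E + u a * ∑ i ∈ s, u i, F + u a * E, ?_, ?_, ?_⟩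
    · rw [sum_insert ha, sum_insert ha]
      linear_combination hE
    · rw [prod_insert ha, sum_insert ha, hpos]
      linear_combination u a * F * hx
    · rw [prod_insert ha, sum_insert ha, hneg]
      linear_combination u a * F * hx

theorem isUnit_natCast_succ_of_lt {p : ℕ} (hp : p.Prime) (c : ℕ) {i : ℕ} (hi : i < p - 1) :
    IsUnit ((i : ZMod (p ^ c)) + 1) := by
  have h : (i + 1).Coprime (p ^ c) := Nat.Coprime.pow_right _
    (Nat.coprime_of_lt_prime (by lia) (by lia) hp).symm
  exact_mod_cast (ZMod.isUnit_iff_coprime _ _).2 h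

theorem choose_sub_one_eq_of_mul_eq_one {p : ℕ} (hp : p.Prime) (hp2 : p ≠ 2)
    (u : ℕ → ZMod (p ^ 4)) (hu : ∀ i < p - 1, ((i : ZMod (p ^ 4)) + 1) * u i = 1) :
    ((2 * p - 1).choose (p - 1) : ZMod (p ^ 4)) - 1 =
      (p : ZMod (p ^ 4)) ^ 2 * ((∑ i ∈ range (p - 1), u i) ^ 2 - ∑ i ∈ range (p - 1), u i ^ 2) := by
  have hp4 : (p : ZMod (p ^ 4)) ^ 4 = 0 := by exact_mod_cast ZMod.natCast_self (p ^ 4)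
  obtain ⟨E, F, hE, hpos, hneg⟩ := prod_one_add_mul_of_pow_four_eq_zero hp4 (range (p - 1)) u
  have hunit : IsUnit (∏ i ∈ range (p - 1), ((i : ZMod (p ^ 4)) + 1)) :=
    IsUnit.prod_iff.2 fun i hi ↦ isUnit_natCast_succ_of_lt hp 4 (mem_range.1 hi)
  have hchoose : ∏ i ∈ range (p - 1), (1 + (p : ZMod (p ^ 4)) * u i) =
      (2 * p - 1).choose (p - 1) := by
    apply hunit.mul_left_cancel
    have h := Nat.ascFactorial_eq_factorial_mul_choose p (p - 1)
    rw [Nat.ascFactorial_eq_prod_range, ← prod_range_add_one_eq_factorial,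
      show p + (p - 1) = 2 * p - 1 by lia] at h
    have h' := congrArg (Nat.cast : ℕ → ZMod (p ^ 4)) h
    push_cast at h'
    rw [← h', ← prod_mul_distrib]
    refine prod_congr rfl fun i hi ↦ ?_
    linear_combination (p : ZMod (p ^ 4)) * hu i (mem_range.1 hi)
  have hone : ∏ i ∈ range (p - 1), (1 - (p : ZMod (p ^ 4)) * u i) = 1 := by
    apply hunit.mul_left_cancel
    rw [← prod_mul_distrib, mul_one, ← prod_range_reflect]
    have heven : Even (p - 1) := hp.even_sub_one hp2
    have hsign : ∏ i ∈ range (p - 1), (-1 : ZMod (p ^ 4)) = 1 := by simp [heven]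
    have hneg_prod : ∏ i ∈ range (p - 1), ((i : ZMod (p ^ 4)) + 1) =
        ∏ i ∈ range (p - 1), (-1) * ((i : ZMod (p ^ 4)) + 1) := by
      rw [prod_mul_distrib, hsign, one_mul]
    rw [hneg_prod]
    refine prod_congr rfl fun i hi ↦ ?_
    have hi := mem_range.1 hi
    have hc : ((p - 1 - 1 - i : ℕ) : ZMod (p ^ 4)) = p - 1 - 1 - i := by
      rw [Nat.sub_sub, Nat.sub_sub, Nat.cast_sub (by lia)]
      push_cast
      ring
    have hu' := hu (p - 1 - 1 - i) (by lia)
    rw [hc] at hu' ⊢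
    linear_combination -(p : ZMod (p ^ 4)) * hu'
  linear_combination -hchoose + hpos + hneg - hone + (p : ZMod (p ^ 4)) ^ 2 * hE

theorem sq_mul_sum_sq_eq_zero_of_mul_eq_one {p : ℕ} (hp : p.Prime) (hp2 : p ≠ 2)
    (u : ℕ → ZMod (p ^ 4)) (hu : ∀ i < p - 1, ((i : ZMod (p ^ 4)) + 1) * u i = 1) :
    (p : ZMod (p ^ 4)) ^ 2 * (∑ i ∈ range (p - 1), u i) ^ 2 = 0 := by
  have hp4 : (p : ZMod (p ^ 4)) ^ 4 = 0 := by exact_mod_cast ZMod.natCast_self (p ^ 4)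
  have h2 : IsUnit (2 : ZMod (p ^ 4)) := by
    have := hp.two_le
    simpa [one_add_one_eq_two] using isUnit_natCast_succ_of_lt hp 4 (i := 1) (by lia)
  have hsum : 2 * ∑ i ∈ range (p - 1), u i =
      p * ∑ i ∈ range (p - 1), u i * u (p - 1 - 1 - i) := by
    rw [two_mul]
    nth_rewrite 2 [← sum_range_reflect]
    rw [← sum_add_distrib, mul_sum]
    refine sum_congr rfl fun i hi ↦ ?_
    have hi := mem_range.1 hi
    have hc : ((p - 1 - 1 - i : ℕ) : ZMod (p ^ 4)) = p - 1 - 1 - i := by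
      rw [Nat.sub_sub, Nat.sub_sub, Nat.cast_sub (by lia)]
      push_cast
      ring
    have hu' := hu (p - 1 - 1 - i) (by lia)
    rw [hc] at hu'
    linear_combination -u i * hu' - u (p - 1 - 1 - i) * hu i hi
  apply (h2.pow 2).mul_left_cancel
  rw [mul_left_comm, ← mul_pow, hsum]
  linear_combination (∑ i ∈ range (p - 1), u i * u (p - 1 - 1 - i)) ^ 2 * hp4

/-- `p⁴` divides `binom(2p-1, p-1) - 1 + p² ∑ kᴺ` with `N = p(p-1) - 2 = φ(p²) - 2`. -/
theorem pow_four_dvd_choose_sub_one_add {p : ℕ} (hp : p.Prime) (hp5 : 5 ≤ p) :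
    (p : ℤ) ^ 4 ∣ ((2 * p - 1).choose (p - 1) : ℤ) - 1 +
      p ^ 2 * ∑ i ∈ range (p - 1), ((i : ℤ) + 1) ^ (p * (p - 1) - 2) := by
  have hp2 : p ≠ 2 := by lia
  have hu (i : ℕ) (hi : i < p - 1) :
      ((i : ZMod (p ^ 4)) + 1) * ((i : ZMod (p ^ 4)) + 1)⁻¹ = 1 :=
    ZMod.mul_inv_of_unit _ (isUnit_natCast_succ_of_lt hp 4 hi)
  have hp4 : (p : ZMod (p ^ 4)) ^ 4 = 0 := by exact_mod_cast ZMod.natCast_self (p ^ 4)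
  have h1 := choose_sub_one_eq_of_mul_eq_one hp hp2 _ hu
  have h2 := sq_mul_sum_sq_eq_zero_of_mul_eq_one hp hp2 _ hu
  have h3 : (p : ZMod (p ^ 4)) ^ 2 * ∑ i ∈ range (p - 1), (((i : ZMod (p ^ 4)) + 1)⁻¹) ^ 2 =
      p ^ 2 * ∑ i ∈ range (p - 1), ((i : ZMod (p ^ 4)) + 1) ^ (p * (p - 1) - 2) := by
    rw [mul_sum, mul_sum]
    refine sum_congr rfl fun i hi ↦ ?_
    have hi := mem_range.1 hi
    have hcop : (i + 1).Coprime (p ^ 2) := Nat.Coprime.pow_right _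
      (Nat.coprime_of_lt_prime (by lia) (by lia) hp).symm
    have hmod := Nat.ModEq.pow_totient hcop
    rw [Nat.totient_prime_pow hp (by lia), show 2 - 1 = 1 from rfl, pow_one,
      Nat.modEq_iff_dvd] at hmod
    obtain ⟨t, ht⟩ := hmod
    have ht' := congrArg (Int.cast : ℤ → ZMod (p ^ 4)) ht
    push_cast at ht'
    have hN : ((i : ZMod (p ^ 4)) + 1) ^ (p * (p - 1)) =
        ((i : ZMod (p ^ 4)) + 1) ^ (p * (p - 1) - 2) * ((i : ZMod (p ^ 4)) + 1) ^ 2 := by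
      rw [← pow_add, Nat.sub_add_cancel]
      nlinarith [Nat.sub_add_cancel hp.one_le]
    rw [hN] at ht'
    generalize ((i : ZMod (p ^ 4)) + 1) ^ (p * (p - 1) - 2) = y at ht' ⊢
    have hu' := hu i hi
    apply ((isUnit_natCast_succ_of_lt hp 4 hi).pow 2).mul_left_cancel
    generalize ((i : ZMod (p ^ 4)) + 1)⁻¹ = v at hu' ⊢
    linear_combination (p : ZMod (p ^ 4)) ^ 2 * (((i : ZMod (p ^ 4)) + 1) * v + 1) * hu' +
      (p : ZMod (p ^ 4)) ^ 2 * ht' + t * hp4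
  have h4 : (((((2 * p - 1).choose (p - 1) : ℤ) - 1 +
      p ^ 2 * ∑ i ∈ range (p - 1), ((i : ℤ) + 1) ^ (p * (p - 1) - 2) : ℤ)) : ZMod (p ^ 4)) = 0 := by
    push_cast
    linear_combination h1 + h2 - h3
  exact_mod_cast (ZMod.intCast_zmod_eq_zero_iff_dvd _ _).1 h4

theorem sub_pow_of_sq_eq_zero {R : Type*} [CommRing R] {x : R} (hx : x ^ 2 = 0) (y : R) (n : ℕ) :
    (y - x) ^ (n + 1) = y ^ (n + 1) - (n + 1) * x * y ^ n := by
  induction n with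
  | zero => simp
  | succ n ih =>
    rw [pow_succ, ih]
    push_cast
    linear_combination (n + 1) * y ^ n * hx

/-- Splitting the residues `2k` mod `p` at `p / 2`, where `p = 2 * h + 1`. -/
theorem two_pow_sub_one_mul_sum_pow {R : Type*} [CommRing R] (h : ℕ)
    (hx : (2 * h + 1 : R) ^ 2 = 0) (n : ℕ) :
    (2 ^ (n + 1) - 1) * ∑ i ∈ range (2 * h), ((i : R) + 1) ^ (n + 1) =
      (n + 1) * (2 * h + 1) * 2 ^ n * ∑ i ∈ range h, ((h + i : R) + 1) ^ n := by
  have hsplit (f : ℕ → R) : ∑ i ∈ range (2 * h), f i =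
      ∑ i ∈ range h, f i + ∑ i ∈ range h, f (h + i) := by
    rw [two_mul, sum_range_add]
  have hpar (f : ℕ → R) (h : ℕ) : ∑ i ∈ range (2 * h), f i =
      ∑ i ∈ range h, f (2 * i) + ∑ i ∈ range h, f (2 * i + 1) := by
    induction h with
    | zero => simp
    | succ h ih =>
      rw [show 2 * (h + 1) = 2 * h + 1 + 1 by ring, sum_range_succ, sum_range_succ, ih,
        sum_range_succ, sum_range_succ]
      ring
  have h1 := hpar (fun i ↦ ((i : R) + 1) ^ (n + 1)) h
  have h2 := hsplit (fun i ↦ ((i : R) + 1) ^ (n + 1))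
  have hodd : ∑ i ∈ range h, (((2 * i + 1 : ℕ) : R) + 1) ^ (n + 1) =
      2 ^ (n + 1) * ∑ i ∈ range h, ((i : R) + 1) ^ (n + 1) := by
    rw [mul_sum]
    refine sum_congr rfl fun i _ ↦ ?_
    rw [← mul_pow]
    push_cast
    ring
  have heven : ∑ i ∈ range h, (((2 * i : ℕ) : R) + 1) ^ (n + 1) =
      2 ^ (n + 1) * ∑ i ∈ range h, (((h + i : ℕ) : R) + 1) ^ (n + 1) -
      (n + 1) * (2 * h + 1) * 2 ^ n * ∑ i ∈ range h, ((h + i : R) + 1) ^ n := by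
    rw [mul_sum, mul_sum, ← sum_sub_distrib]
    refine sum_congr rfl fun i _ ↦ ?_
    have := sub_pow_of_sq_eq_zero hx (2 * (h + i + 1) : R) n
    rw [mul_pow, mul_pow] at this
    push_cast
    rw [← mul_assoc] at this
    rw [← sub_eq_zero, ← sub_eq_zero.2 this]
    ring
  rw [hodd, heven] at h1
  linear_combination 2 ^ (n + 1) * h2 - h1

theorem natCast_mul_pow_add_mul {p : ℕ} (hp : p.Prime) {k : ℕ} (hk : k.Coprime p) (n m : ℕ) :
    (p : ZMod (p ^ 2)) * (k : ZMod (p ^ 2)) ^ (n + (p - 1) * m) = p * (k : ZMod (p ^ 2)) ^ n := by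
  have h := (Nat.modEq_iff_dvd.1 ((Nat.ModEq.pow_totient hk).pow m))
  rw [Nat.totient_prime hp, ← pow_mul, one_pow] at h
  obtain ⟨t, ht⟩ := h
  have ht' := congrArg (Int.cast : ℤ → ZMod (p ^ 2)) ht
  push_cast at ht'
  have hp2 : (p : ZMod (p ^ 2)) ^ 2 = 0 := by exact_mod_cast ZMod.natCast_self (p ^ 2)
  rw [pow_add]
  linear_combination -(p : ZMod (p ^ 2)) * (k : ZMod (p ^ 2)) ^ n * ht' -
    t * (k : ZMod (p ^ 2)) ^ n * hp2

theorem sq_dvd_three_mul_sum_pow_sub {p : ℕ} (hp : p.Prime) (hp5 : 5 ≤ p) :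
    (p : ℤ) ^ 2 ∣ 3 * ∑ i ∈ range (p - 1), ((i : ℤ) + 1) ^ (p * (p - 1) - 2) -
      2 * ∑ i ∈ range (p - 1), ((i : ℤ) + 1) ^ (p - 3) := by
  obtain ⟨h, hh⟩ := hp.odd_of_ne_two (by lia)
  have hcast : (2 * h + 1 : ZMod (p ^ 2)) = p := by rw [hh]; push_cast; rfl
  have hp2 : (p : ZMod (p ^ 2)) ^ 2 = 0 := by exact_mod_cast ZMod.natCast_self (p ^ 2)
  have hx : (2 * h + 1 : ZMod (p ^ 2)) ^ 2 = 0 := by rw [hcast, hp2]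
  have h3 : IsUnit (3 : ZMod (p ^ 2)) := by
    have := isUnit_natCast_succ_of_lt hp 2 (i := 2) (by lia)
    norm_num at this
    exact this
  obtain ⟨n, hn⟩ : ∃ n, p = n + 4 := ⟨p - 4, by lia⟩
  have hnR : (p : ZMod (p ^ 2)) = n + 4 := by rw [hn]; push_cast; rfl
  obtain ⟨N, hN⟩ : ∃ N, N = n + (p - 1) * (p - 1) := ⟨_, rfl⟩
  have hN2 : p * (p - 1) = N + 3 := by
    rw [hN, hn, show n + 4 - 1 = n + 3 by lia]
    ring
  have hNR : (N : ZMod (p ^ 2)) + 1 = -p - 2 := by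
    have := congrArg (Nat.cast : ℕ → ZMod (p ^ 2)) hN2
    rw [Nat.cast_mul, Nat.cast_sub hp.one_le] at this
    push_cast at this
    linear_combination hp2 - this
  have hS := two_pow_sub_one_mul_sum_pow h hx n
  have hS' := two_pow_sub_one_mul_sum_pow h hx N
  have hT : (p : ZMod (p ^ 2)) * 2 ^ N * ∑ i ∈ range h, ((h + i : ZMod (p ^ 2)) + 1) ^ N =
      p * 2 ^ n * ∑ i ∈ range h, ((h + i : ZMod (p ^ 2)) + 1) ^ n := by
    rw [mul_sum, mul_sum]
    refine sum_congr rfl fun i hi ↦ ?_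
    have hi := mem_range.1 hi
    have hcop : (2 * (h + i + 1)).Coprime p := Nat.Coprime.mul_left
      (Nat.coprime_of_lt_prime (by lia) (by lia) hp).symm
      (Nat.coprime_of_lt_prime (by lia) (by lia) hp).symm
    have := natCast_mul_pow_add_mul hp hcop n (p - 1)
    rw [← hN] at this
    push_cast at this
    rwa [mul_pow, mul_pow, ← mul_assoc, ← mul_assoc] at this
  have hcop2 : Nat.Coprime 2 p := (Nat.coprime_of_lt_prime (by lia) (by lia) hp).symm
  have hA : (p : ZMod (p ^ 2)) * 2 ^ (n + 3) = p := by
    have := natCast_mul_pow_add_mul hp hcop2 0 1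
    rwa [mul_one, zero_add, pow_zero, mul_one, show p - 1 = n + 3 by lia] at this
  have hA' : (2 : ZMod (p ^ 2)) ^ (N + 3) = 1 := by
    have := (ZMod.natCast_eq_natCast_iff _ _ _).2 (Nat.ModEq.pow_totient (hcop2.pow_right 2))
    rw [Nat.totient_prime_pow hp (by lia), show 2 - 1 = 1 from rfl, pow_one, hN2] at this
    exact_mod_cast this
  obtain ⟨q, hq⟩ : ∃ q : ZMod (p ^ 2), (2 : ZMod (p ^ 2)) ^ (n + 3) = 1 + (p : ZMod (p ^ 2)) * q := by
    have := Nat.modEq_iff_dvd.1 (Nat.ModEq.pow_totient hcop2)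
    rw [Nat.totient_prime hp, show p - 1 = n + 3 by lia] at this
    obtain ⟨t, ht⟩ := this
    have ht' := congrArg (Int.cast : ℤ → ZMod (p ^ 2)) ht
    push_cast at ht'
    exact ⟨-t, by linear_combination -ht'⟩
  rw [hcast, show 2 * h = p - 1 by lia] at hS hS'
  have hfin : (((3 * ∑ i ∈ range (p - 1), ((i : ℤ) + 1) ^ (p * (p - 1) - 2) -
      2 * ∑ i ∈ range (p - 1), ((i : ℤ) + 1) ^ (p - 3) : ℤ)) : ZMod (p ^ 2)) = 0 := by
    rw [show p * (p - 1) - 2 = N + 1 by lia, show p - 3 = n + 1 by lia]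
    push_cast
    generalize ∑ i ∈ range (p - 1), ((i : ZMod (p ^ 2)) + 1) ^ (N + 1) = S' at hS' ⊢
    generalize ∑ i ∈ range (p - 1), ((i : ZMod (p ^ 2)) + 1) ^ (n + 1) = S at hS ⊢
    generalize ∑ i ∈ range h, ((h + i : ZMod (p ^ 2)) + 1) ^ n = T at hS hT
    generalize ∑ i ∈ range h, ((h + i : ZMod (p ^ 2)) + 1) ^ N = T' at hS' hT
    have hpS : (p : ZMod (p ^ 2)) * S = 0 := by
      apply h3.mul_left_cancel
      linear_combination (-4 * p) * hS + S * hA - 4 * (n + 1) * 2 ^ n * T * hp2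
    apply h3.mul_left_cancel
    have e1 : -3 * S = -12 * (p * 2 ^ n * T) := by
      linear_combination 4 * hS - S * hq - q * hpS - 4 * p * 2 ^ n * T * hnR + 4 * 2 ^ n * T * hp2
    have e2 : -3 * S' = -8 * (p * 2 ^ n * T) := by
      linear_combination 4 * hS' - S' * hA' + 4 * (N + 1) * hT + 4 * (p * 2 ^ n * T) * hNR -
        4 * 2 ^ n * T * hp2
    linear_combination -3 * e2 + 2 * e1
  exact_mod_cast (ZMod.intCast_zmod_eq_zero_iff_dvd _ _).1 hfin

theorem inv_natCast_mem_integer {p : ℕ} [Fact p.Prime] {k : ℕ} (hk : ¬ p ∣ k) :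
    (k : ℚ)⁻¹ ∈ (Rat.padicValuation p).integer := by
  rw [Valuation.mem_integer_iff, Rat.padicValuation_le_one_iff]
  rcases Nat.eq_zero_or_pos k with rfl | hk0
  · simp at hk
  · rwa [Rat.inv_natCast_den_of_pos hk0]

theorem bernoulli'_mem_integer {p : ℕ} [Fact p.Prime] {n : ℕ} (hn : n + 1 < p) :
    bernoulli' n ∈ (Rat.padicValuation p).integer := by
  induction n using Nat.strong_induction_on with
  | _ n ih =>
    rw [bernoulli'_def]
    refine sub_mem (one_mem _) (sum_mem fun k hk ↦ ?_)
    have hk := mem_range.1 hk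
    have hden : (n - k + 1 : ℚ) = ((n - k + 1 : ℕ) : ℚ) := by
      push_cast [Nat.cast_sub hk.le]
      rfl
    rw [hden, div_eq_mul_inv]
    exact mul_mem (mul_mem (natCast_mem _ _)
      (inv_natCast_mem_integer (Nat.not_dvd_of_pos_of_lt (by lia) (by lia)))) (ih k hk (by lia))

theorem bernoulli_mem_integer {p : ℕ} [Fact p.Prime] {n : ℕ} (hn : n + 1 < p) :
    bernoulli n ∈ (Rat.padicValuation p).integer :=
  mul_mem (pow_mem (neg_mem (one_mem _)) _) (bernoulli'_mem_integer hn)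

theorem sum_pow_eq_mul_bernoulli_add {p : ℕ} [Fact p.Prime] {n : ℕ} (hn0 : n ≠ 0)
    (hn : n + 1 < p) :
    ∃ z ∈ (Rat.padicValuation p).integer,
      ∑ i ∈ range (p - 1), ((i : ℚ) + 1) ^ n = p * bernoulli n + p ^ 2 * z := by
  refine ⟨∑ i ∈ range n,
    bernoulli i * ((n + 1).choose i) * (p : ℚ) ^ (n - 1 - i) * ((n + 1 : ℕ) : ℚ)⁻¹, ?_, ?_⟩
  · refine sum_mem fun i hi ↦ ?_
    have hi := mem_range.1 hi
    exact mul_mem (mul_mem (mul_mem (bernoulli_mem_integer (by lia)) (natCast_mem _ _))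
      (pow_mem (natCast_mem _ _) _))
      (inv_natCast_mem_integer (Nat.not_dvd_of_pos_of_lt (by lia) hn))
  · have hshift : ∑ i ∈ range (p - 1), ((i : ℚ) + 1) ^ n = ∑ i ∈ range p, (i : ℚ) ^ n := by
      rw [show range p = range (p - 1 + 1) by congr 1; lia, sum_range_succ']
      simp [hn0]
    rw [hshift, sum_range_pow, sum_range_succ, add_comm, mul_sum]
    congr 1
    · rw [Nat.choose_succ_self_right, Nat.add_sub_cancel_left]
      push_cast
      field_simp
    · refine sum_congr rfl fun i hi ↦ ?_
      have hi := mem_range.1 hi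
      rw [show n + 1 - i = 2 + (n - 1 - i) by lia, pow_add, div_eq_mul_inv]
      push_cast
      ring

theorem le_padicValRat_pow_mul {p : ℕ} [hp : Fact p.Prime] {y : ℚ} (c : ℕ)
    (hy : y ∈ (Rat.padicValuation p).integer) (hy0 : y ≠ 0) :
    (c : ℤ) ≤ padicValRat p (p ^ c * y) := by
  have hp0 : (p : ℚ) ≠ 0 := Nat.cast_ne_zero.2 hp.out.ne_zero
  rw [Valuation.mem_integer_iff, Rat.padicValuation_le_one_iff] at hy
  rw [padicValRat.mul (pow_ne_zero _ hp0) hy0, padicValRat.pow,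
    padicValRat.self hp.out.one_lt, padicValRat_def, padicValNat.eq_zero_of_not_dvd hy]
  simp

theorem stmt8 (p : ℕ) (hp : p.Prime) (hp5 : 5 ≤ p) :
    modCong p 4 (((2*p-1).choose (p-1) : ℚ) - 1)
      (-(2/3) * (p:ℚ)^3 * bernoulli (p-3)) := by
  have : Fact p.Prime := ⟨hp⟩
  obtain ⟨a, ha⟩ := pow_four_dvd_choose_sub_one_add hp hp5
  obtain ⟨b, hb⟩ := sq_dvd_three_mul_sum_pow_sub hp hp5
  obtain ⟨z, hz, hsum⟩ := sum_pow_eq_mul_bernoulli_add (p := p) (n := p - 3) (by lia) (by lia)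
  have ha' := congrArg (Int.cast : ℤ → ℚ) ha
  have hb' := congrArg (Int.cast : ℤ → ℚ) hb
  push_cast at ha' hb'
  have hy : ((3 : ℕ) : ℚ)⁻¹ * (3 * a - b - 2 * z) ∈ (Rat.padicValuation p).integer :=
    mul_mem (inv_natCast_mem_integer (Nat.not_dvd_of_pos_of_lt (by lia) (by lia)))
      (sub_mem (sub_mem (mul_mem (ofNat_mem _ 3) (intCast_mem _ _)) (intCast_mem _ _))
        (mul_mem (ofNat_mem _ 2) hz))
  have hdiff : (((2*p-1).choose (p-1) : ℚ) - 1) - (-(2/3) * (p:ℚ)^3 * bernoulli (p-3)) =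
      p ^ 4 * (((3 : ℕ) : ℚ)⁻¹ * (3 * a - b - 2 * z)) := by
    push_cast
    linear_combination ha' - (p : ℚ) ^ 2 / 3 * hb' - 2 / 3 * (p : ℚ) ^ 2 * hsum
  rw [modCong, or_iff_not_imp_left, ← sub_eq_zero, hdiff]
  exact fun h ↦ le_padicValRat_pow_mul 4 hy (right_ne_zero_of_mul h)
end

section
/- Let p ≥ 5 be a prime. Then binom(4p, p) − binom(4p−1, 2p−1) − 1 ≡ −(48/5)·p⁵·B_{p−5} (mod p⁶). -/
open Finset

open Polynomial in
/-- Comparing coefficients in `G(X + 1) = G(X) + n * (G(X) / X)` for the rising factorial `G`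
of degree `n`, with coefficients listed from the leading one down. -/
theorem sum_choose_mul_coeff_ascPochhammer (n r : ℕ) (hr : r < n) :
    ∑ i ∈ range (r + 1), ((n - i).choose (n - 1 - r) : ℤ) * (ascPochhammer ℤ n).coeff (n - i) =
      n * (ascPochhammer ℤ n).coeff (n - r) := by
  obtain ⟨m, rfl⟩ : ∃ m, n = m + 1 := ⟨n - 1, by omega⟩
  set G := ascPochhammer ℤ (m + 1) with hG
  have hshift : ((ascPochhammer ℤ m).comp (X + 1)).coeff (m - r) = G.coeff (m + 1 - r) := by
    rw [hG, ascPochhammer_succ_left, show m + 1 - r = (m - r) + 1 by omega, coeff_X_mul]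
  have hdeg : G.natDegree = m + 1 := ascPochhammer_natDegree ℤ _
  have hcomp : (G.comp (X + 1)).coeff (m - r) =
      ∑ i ∈ range (m + 2), ((m + 1 - i).choose (m - r) : ℤ) * G.coeff (m + 1 - i) := by
    rw [comp, eval₂_eq_sum_range, hdeg, finsetSum_coeff, ← sum_range_reflect]
    refine sum_congr rfl fun i hi => ?_
    rw [coeff_C_mul, coeff_X_add_one_pow, mul_comm,
      show m + 1 + 1 - 1 - i = m + 1 - i by omega]
  have hrec := congrArg (fun P => P.coeff (m - r)) (ascPochhammer_succ_comp_X_add_one ℤ m)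
  simp only [← hG, hcomp, coeff_add, coeff_smul, hshift] at hrec
  rw [show m + 2 = (r + 2) + (m - r) by omega, sum_range_add, sum_range_succ _ (r + 1),
    sum_eq_zero (s := range (m - r))] at hrec
  · rw [show m + 1 - (r + 1) = m - r by omega, Nat.choose_self] at hrec
    simp only [Nat.add_sub_cancel]
    simp only [nsmul_eq_mul] at hrec
    linear_combination hrec
  · intro i hi
    rw [Nat.choose_eq_zero_of_lt (by simp at hi; omega)]
    simp

theorem mul_coeff_ascPochhammer (n r : ℕ) (hr : r < n) :
    (r : ℤ) * (ascPochhammer ℤ n).coeff (n - r) =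
      ∑ i ∈ range r, ((n - i).choose (r + 1 - i) : ℤ) * (ascPochhammer ℤ n).coeff (n - i) := by
  have h := sum_choose_mul_coeff_ascPochhammer n r hr
  rw [sum_range_succ, show n - r = (n - 1 - r) + 1 by omega, Nat.choose_succ_self_right] at h
  have hsum : ∑ i ∈ range r,
      ((n - i).choose (n - 1 - r) : ℤ) * (ascPochhammer ℤ n).coeff (n - i) =
      ∑ i ∈ range r, ((n - i).choose (r + 1 - i) : ℤ) * (ascPochhammer ℤ n).coeff (n - i) := by
    refine sum_congr rfl fun i hi => ?_
    have hi := mem_range.1 hi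
    rw [← Nat.choose_symm (show r + 1 - i ≤ n - i by omega),
      show n - i - (r + 1 - i) = n - 1 - r by omega]
  rw [hsum] at h
  rw [show n - r = (n - 1 - r) + 1 by omega]
  have hc : ((n - 1 - r + 1 : ℕ) : ℤ) = n - r := by omega
  rw [hc] at h
  linear_combination -h

theorem coeff_ascPochhammer_self (n : ℕ) : (ascPochhammer ℤ n).coeff n = 1 := by
  have h := (monic_ascPochhammer ℤ n).coeff_natDegree
  rwa [ascPochhammer_natDegree] at h

theorem prime_dvd_coeff_ascPochhammer {p : ℕ} (hp : p.Prime) (r : ℕ) (hr : 1 ≤ r)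
    (hrp : r + 2 ≤ p) : (p : ℤ) ∣ (ascPochhammer ℤ p).coeff (p - r) := by
  induction r using Nat.strong_induction_on with
  | _ r ih =>
  have hp' := Nat.prime_iff_prime_int.1 hp
  have h : (p : ℤ) ∣ r * (ascPochhammer ℤ p).coeff (p - r) := by
    rw [mul_coeff_ascPochhammer p r (by omega)]
    refine dvd_sum fun i hi => ?_
    have hi := mem_range.1 hi
    rcases Nat.eq_zero_or_pos i with rfl | hi0
    · exact Dvd.dvd.mul_right
        (Int.natCast_dvd_natCast.2 (hp.dvd_choose_self (by omega) (by omega))) _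
    · exact Dvd.dvd.mul_left (ih i hi hi0 (by omega)) _
  rcases hp'.dvd_or_dvd h with h | h
  · have := Nat.le_of_dvd hr (Int.natCast_dvd_natCast.1 h)
    omega
  · exact h

/-- Reflection of the upper index of a binomial coefficient modulo `p`. -/
theorem choose_sub_cast_zmod {p : ℕ} [Fact p.Prime] (i m : ℕ) (hi : 1 ≤ i) (him : i + m ≤ p) :
    ((p - i).choose m : ZMod p) = (-1) ^ m * ((i + m - 1).choose m : ZMod p) := by
  have hfact : (m.factorial : ZMod p) ≠ 0 := by
    rw [Ne, ZMod.natCast_eq_zero_iff, (Fact.out : p.Prime).dvd_factorial]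
    omega
  apply mul_left_cancel₀ hfact
  have h1 : (m.factorial : ZMod p) * ((p - i).choose m : ZMod p) =
      (p - i).descFactorial m := by
    rw [Nat.descFactorial_eq_factorial_mul_choose]; push_cast; ring
  have h2 : (m.factorial : ZMod p) * ((i + m - 1).choose m : ZMod p) = i.ascFactorial m := by
    rw [Nat.ascFactorial_eq_factorial_mul_choose']; push_cast; ring
  rw [h1, mul_left_comm, h2, ← descPochhammer_eval_eq_descFactorial, Nat.cast_ascFactorial,
    Nat.cast_sub (by omega), ZMod.natCast_self, zero_sub]
  conv_rhs => rw [← neg_neg (i : ZMod p), ascPochhammer_eval_neg_eq_descPochhammer]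
  rw [← mul_assoc, ← mul_pow]
  simp

/-- The integers congruent to the Bernoulli numbers modulo `p` that are read off from
the coefficients of the rising factorial of degree `p`. -/
noncomputable def glaisherNumber (p i : ℕ) : ℤ :=
  if i = 0 then 1 else -((-1) ^ i * i * ((ascPochhammer ℤ p).coeff (p - i) / p))

theorem dvd_sum_choose_mul_glaisherNumber {p : ℕ} (hp : p.Prime) (r : ℕ) (hr : 1 ≤ r)
    (hrp : r + 2 ≤ p) :
    (p : ℤ) ∣ ∑ i ∈ range (r + 1), ((r + 1).choose i : ℤ) * glaisherNumber p i := by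
  have : Fact p.Prime := ⟨hp⟩
  have hp0 : (p : ℤ) ≠ 0 := by exact_mod_cast hp.ne_zero
  set a : ℕ → ℤ := fun i => (ascPochhammer ℤ p).coeff (p - i) / p with ha
  have hA : ∀ i, 1 ≤ i → i ≤ r → (ascPochhammer ℤ p).coeff (p - i) = p * a i := fun i hi hir =>
    (Int.mul_ediv_cancel' (prime_dvd_coeff_ascPochhammer hp i hi (by omega))).symm
  obtain ⟨s, rfl⟩ : ∃ s, r = s + 1 := ⟨r - 1, by omega⟩
  -- the recursion divided by `p`
  have hrec : ((s : ℤ) + 2) * (s + 1) * a (s + 1) = ((p - 1).choose (s + 1) : ℤ) +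
      ∑ i ∈ range s, ((s : ℤ) + 2) * (((p - (i + 1)).choose (s + 1 - i) : ℤ) * a (i + 1)) := by
    have h := mul_coeff_ascPochhammer p (s + 1) (by omega)
    rw [sum_range_succ', hA (s + 1) (by omega) le_rfl, Nat.sub_zero, Nat.sub_zero,
      coeff_ascPochhammer_self] at h
    have hterm : ∑ i ∈ range s, ((p - (i + 1)).choose (s + 1 + 1 - (i + 1)) : ℤ) *
        (ascPochhammer ℤ p).coeff (p - (i + 1)) =
        p * ∑ i ∈ range s, ((p - (i + 1)).choose (s + 1 - i) : ℤ) * a (i + 1) := by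
      rw [mul_sum]
      refine sum_congr rfl fun i hi => ?_
      have hi := mem_range.1 hi
      rw [hA (i + 1) (by omega) (by omega), Nat.add_sub_add_right]
      ring
    rw [hterm] at h
    have hch : (p : ℤ) * ((p - 1).choose (s + 1) : ℤ) = (p.choose (s + 1 + 1) : ℤ) * (s + 2) := by
      have h := Nat.add_one_mul_choose_eq (p - 1) (s + 1)
      rw [Nat.sub_add_cancel hp.one_le] at h
      exact_mod_cast h
    rw [← mul_sum]
    apply mul_left_cancel₀ hp0
    push_cast at h
    linear_combination ((s : ℤ) + 2) * h - hch
  have hrec' := congrArg (Int.cast : ℤ → ZMod p) hrec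
  rw [← ZMod.intCast_zmod_eq_zero_iff_dvd, sum_range_succ', sum_range_succ]
  push_cast at hrec' ⊢
  rw [choose_sub_cast_zmod 1 (s + 1) le_rfl (by omega), Nat.add_sub_cancel_left,
    Nat.choose_self] at hrec'
  have hsum : ∑ i ∈ range s, ((s : ZMod p) + 2) *
      (((p - (i + 1)).choose (s + 1 - i) : ZMod p) * (a (i + 1) : ZMod p)) =
      (-1) ^ (s + 1) * ∑ i ∈ range s, ((s + 1 + 1).choose (i + 1) : ZMod p) *
        (glaisherNumber p (i + 1) : ZMod p) := by
    rw [mul_sum]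
    refine sum_congr rfl fun i hi => ?_
    have hi := mem_range.1 hi
    have hch : ((s : ZMod p) + 2) * ((s + 1).choose i : ZMod p) =
        ((s + 1 + 1).choose (i + 1) : ZMod p) * (i + 1) := by
      have h := congrArg (Nat.cast : ℕ → ZMod p) (Nat.add_one_mul_choose_eq (s + 1) i)
      push_cast at h
      linear_combination h
    have hpow : (-1 : ZMod p) ^ (s + 1) = (-1) ^ (s + 1 - i) * (-1) ^ i := by
      rw [← pow_add, Nat.sub_add_cancel (by omega)]
    have hsq : (-1 : ZMod p) ^ i * (-1) ^ i = 1 := by rw [← mul_pow]; simp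
    rw [choose_sub_cast_zmod (i + 1) (s + 1 - i) (by omega) (by omega),
      show i + 1 + (s + 1 - i) - 1 = s + 1 by omega, Nat.choose_symm (by omega), hpow,
      glaisherNumber, if_neg (by omega)]
    push_cast
    linear_combination (-1 : ZMod p) ^ (s + 1 - i) * a (i + 1) * hch -
      (-1 : ZMod p) ^ (s + 1 - i) * ((s + 1 + 1).choose (i + 1) : ZMod p) * (i + 1) *
        a (i + 1) * hsq
  rw [hsum] at hrec'
  have hsq : (-1 : ZMod p) ^ (s + 1) * (-1) ^ (s + 1) = 1 := by rw [← mul_pow]; simp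
  rw [Nat.choose_succ_self_right, Nat.choose_zero_right]
  conv_lhs => enter [1, 2]; rw [glaisherNumber, if_neg (by omega)]
  conv_lhs => enter [2]; rw [glaisherNumber, if_pos rfl]
  push_cast at hrec' ⊢
  linear_combination (-(-1 : ZMod p) ^ (s + 1)) * hrec' - (1 + ∑ i ∈ range s,
    ((s + 1 + 1).choose (i + 1) : ZMod p) * (glaisherNumber p (i + 1) : ZMod p)) * hsq

theorem padicNorm_bernoulli_sub_glaisherNumber_lt_one {p : ℕ} (hp : p.Prime) (r : ℕ)
    (hrp : r + 2 ≤ p) : padicNorm p (bernoulli r - glaisherNumber p r) < 1 := by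
  have : Fact p.Prime := ⟨hp⟩
  induction r using Nat.strong_induction_on with
  | _ r ih =>
  rcases Nat.eq_zero_or_pos r with rfl | hr
  · simp [glaisherNumber]
  have hB := sum_bernoulli (r + 1)
  rw [if_neg (by omega), sum_range_succ, Nat.choose_succ_self_right] at hB
  obtain ⟨u, hu⟩ := dvd_sum_choose_mul_glaisherNumber hp r hr hrp
  rw [sum_range_succ, Nat.choose_succ_self_right] at hu
  have hu' := congrArg (Int.cast : ℤ → ℚ) hu
  push_cast at hu' hB
  have key : ((r + 1 : ℕ) : ℚ) * (bernoulli r - glaisherNumber p r) =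
      -(∑ i ∈ range r, ((r + 1).choose i : ℚ) * (bernoulli i - glaisherNumber p i) +
        ((p * u : ℤ) : ℚ)) := by
    simp only [mul_sub, sum_sub_distrib]
    push_cast
    linear_combination hB - hu'
  have hunit : padicNorm p ((r + 1 : ℕ) : ℚ) = 1 := by
    rw [padicNorm.nat_eq_one_iff]
    intro h
    have := Nat.le_of_dvd (by omega) h
    omega
  have h := congrArg (padicNorm p) key
  rw [padicNorm.mul, hunit, one_mul, padicNorm.neg] at h
  rw [h]
  refine padicNorm.nonarchimedean.trans_lt (max_lt (padicNorm.sum_lt' (fun i hi => ?_) one_pos)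
    ((padicNorm.int_lt_one_iff _).2 (dvd_mul_right _ _)))
  have hi := mem_range.1 hi
  rw [padicNorm.mul]
  exact mul_lt_one_of_nonneg_of_lt_one_right (padicNorm.of_nat _) (padicNorm.nonneg _)
    (ih i hi (by omega))

/-- `∏ j ∈ {1, …, p - 1}, (k * p + j)`. -/
noncomputable def blockProd (p : ℕ) (k : ℤ) : ℤ := (ascPochhammer ℤ (p - 1)).eval (k * p + 1)

theorem blockProd_reflect {p : ℕ} (hp : Odd p) (k : ℤ) : blockProd p (-1 - k) = blockProd p k := by
  have h1 : 1 ≤ p := hp.pos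
  have hpow : (-1 : ℤ) ^ (p - 1) = 1 := (Nat.Odd.sub_odd hp odd_one).neg_one_pow
  rw [blockProd, show (-1 - k) * (p : ℤ) + 1 = -((k + 1) * p - 1) by ring,
    ascPochhammer_eval_neg_eq_descPochhammer, hpow, one_mul,
    descPochhammer_eval_eq_ascPochhammer, blockProd]
  congr 1
  push_cast [h1]
  ring

theorem factorial_mul_blockProd {p : ℕ} (hp : 1 ≤ p) (k : ℕ) :
    (((k * p).factorial : ℕ) : ℤ) * blockProd p k = ((k * p + p - 1).factorial : ℕ) := by
  rw [blockProd, Nat.add_sub_assoc hp, ← Nat.factorial_mul_ascFactorial, Nat.cast_mul,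
    Nat.cast_ascFactorial]
  push_cast
  rfl

theorem choose_mul_blockProd_eq {p : ℕ} (hp : 1 ≤ p) :
    (((4 * p).choose p : ℕ) : ℤ) * blockProd p 0 = 4 * blockProd p 3 := by
  have h0 := factorial_mul_blockProd hp 0
  have h3 := factorial_mul_blockProd hp 3
  have hc := Nat.choose_mul_factorial_mul_factorial (show p ≤ 4 * p by omega)
  rw [show 4 * p - p = 3 * p by omega, ← Nat.mul_factorial_pred (show p ≠ 0 by omega),
    ← Nat.mul_factorial_pred (show 4 * p ≠ 0 by omega)] at hc
  rw [show 3 * p + p - 1 = 4 * p - 1 by omega] at h3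
  rw [show 0 * p + p - 1 = p - 1 by omega] at h0
  simp only [zero_mul, Nat.factorial_zero, Nat.cast_one, one_mul, Nat.cast_zero] at h0
  have hc' : (((4 * p).choose p : ℕ) : ℤ) * (p * ((p - 1).factorial : ℕ)) *
    (((3 * p).factorial : ℕ) : ℤ) = 4 * p * ((4 * p - 1).factorial : ℕ) := by exact_mod_cast hc
  rw [← h0, ← h3] at hc'
  have hne : ((p : ℤ) * (((3 * p).factorial : ℕ) : ℤ)) ≠ 0 := by positivity
  apply mul_left_cancel₀ hne
  push_cast at hc' ⊢
  linear_combination hc'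

theorem choose_mul_blockProd_mul_blockProd_eq {p : ℕ} (hp : 1 ≤ p) :
    (((4 * p - 1).choose (2 * p - 1) : ℕ) : ℤ) * (blockProd p 0 * blockProd p 1) =
      3 * (blockProd p 2 * blockProd p 3) := by
  have h0 := factorial_mul_blockProd hp 0
  have h1 := factorial_mul_blockProd hp 1
  have h2 := factorial_mul_blockProd hp 2
  have h3 := factorial_mul_blockProd hp 3
  have hc := Nat.choose_mul_factorial_mul_factorial (show 2 * p - 1 ≤ 4 * p - 1 by omega)
  have hp1 := Nat.mul_factorial_pred (show p ≠ 0 by omega)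
  have hp3 := Nat.mul_factorial_pred (show 3 * p ≠ 0 by omega)
  rw [show 4 * p - 1 - (2 * p - 1) = 2 * p by omega] at hc
  rw [show 3 * p + p - 1 = 4 * p - 1 by omega, ← hp3] at h3
  rw [show 2 * p + p - 1 = 3 * p - 1 by omega] at h2
  rw [show 1 * p + p - 1 = 2 * p - 1 by omega, one_mul, ← hp1] at h1
  rw [show 0 * p + p - 1 = p - 1 by omega] at h0
  simp only [zero_mul, Nat.factorial_zero, Nat.cast_one, one_mul, Nat.cast_zero] at h0
  push_cast at h1 h2 h3
  have hc' : (((4 * p - 1).choose (2 * p - 1) : ℕ) : ℤ) * ((2 * p - 1).factorial : ℕ) *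
    (((2 * p).factorial : ℕ) : ℤ) = ((4 * p - 1).factorial : ℕ) := by exact_mod_cast hc
  rw [← h3, ← h2, ← h1, ← h0] at hc'
  have hne : ((p : ℤ) * (((2 * p).factorial : ℕ) : ℤ)) ≠ 0 := by positivity
  apply mul_left_cancel₀ hne
  linear_combination hc'

open Polynomial in
/-- Only the first five terms of the expansion of `blockProd p k` in powers of `k` matter
modulo `p ^ 6`. -/
theorem blockProd_modEq {p : ℕ} (hp : p.Prime) (hp7 : 7 ≤ p) (k : ℤ) :
    blockProd p k ≡
      ∑ i ∈ range 5, (ascPochhammer ℤ p).coeff (i + 1) * (k * p) ^ i [ZMOD (p : ℤ) ^ 6] := by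
  set F := (ascPochhammer ℤ (p - 1)).comp (X + 1) with hF
  have hcoeff : ∀ i, F.coeff i = (ascPochhammer ℤ p).coeff (i + 1) := fun i => by
    conv_rhs => rw [show p = p - 1 + 1 by omega, ascPochhammer_succ_left, coeff_X_mul]
  have hdeg : F.natDegree < p := by
    rw [hF, natDegree_comp, ascPochhammer_natDegree, ← C_1, natDegree_X_add_C]
    omega
  have heval : blockProd p k = F.eval (k * p) := by simp [hF, blockProd, eval_comp]
  rw [heval, eval_eq_sum_range' hdeg, show p = 5 + (p - 5) by omega, sum_range_add,
    ← show p = 5 + (p - 5) by omega]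
  simp only [hcoeff]
  refine (Int.modEq_iff_dvd.2 ?_).symm
  rw [add_sub_cancel_left]
  refine dvd_sum fun i _ => ?_
  rcases Nat.eq_zero_or_pos i with rfl | hi
  · have h := prime_dvd_coeff_ascPochhammer hp (p - 6) (by omega) (by omega)
    rw [show p - (p - 6) = 5 + 0 + 1 by omega] at h
    rw [mul_pow, pow_succ' (p : ℤ) 5]
    exact mul_dvd_mul h (dvd_mul_left _ _)
  · rw [mul_pow]
    exact ((pow_dvd_pow _ (by omega)).mul_left _).mul_left _

theorem blockProd_zero {p : ℕ} (hp : 1 ≤ p) : blockProd p 0 = ((p - 1).factorial : ℕ) := by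
  simpa using factorial_mul_blockProd hp 0

theorem blockProd_combination_modEq {p : ℕ} (hp : p.Prime) (hp7 : 7 ≤ p) :
    4 * blockProd p 3 * blockProd p 1 - 3 * (blockProd p 2 * blockProd p 3) -
        blockProd p 0 * blockProd p 1 ≡
      48 * blockProd p 0 * ((p : ℤ) ^ 4 * (ascPochhammer ℤ p).coeff 5) [ZMOD (p : ℤ) ^ 6] := by
  have hodd : Odd p := hp.odd_of_ne_two (by omega)
  have hdvd : ∀ i, 2 ≤ i → i + 1 ≤ p → (p : ℤ) ∣ (ascPochhammer ℤ p).coeff i := fun i hi hip => by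
    have h := prime_dvd_coeff_ascPochhammer hp (p - i) (by omega) (by omega)
    rwa [show p - (p - i) = i by omega] at h
  obtain ⟨d1, hd1⟩ := hdvd 2 (by omega) (by omega)
  obtain ⟨d2, hd2⟩ := hdvd 3 (by omega) (by omega)
  obtain ⟨d3, hd3⟩ := hdvd 4 (by omega) (by omega)
  obtain ⟨d4, hd4⟩ := hdvd 5 (by omega) (by omega)
  have hE := blockProd_modEq hp hp7
  simp only [sum_range_succ, range_zero, sum_empty, zero_add, Nat.reduceAdd, hd1, hd2, hd3, hd4]
    at hE
  generalize (ascPochhammer ℤ p).coeff 1 = c at hE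
  have hneg1 : blockProd p (-1) = blockProd p 0 := by simpa using blockProd_reflect hodd 0
  have hneg2 : blockProd p (-2) = blockProd p 1 := by simpa using blockProd_reflect hodd 1
  have e0 := (hE 0).dvd
  have e1 := (hE 1).dvd
  have e2 := (hE 2).dvd
  have e3 := (hE 3).dvd
  have en1 := (hE (-1)).dvd
  have en2 := (hE (-2)).dvd
  rw [hneg1] at en1
  rw [hneg2] at en2
  generalize blockProd p 0 = F0 at *
  generalize blockProd p 1 = F1 at *
  generalize blockProd p 2 = F2 at *
  generalize blockProd p 3 = F3 at *
  have hC : (p : ℤ) ^ 6 ∣ p ^ 4 * d3 - 2 * (p ^ 5 * d4) := by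
    have hcop : IsCoprime ((p : ℤ) ^ 6) ((6 : ℕ) : ℤ) :=
      (Nat.isCoprime_iff_coprime.2 (hp.coprime_iff_not_dvd.2
        fun h => by have := Nat.le_of_dvd (by norm_num) h; omega)).pow_left
    refine hcop.dvd_of_dvd_mul_left ?_
    obtain ⟨t0, h0⟩ := e0
    obtain ⟨t1, h1⟩ := e1
    obtain ⟨s1, hs1⟩ := en1
    obtain ⟨s2, hs2⟩ := en2
    refine ⟨3 * (s1 - t0) - (s2 - t1), ?_⟩
    push_cast
    linear_combination 3 * (hs1 - h0) - (hs2 - h1)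
  have hB : (p : ℤ) ^ 6 ∣ p ^ 3 * d2 - (p ^ 2 * d1 + p ^ 5 * d4) := by
    obtain ⟨t0, h0⟩ := e0
    obtain ⟨s1, hs1⟩ := en1
    obtain ⟨z, hz⟩ := hC
    refine ⟨s1 - t0 + z, ?_⟩
    linear_combination hs1 - h0 + hz
  obtain ⟨w, rfl⟩ : (p : ℤ) ∣ d1 := by
    obtain ⟨y, hy⟩ := hB
    have hp0 : (p : ℤ) ^ 2 ≠ 0 := pow_ne_zero _ (by exact_mod_cast hp.ne_zero)
    refine ⟨d2 - p ^ 2 * d4 - p ^ 3 * y, mul_left_cancel₀ hp0 ?_⟩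
    linear_combination -hy
  have hq : (p : ZMod (p ^ 6)) ^ 6 = 0 := by exact_mod_cast ZMod.natCast_self (p ^ 6)
  rw [hd4]
  rw [← Nat.cast_pow] at *
  rw [← ZMod.intCast_zmod_eq_zero_iff_dvd] at e0 e1 e2 e3 hB hC
  rw [← ZMod.intCast_eq_intCast_iff]
  push_cast at *
  have f0 : (F0 : ZMod (p ^ 6)) = c := by linear_combination -e0
  have f1 : (F1 : ZMod (p ^ 6)) = c + 2 * (p ^ 3 * w) + 4 * (p ^ 5 * d4) := by
    linear_combination -e1 + hB + hC
  have f2 : (F2 : ZMod (p ^ 6)) = c + 6 * (p ^ 3 * w) + 36 * (p ^ 5 * d4) := by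
    linear_combination -e2 + 4 * hB + 8 * hC
  have f3 : (F3 : ZMod (p ^ 6)) = c + 12 * (p ^ 3 * w) + 144 * (p ^ 5 * d4) := by
    linear_combination -e3 + 9 * hB + 27 * hC
  rw [f0, f1, f2, f3]
  linear_combination (-120 * (w : ZMod (p ^ 6)) ^ 2 - 2544 * (p : ZMod (p ^ 6)) ^ 2 * w * d4 -
    13248 * (p : ZMod (p ^ 6)) ^ 4 * d4 ^ 2) * hq

theorem pow_six_dvd_choose_sub_choose {p : ℕ} (hp : p.Prime) (hp7 : 7 ≤ p) {d : ℤ}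
    (hd : (ascPochhammer ℤ p).coeff 5 = p * d) :
    (p : ℤ) ^ 6 ∣ ((4 * p).choose p : ℤ) - ((4 * p - 1).choose (2 * p - 1) : ℤ) - 1 +
      48 * p ^ 5 * d := by
  have : Fact p.Prime := ⟨hp⟩
  have hcomb := (blockProd_combination_modEq hp hp7).symm.dvd
  have hc1 := choose_mul_blockProd_eq hp.one_le
  have hc2 := choose_mul_blockProd_mul_blockProd_eq hp.one_le
  have h0 : (p : ℤ) ∣ blockProd p 0 + 1 := by
    rw [blockProd_zero hp.one_le, ← ZMod.intCast_zmod_eq_zero_iff_dvd]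
    push_cast
    rw [ZMod.wilsons_lemma]
    ring
  have h1 : (p : ℤ) ∣ blockProd p 1 - blockProd p 0 := by
    have h := (Polynomial.sub_dvd_eval_sub (1 * (p : ℤ) + 1) (0 * p + 1)
      (ascPochhammer ℤ (p - 1)))
    exact (Dvd.intro 1 (by ring)).trans h
  set N : ℤ := ((4 * p).choose p : ℤ) - ((4 * p - 1).choose (2 * p - 1) : ℤ) - 1 with hN
  generalize blockProd p 0 = F0 at *
  generalize blockProd p 1 = F1 at *
  generalize blockProd p 2 = F2 at *
  generalize blockProd p 3 = F3 at *
  have hcop : IsCoprime ((p : ℤ) ^ 6) F0 := by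
    obtain ⟨t, ht⟩ := h0
    exact IsCoprime.pow_left ⟨t, -1, by linear_combination -ht⟩
  have hF1 : (p : ℤ) ^ 6 ∣ F1 * N - 48 * p ^ 5 * d := by
    refine hcop.dvd_of_dvd_mul_left ?_
    rw [hd] at hcomb
    obtain ⟨t, ht⟩ := hcomb
    refine ⟨t, ?_⟩
    rw [hN]
    linear_combination F1 * hc1 - hc2 + ht
  obtain ⟨t, ht⟩ := dvd_add h0 h1
  obtain ⟨y, hy⟩ := hF1
  have hN5 : (p : ℤ) ^ 5 ∣ N := by
    have hcop1 : IsCoprime ((p : ℤ) ^ 5) F1 := IsCoprime.pow_left ⟨t, -1, by linear_combination -ht⟩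
    refine hcop1.dvd_of_dvd_mul_left ⟨48 * d + p * y, ?_⟩
    linear_combination hy
  obtain ⟨n, hn⟩ := hN5
  refine ⟨t * n - y, ?_⟩
  linear_combination ht * N - hy + p * t * hn

theorem padicNorm_le_inv_of_lt_one {p : ℕ} [Fact p.Prime] {x : ℚ} (hx : padicNorm p x < 1) :
    padicNorm p x ≤ (p : ℚ)⁻¹ := by
  rcases eq_or_ne x 0 with rfl | h
  · simp
  have hp1 : (1 : ℚ) < p := by exact_mod_cast (Fact.out : p.Prime).one_lt
  rw [padicNorm.eq_zpow_of_nonzero h] at hx ⊢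
  rw [zpow_lt_one_iff_right₀ hp1] at hx
  rw [← zpow_neg_one]
  exact zpow_le_zpow_right₀ hp1.le (by omega)

theorem modCong_of_padicNorm_le {p : ℕ} [Fact p.Prime] {c : ℕ} {x y : ℚ}
    (h : padicNorm p (x - y) ≤ (p : ℚ) ^ (-c : ℤ)) : modCong p c x y := by
  rcases eq_or_ne x y with hxy | hxy
  · exact Or.inl hxy
  have hp1 : (1 : ℚ) < p := by exact_mod_cast (Fact.out : p.Prime).one_lt
  rw [padicNorm.eq_zpow_of_nonzero (sub_ne_zero.2 hxy), zpow_le_zpow_iff_right₀ hp1] at h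
  exact Or.inr (by omega)

theorem stmt9 (p : ℕ) (hp : p.Prime) (hp5 : 5 ≤ p) :
    modCong p 6 (((4*p).choose p : ℚ) - ((4*p-1).choose (2*p-1) : ℚ) - 1)
      (-(48/5) * (p:ℚ)^5 * bernoulli (p-5)) := by
  have : Fact p.Prime := ⟨hp⟩
  have hp0 : (p : ℚ) ≠ 0 := by exact_mod_cast hp.ne_zero
  apply modCong_of_padicNorm_le (c := 6)
  rcases eq_or_lt_of_le hp5 with rfl | hp6
  · have h : (((5 ^ 6 : ℕ) : ℕ) : ℤ) ∣ -46875 := by norm_num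
    rw [padicNorm.dvd_iff_norm_le] at h
    convert h using 2
    have h1 : (4 * 5).choose 5 = 15504 := by norm_num [Nat.choose]
    have h2 : (4 * 5 - 1).choose (2 * 5 - 1) = 92378 := by norm_num [Nat.choose]
    rw [h1, h2]
    norm_num
  have hp7 : 7 ≤ p := by
    rcases (show p = 6 ∨ 7 ≤ p by omega) with rfl | h
    · norm_num at hp
    · exact h
  obtain ⟨d, hd⟩ : (p : ℤ) ∣ (ascPochhammer ℤ p).coeff 5 := by
    have h := prime_dvd_coeff_ascPochhammer hp (p - 5) (by omega) (by omega)
    rwa [show p - (p - 5) = 5 by omega] at h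
  have hN := pow_six_dvd_choose_sub_choose hp hp7 hd
  rw [← Nat.cast_pow, padicNorm.dvd_iff_norm_le] at hN
  have hB : padicNorm p (bernoulli (p - 5) - ((5 * d : ℤ) : ℚ)) < 1 := by
    have h := padicNorm_bernoulli_sub_glaisherNumber_lt_one hp (p - 5) (by omega)
    have hg : glaisherNumber p (p - 5) = 5 * d - p * d := by
      have heven : Even (p - 5) := Nat.Odd.sub_odd (hp.odd_of_ne_two (by omega)) (by decide)
      rw [glaisherNumber, if_neg (by omega), show p - (p - 5) = 5 by omega, hd,
        Int.mul_ediv_cancel_left _ (by exact_mod_cast hp.ne_zero), heven.neg_one_pow]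
      push_cast [hp5]
      ring
    have heq : bernoulli (p - 5) - ((5 * d : ℤ) : ℚ) =
        (bernoulli (p - 5) - glaisherNumber p (p - 5)) - ((p * d : ℤ) : ℚ) := by
      rw [hg]; push_cast; ring
    rw [heq]
    exact padicNorm.sub.trans_lt (max_lt h ((padicNorm.int_lt_one_iff _).2 (dvd_mul_right _ _)))
  have hfive : padicNorm p ((5 : ℕ) : ℚ) = 1 := by
    rw [padicNorm.nat_eq_one_iff]
    intro h
    have := Nat.le_of_dvd (by norm_num) h
    omega
  have hsplit : ((4*p).choose p : ℚ) - ((4*p-1).choose (2*p-1) : ℚ) - 1 -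
      -(48/5) * (p:ℚ)^5 * bernoulli (p-5) =
      ((((4 * p).choose p : ℤ) - ((4 * p - 1).choose (2 * p - 1) : ℤ) - 1 + 48 * p ^ 5 * d : ℤ) : ℚ)
        + ((48 * (p : ℤ) ^ 5 : ℤ) : ℚ) * ((bernoulli (p - 5) - ((5 * d : ℤ) : ℚ)) / (5 : ℕ)) := by
    push_cast
    ring
  rw [hsplit]
  refine padicNorm.nonarchimedean.trans (max_le hN ?_)
  have hpow : padicNorm p ((48 * (p : ℤ) ^ 5 : ℤ) : ℚ) ≤ (p : ℚ) ^ (-(5 : ℕ) : ℤ) := by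
    rw [← padicNorm.dvd_iff_norm_le]
    push_cast
    exact dvd_mul_left _ _
  rw [padicNorm.mul, padicNorm.div, hfive, div_one]
  calc _ ≤ (p : ℚ) ^ (-(5 : ℕ) : ℤ) * (p : ℚ)⁻¹ :=
        mul_le_mul hpow (padicNorm_le_inv_of_lt_one hB) (padicNorm.nonneg _) (by positivity)
    _ = _ := by
        rw [← zpow_neg_one, ← zpow_add₀ hp0]
        norm_num
end

section
/- Let p be an odd prime, and let n > 0 and r be integers with (p−1) ∤ n and p ∤ r. Let b be an integer with 1 ≤ b ≤ v, where v is the p-adic valuation of pn, and set b' = (p^b−1)/(p−1). Then ((−r)^n·F_p(pn,r) + (−1)^{(b−1)n}·∏_{1≤k≤b'·n_*, p∤k} k)/n_*! ≡ n_*·(p·B_{φ(p^b)} − p + 1) − p^b·n_*·H_{n_*} + n·(r^{p−1} − 1) − p·n·Σ_{k=2}^{p−n_*−1} binom(n_*+k, n_*)·B_k/(k·r^k) (mod p^{b+1}). -/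
open Finset

/-- `C_p(n,r) = ∑_{0 ≤ k ≤ n, k ≡ r (mod p)} (-1)^k * binom(n,k)`. -/
def Cp (p n : ℕ) (r : ℤ) : ℚ :=
  ∑ k ∈ range (n+1), if ((k : ℤ) - r) % p = 0 then (-1 : ℚ)^k * (n.choose k) else 0

/-- The Fleck quotient `F_p(n,r) = (-p)^{-⌊(n-1)/(p-1)⌋} C_p(n,r) + [n = 0]`. -/
noncomputable def Fp (p n : ℕ) (r : ℤ) : ℚ :=
  (-(p:ℚ)) ^ (-(Int.fdiv ((n:ℤ) - 1) ((p:ℤ) - 1))) * Cp p n r + (if n = 0 then 1 else 0)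

/-- `n_*`: the unique integer in `{1,…,p-1}` with `n_* ≡ n (mod p-1)`. -/
def nLow (p n : ℕ) : ℕ := ((((n:ℤ) - 1) % ((p:ℤ) - 1)) + 1).toNat

/-- Harmonic number `H_r = ∑_{k=1}^r 1/k`. -/
def harm (r : ℕ) : ℚ := ∑ k ∈ Finset.Icc 1 r, 1/(k:ℚ)

section products

theorem exists_prod_add_mul_eq {ι R : Type*} [CommRing R] (s : Finset ι) (f g : ι → R) :
    ∃ y : R, ∀ t : R, t * t = 0 → ∏ k ∈ s, (f k + t * g k) = ∏ k ∈ s, f k + t * y := by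
  classical
  induction s using Finset.induction_on with
  | empty => exact ⟨0, by simp⟩
  | insert a s ha ih =>
    obtain ⟨y, hy⟩ := ih
    refine ⟨f a * y + g a * ∏ k ∈ s, f k, fun t ht => ?_⟩
    rw [prod_insert ha, prod_insert ha, hy t ht]
    linear_combination g a * y * ht

theorem prod_range_add_mul_of_sq_eq_zero {R : Type*} [CommRing R] (x y : R) (hy : y * y = 0)
    (m : ℕ) : ∏ i ∈ range (m + 1), (x + i * y) = x ^ (m + 1) + (m + 1).choose 2 * x ^ m * y := by
  induction m with
  | zero => simp
  | succ m ih =>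
    rw [prod_range_succ, ih, Nat.choose_succ_succ' (m + 1) 1]
    push_cast
    rw [Nat.choose_one_right]
    push_cast
    linear_combination ((m + 1).choose 2 * x ^ m * (m + 1) : R) * hy

/-- A product over `p^(c+1)` terms that are affine along the progressions of difference `p^c`
is the `p`-th power of the product over the first `p^c` terms, modulo `p^(c+1)`. -/
theorem dvd_prod_range_pow_succ_sub {R : Type*} [CommRing R] {p c : ℕ} (hp : p.Prime)
    (hodd : Odd p) (hc : 1 ≤ c) (f g : ℕ → R)
    (hf : ∀ k i : ℕ, f (k + p ^ c * i) = f k + i * (p : R) ^ c * g k) :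
    (p : R) ^ (c + 1) ∣ ∏ k ∈ range (p ^ (c + 1)), f k - (∏ k ∈ range (p ^ c), f k) ^ p := by
  rw [← Ideal.mem_span_singleton, ← Ideal.Quotient.eq]
  set I := Ideal.span {(p : R) ^ (c + 1)}
  set π := Ideal.Quotient.mk I
  have hz : (p : R ⧸ I) ^ (c + 1) = 0 := by
    have : π ((p : R) ^ (c + 1)) = 0 :=
      Ideal.Quotient.eq_zero_iff_mem.2 (Ideal.mem_span_singleton_self _)
    simpa using this
  have hsq : (p : R ⧸ I) ^ c * (p : R ⧸ I) ^ c = 0 := by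
    obtain ⟨d, rfl⟩ := Nat.exists_eq_add_of_le' hc
    linear_combination (p : R ⧸ I) ^ d * hz
  obtain ⟨y, hy⟩ := exists_prod_add_mul_eq (range (p ^ c)) (fun k => π (f k)) (fun k => π (g k))
  have key : ∏ k ∈ range (p ^ (c + 1)), π (f k) =
      ∏ i ∈ range p, (∏ k ∈ range (p ^ c), π (f k) + i * ((p : R ⧸ I) ^ c * y)) := by
    have : ∀ m : ℕ, ∏ k ∈ range (p ^ c * m), π (f k) =
        ∏ i ∈ range m, (∏ k ∈ range (p ^ c), π (f k) + i * ((p : R ⧸ I) ^ c * y)) := by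
      intro m
      induction m with
      | zero => simp
      | succ m ih =>
        rw [Nat.mul_succ, prod_range_add, ih, prod_range_succ]
        congr 1
        rw [← mul_assoc, ← hy _ (by linear_combination (m : R ⧸ I) ^ 2 * hsq)]
        refine prod_congr rfl fun k _ => ?_
        rw [add_comm (p ^ c * m) k, hf]
        simp
    rw [pow_succ, this]
  rw [map_prod, map_pow, map_prod, key]
  obtain ⟨m, rfl⟩ := Nat.exists_eq_succ_of_ne_zero hp.ne_zero
  rw [Nat.succ_eq_add_one, prod_range_add_mul_of_sq_eq_zero _ _ (by linear_combination y ^ 2 * hsq)]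
  obtain ⟨d, hd⟩ : (m + 1) ∣ (m + 1).choose 2 :=
    hp.dvd_choose_self (by norm_num) (by
      have := hp.two_le
      rcases this.eq_or_lt with h | h
      · rw [Nat.succ_eq_add_one] at h
        rw [Nat.succ_eq_add_one, ← h] at hodd
        exact absurd hodd (by decide)
      · exact h)
  rw [hd]
  have hz' := hz
  push_cast at hz' ⊢
  linear_combination d * (∏ k ∈ range ((m + 1) ^ c), π (f k)) ^ m * y * hz'

theorem pow_succ_dvd_pow_sub_pow {R : Type*} [CommRing R] {p c : ℕ} (hc : 1 ≤ c) {x y : R}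
    (h : (p : R) ^ c ∣ x - y) : (p : R) ^ (c + 1) ∣ x ^ p - y ^ p := by
  obtain ⟨d, hd⟩ := h
  obtain ⟨e, rfl⟩ := Nat.exists_eq_add_of_le' hc
  obtain ⟨k, hk⟩ := Polynomial.powAddExpansion y ((p : R) ^ (e + 1) * d) p
  have hx : x = y + (p : R) ^ (e + 1) * d := by linear_combination hd
  refine ⟨y ^ (p - 1) * d + k * (p : R) ^ e * d ^ 2, ?_⟩
  rw [hx, hk]
  ring

end products

section wilson

/-- `k` if `p ∤ k`, and `1` otherwise. -/
def unitPart (p k : ℕ) : ℕ := if p ∣ k then 1 else k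

/-- The product of the positive integers up to `m` that are prime to `p`. -/
def unitFactorial (p m : ℕ) : ℕ := ∏ k ∈ range (m + 1), unitPart p k

theorem unitFactorial_eq_prod_filter (p m : ℕ) :
    unitFactorial p m = ∏ k ∈ (Icc 1 m).filter (fun k => ¬ p ∣ k), k := by
  rw [unitFactorial, prod_filter, prod_range_succ', range_eq_Ico,
    prod_Ico_add' (fun k => unitPart p k) 0 m 1]
  simp [unitPart, ite_not]
  rfl

theorem unitFactorial_succ (p m : ℕ) :
    unitFactorial p (m + 1) = unitFactorial p m * unitPart p (m + 1) := prod_range_succ _ _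

theorem unitFactorial_zero (p : ℕ) : unitFactorial p 0 = 1 := by simp [unitFactorial, unitPart]

theorem unitPart_add_mul {p c : ℕ} (hc : 1 ≤ c) (k i : ℕ) :
    (unitPart p (k + p ^ c * i) : ℤ) =
      unitPart p k + i * (p : ℤ) ^ c * (if p ∣ k then 0 else 1) := by
  have h : p ∣ p ^ c * i := (dvd_pow_self p (by omega)).mul_right i
  simp only [unitPart, Nat.dvd_add_left h]
  split_ifs <;> push_cast <;> ring

theorem unitFactorial_pow_eq (p c : ℕ) (hc : 1 ≤ c) :
    unitFactorial p (p ^ c) = ∏ k ∈ range (p ^ c), unitPart p k := by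
  rw [unitFactorial, prod_range_succ, unitPart, if_pos (dvd_pow_self p (by omega)), mul_one]

/-- The theorem of Wilson for odd prime powers. -/
theorem dvd_unitFactorial_pow_add_one {p c : ℕ} (hp : p.Prime) (hodd : Odd p) (hc : 1 ≤ c) :
    (p : ℤ) ^ c ∣ unitFactorial p (p ^ c) + 1 := by
  induction c, hc using Nat.le_induction with
  | base =>
    have := Fact.mk hp
    rw [pow_one, ← ZMod.intCast_zmod_eq_zero_iff_dvd]
    have h : unitFactorial p (p ^ 1) = (p - 1).factorial := by
      rw [unitFactorial_eq_prod_filter, ← Finset.prod_Ico_id_eq_factorial]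
      refine prod_congr ?_ fun _ _ => rfl
      ext k
      simp only [mem_filter, mem_Icc, mem_Ico, pow_one]
      have := hp.two_le
      constructor
      · rintro ⟨⟨h1, h2⟩, h3⟩
        refine ⟨h1, ?_⟩
        rcases h2.eq_or_lt with h | h
        · exact absurd (h ▸ dvd_rfl) h3
        · omega
      · rintro ⟨h1, h2⟩
        exact ⟨⟨h1, by omega⟩, fun h => by have := Nat.le_of_dvd (by omega) h; omega⟩
    rw [h]
    push_cast
    rw [ZMod.wilsons_lemma]
    ring
  | succ c hc ih =>
    have h1 := dvd_prod_range_pow_succ_sub hp hodd hc (fun k => (unitPart p k : ℤ))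
      (fun k => if p ∣ k then 0 else 1) (fun k i => unitPart_add_mul hc k i)
    have h2 := pow_succ_dvd_pow_sub_pow (p := p) hc (x := (unitFactorial p (p ^ c) : ℤ))
      (y := -1) (by simpa using ih)
    rw [hodd.neg_one_pow] at h2
    rw [unitFactorial_pow_eq _ _ hc] at h2
    rw [unitFactorial_pow_eq _ _ (by omega)]
    refine (dvd_add h1 h2).trans (dvd_of_eq ?_)
    push_cast
    ring

theorem unitFactorial_add_pow {p c : ℕ} (hp : p.Prime) (hodd : Odd p) (hc : 1 ≤ c) (m : ℕ) :
    (unitFactorial p (m + p ^ c) : ℤ) ≡ -unitFactorial p m [ZMOD (p : ℤ) ^ c] := by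
  induction m with
  | zero =>
    rw [unitFactorial_zero, zero_add]
    refine (Int.modEq_iff_dvd.2 ?_).symm
    simpa using dvd_unitFactorial_pow_add_one hp hodd hc
  | succ m ih =>
    rw [show m + 1 + p ^ c = m + p ^ c + 1 by ring, unitFactorial_succ, unitFactorial_succ]
    have h := unitPart_add_mul (p := p) hc (m + 1) 1
    rw [show m + 1 + p ^ c * 1 = m + p ^ c + 1 by ring] at h
    push_cast at h ⊢
    rw [← neg_mul]
    refine ih.mul ?_
    rw [h]
    refine (Int.modEq_iff_dvd.2 ?_).symm
    exact ⟨1 * (if p ∣ m + 1 then 0 else 1), by ring⟩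

theorem unitFactorial_add_mul_pow {p c : ℕ} (hp : p.Prime) (hodd : Odd p) (hc : 1 ≤ c)
    (m i : ℕ) : (unitFactorial p (m + i * p ^ c) : ℤ) ≡ (-1) ^ i * unitFactorial p m
      [ZMOD (p : ℤ) ^ c] := by
  induction i with
  | zero => simp [Int.ModEq.refl]
  | succ i ih =>
    rw [show m + (i + 1) * p ^ c = m + i * p ^ c + p ^ c by ring]
    refine (unitFactorial_add_pow hp hodd hc _).trans ?_
    rw [pow_succ, mul_neg_one, neg_mul]
    exact ih.neg

theorem factorial_eq_pow_mul_unitFactorial (p m : ℕ) :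
    m.factorial = p ^ (m / p) * (m / p).factorial * unitFactorial p m := by
  induction m with
  | zero => simp [unitFactorial_zero]
  | succ m ih =>
    rw [Nat.factorial_succ, ih, Nat.succ_div, unitFactorial_succ, unitPart]
    split_ifs with h
    · have h2 : m + 1 = p * (m / p + 1) := by
        rw [← Nat.succ_div_of_dvd h, Nat.mul_div_cancel' h]
      rw [Nat.factorial_succ, pow_succ]
      nth_rewrite 1 [h2]
      ring
    · rw [add_zero]
      ring

end wilson

section stirling

theorem sum_neg_one_pow_choose_mul_pow_succ (s N : ℕ) :
    ∑ k ∈ range (N + 2), (-1 : ℤ) ^ k * (N + 1).choose k * (k : ℤ) ^ (s + 1) =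
      (N + 1) * (∑ k ∈ range (N + 2), (-1 : ℤ) ^ k * (N + 1).choose k * (k : ℤ) ^ s -
        ∑ k ∈ range (N + 1), (-1 : ℤ) ^ k * N.choose k * (k : ℤ) ^ s) := by
  have h : ∑ k ∈ range (N + 1), (-1 : ℤ) ^ k * N.choose k * (k : ℤ) ^ s =
      ∑ k ∈ range (N + 2), (-1 : ℤ) ^ k * N.choose k * (k : ℤ) ^ s := by
    rw [sum_range_succ _ (N + 1)]
    simp
  rw [h, ← sum_sub_distrib, mul_sum]
  refine sum_congr rfl fun k _ => ?_
  cases k with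
  | zero => simp
  | succ k =>
    have h1 : ((N + 1 : ℕ) : ℤ) * N.choose k = (N + 1).choose (k + 1) * (k + 1 : ℕ) := by
      exact_mod_cast Nat.add_one_mul_choose_eq N k
    rw [Nat.choose_succ_succ' N k] at h1 ⊢
    push_cast at h1 ⊢
    linear_combination (-(-1 : ℤ) ^ (k + 1) * (k + 1 : ℤ) ^ s) * h1

theorem sum_neg_one_pow_choose_mul_pow (s N : ℕ) :
    ∑ k ∈ range (N + 1), (-1 : ℤ) ^ k * N.choose k * (k : ℤ) ^ s =
      (-1) ^ N * N.factorial * Nat.stirlingSecond s N := by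
  induction s generalizing N with
  | zero =>
    cases N with
    | zero => simp
    | succ N => simp [Int.alternating_sum_range_choose]
  | succ s ih =>
    cases N with
    | zero => simp
    | succ N =>
      rw [sum_neg_one_pow_choose_mul_pow_succ, ih, ih, Nat.stirlingSecond_succ_succ,
        Nat.factorial_succ]
      push_cast
      ring

open PowerSeries in
theorem mk_stirlingSecond_mul_prod (R : Type*) [CommRing R] (N : ℕ) :
    (PowerSeries.mk fun s => (Nat.stirlingSecond s N : R)) *
      ∏ k ∈ range (N + 1), (1 - (k : R⟦X⟧) * PowerSeries.X) = PowerSeries.X ^ N := by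
  induction N with
  | zero =>
    simp only [zero_add, prod_range_one, Nat.cast_zero, zero_mul, sub_zero, mul_one, pow_zero]
    ext s
    cases s <;> simp [PowerSeries.coeff_one]
  | succ N ih =>
    have h : (PowerSeries.mk fun s => (Nat.stirlingSecond s (N + 1) : R)) *
        (1 - ((N + 1 : ℕ) : R⟦X⟧) * PowerSeries.X) =
        PowerSeries.X * PowerSeries.mk fun s => (Nat.stirlingSecond s N : R) := by
      rw [mul_sub, mul_one, mul_left_comm, mul_comm _ PowerSeries.X,
        ← map_natCast (PowerSeries.C (R := R)), mul_left_comm]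
      ext s
      cases s with
      | zero => simp
      | succ s =>
        rw [map_sub, PowerSeries.coeff_succ_X_mul, PowerSeries.coeff_succ_X_mul,
          PowerSeries.coeff_C_mul]
        simp only [PowerSeries.coeff_mk, Nat.stirlingSecond_succ_succ]
        push_cast
        ring
    rw [prod_range_succ, mul_comm (∏ k ∈ range (N + 1), _), ← mul_assoc, h, mul_assoc, ih,
      pow_succ']

open Polynomial in
theorem prod_one_sub_zmod (p : ℕ) [Fact p.Prime] :
    ∏ k ∈ range p, (1 - (k : (ZMod p)[X]) * X) = 1 - X ^ (p - 1) := by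
  have hp := (Fact.out : p.Prime)
  have hp2 := hp.two_le
  refine eq_of_natDegree_lt_card_of_eval_eq _ _ (f := fun x : ZMod p => x)
    Function.injective_id ?_ ?_
  · intro x
    rw [eval_prod]
    by_cases hx : x = 0
    · simp [hx, show p - 1 ≠ 0 by omega]
    · rw [prod_eq_zero (i := (x⁻¹).val) (mem_range.2 (ZMod.val_lt _))]
      · simp [ZMod.pow_card_sub_one_eq_one hx]
      · rw [eval_sub, eval_one, eval_mul, eval_natCast, ZMod.natCast_zmod_val, eval_X,
          inv_mul_cancel₀ hx, sub_self]
  · rw [ZMod.card]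
    refine max_lt ?_ ?_
    · obtain ⟨m, rfl⟩ : ∃ m, p = m + 1 := ⟨p - 1, by omega⟩
      rw [prod_range_succ']
      simp only [Nat.cast_zero, zero_mul, sub_zero, mul_one]
      refine Nat.lt_succ_of_le ((natDegree_prod_le _ _).trans ?_)
      refine (sum_le_sum (g := fun _ => 1) fun k _ => ?_).trans (by simp)
      rw [← map_natCast (C (R := ZMod (m + 1)))]
      compute_degree
    · have : (1 - X ^ (p - 1) : (ZMod p)[X]).natDegree ≤ p - 1 := by compute_degree
      omega

theorem pow_dvd_prod_one_sub {p c : ℕ} (hp : p.Prime) (hodd : Odd p) (hc : 1 ≤ c) :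
    (p : Polynomial ℤ) ^ c ∣ ∏ k ∈ range (p ^ c), (1 - (k : Polynomial ℤ) * Polynomial.X) -
      (1 - Polynomial.X ^ (p - 1)) ^ p ^ (c - 1) := by
  induction c, hc using Nat.le_induction with
  | base =>
    have := Fact.mk hp
    have h := prod_one_sub_zmod p
    have h2 : (Polynomial.C (p : ℤ)) ∣ ∏ k ∈ range p, (1 - (k : Polynomial ℤ) * Polynomial.X) -
        (1 - Polynomial.X ^ (p - 1)) := by
      rw [Polynomial.C_dvd_iff_dvd_coeff]
      intro i
      rw [← ZMod.intCast_zmod_eq_zero_iff_dvd, ← eq_intCast (Int.castRingHom (ZMod p)),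
        ← Polynomial.coeff_map]
      simp [Polynomial.map_prod, h]
    simpa using h2
  | succ c hc ih =>
    have h1 := dvd_prod_range_pow_succ_sub hp hodd hc
      (fun k => (1 - (k : Polynomial ℤ) * Polynomial.X))
      (fun k => - Polynomial.X) (fun k i => by push_cast; ring)
    have h2 := pow_succ_dvd_pow_sub_pow hc ih
    refine (dvd_add h1 h2).trans (dvd_of_eq ?_)
    rw [← pow_mul, ← pow_succ, show c - 1 + 1 = c + 1 - 1 by omega]
    ring

open PowerSeries in
theorem stirlingSecond_mul_pow_zmod {p c a : ℕ} (hp : p.Prime) (hodd : Odd p) (hc : 1 ≤ c)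
    (ha : 1 ≤ a) (m : ℕ) :
    (Nat.stirlingSecond (a * p ^ c + m) (a * p ^ c) : ZMod (p ^ c)) =
      if (p - 1) ∣ m then ((a * p ^ (c - 1) - 1 + m / (p - 1)).choose (a * p ^ (c - 1) - 1) :
        ZMod (p ^ c)) else 0 := by
  set R := ZMod (p ^ c)
  have hpz : ((p ^ c : ℕ) : R) = 0 := ZMod.natCast_self _
  have hp1 : p - 1 ≠ 0 := by have := hp.two_le; omega
  have hP : ∏ k ∈ range (p ^ c), (1 - (k : R⟦X⟧) * X) = (1 - X ^ (p - 1)) ^ p ^ (c - 1) := by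
    obtain ⟨d, hd⟩ := pow_dvd_prod_one_sub hp hodd hc
    have := congrArg (fun q : Polynomial ℤ =>
      ((q.map (Int.castRingHom R) : Polynomial R) : R⟦X⟧)) hd
    have hz : ((p : Polynomial R) : R⟦X⟧) ^ c = 0 := by
      rw [← Polynomial.coe_pow, ← Nat.cast_pow, ← map_natCast (Polynomial.C (R := R)), hpz]
      simp
    have hnat : ∀ k : ℕ, ((k : Polynomial R) : R⟦X⟧) = k :=
      fun k => map_natCast (Polynomial.coeToPowerSeries.ringHom (R := R)) k
    simp only [Polynomial.map_sub, Polynomial.map_prod, Polynomial.map_mul, Polynomial.map_pow,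
      Polynomial.map_one, Polynomial.map_natCast, Polynomial.map_X, Polynomial.coe_sub,
      Polynomial.coe_mul, Polynomial.coe_pow, hz, zero_mul, Polynomial.coe_one,
      Polynomial.coe_X] at this
    rw [← sub_eq_zero, ← this]
    congr 1
    rw [← Polynomial.coeToPowerSeries.ringHom_apply, map_prod]
    simp [hnat]
  have hN : ∏ k ∈ range (a * p ^ c + 1), (1 - (k : R⟦X⟧) * X) =
      (1 - X ^ (p - 1)) ^ (a * p ^ (c - 1)) := by
    rw [prod_range_succ]
    have h1 : ((a * p ^ c : ℕ) : R⟦X⟧) = 0 := by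
      rw [← map_natCast (PowerSeries.C (R := R)), Nat.cast_mul, hpz, mul_zero, map_zero]
    have h2 : ∀ j, ∏ k ∈ range (j * p ^ c), (1 - (k : R⟦X⟧) * X) =
      (1 - X ^ (p - 1)) ^ (j * p ^ (c - 1)) := by
      intro j
      induction j with
      | zero => simp
      | succ j ih =>
        rw [add_mul, one_mul, prod_range_add, ih, add_mul, one_mul, pow_add, ← hP]
        congr 1
        refine prod_congr rfl fun k _ => ?_
        have h1 : ((j * p ^ c : ℕ) : R⟦X⟧) = 0 := by
          rw [← map_natCast (PowerSeries.C (R := R)), Nat.cast_mul, hpz, mul_zero, map_zero]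
        rw [Nat.cast_add, h1, zero_add]
    rw [h1, zero_mul, sub_zero, mul_one, h2]
  have key := mk_stirlingSecond_mul_prod R (a * p ^ c)
  rw [hN] at key
  set A := a * p ^ (c - 1)
  have hA : 0 < A := Nat.mul_pos (by omega) (pow_pos hp.pos _)
  have hinv : PowerSeries.expand (p - 1) hp1 (invOneSubPow R A).val *
      (1 - X ^ (p - 1)) ^ A = 1 := by
    have h := congrArg (PowerSeries.expand (p - 1) hp1)
      ((invOneSubPow R A).val_inv)
    rw [invOneSubPow_inv_eq_one_sub_pow] at h
    simpa [map_mul] using h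
  have h3 : (PowerSeries.mk fun s => (Nat.stirlingSecond s (a * p ^ c) : R)) =
      X ^ (a * p ^ c) * PowerSeries.expand (p - 1) hp1 (invOneSubPow R A).val := by
    rw [← key, mul_assoc, mul_comm (_ ^ A), hinv, mul_one]
  have h4 := congrArg (coeff (a * p ^ c + m)) h3
  rw [coeff_mk, add_comm, coeff_X_pow_mul, coeff_expand,
    invOneSubPow_val_eq_mk_sub_one_add_choose_of_pos _ _ hA] at h4
  rw [add_comm, h4]
  simp

end stirling

section residueSum

open Polynomial

/-- The sum of the coefficients of a polynomial at the exponents congruent to `r` modulo `p`. -/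
noncomputable def residueSum (R : Type*) [CommRing R] (p : ℕ) (r : ℤ) : R[X] →ₗ[R] R :=
  Polynomial.lsum fun k => if ((k : ℤ) - r) % p = 0 then LinearMap.id else 0

variable {R : Type*} [CommRing R] {p : ℕ} {r : ℤ}

theorem residueSum_monomial (k : ℕ) (c : R) :
    residueSum R p r (monomial k c) = if ((k : ℤ) - r) % p = 0 then c else 0 := by
  rw [residueSum, lsum_apply, sum_monomial_index _ _ (by simp)]
  split_ifs <;> simp

theorem residueSum_X_pow_mul (f : R[X]) : residueSum R p r (X ^ p * f) = residueSum R p r f := by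
  induction f using Polynomial.induction_on' with
  | add f g hf hg => rw [mul_add, map_add, hf, hg, map_add]
  | monomial k c =>
    rw [X_pow_mul_monomial, residueSum_monomial, residueSum_monomial]
    congr 2
    push_cast
    rw [show (k : ℤ) + p - r = k - r + p by ring, Int.add_emod_right]

theorem residueSum_eq_of_dvd {f g : R[X]} (h : (X ^ p - 1) ∣ f - g) :
    residueSum R p r f = residueSum R p r g := by
  obtain ⟨d, hd⟩ := h
  rw [← sub_eq_zero, ← map_sub, hd, sub_mul, map_sub, residueSum_X_pow_mul, one_mul, sub_self]

theorem residueSum_map {S : Type*} [CommRing S] (φ : R →+* S) (f : R[X]) :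
    residueSum S p r (f.map φ) = φ (residueSum R p r f) := by
  induction f using Polynomial.induction_on' with
  | add f g hf hg => simp [hf, hg]
  | monomial k c =>
    rw [map_monomial, residueSum_monomial, residueSum_monomial]
    split_ifs <;> simp

theorem residueSum_X_mul_derivative (f : (ZMod p)[X]) :
    residueSum (ZMod p) p r (X * derivative f) = r * residueSum (ZMod p) p r f := by
  induction f using Polynomial.induction_on' with
  | add f g hf hg => rw [derivative_add, mul_add, map_add, hf, hg, map_add, mul_add]
  | monomial k c =>
    rw [derivative_monomial, X_mul_monomial]
    cases k with
    | zero =>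
      simp only [Nat.cast_zero, mul_zero, map_zero, residueSum_monomial]
      split_ifs with h
      · have : (r : ZMod p) = 0 := by
          rw [ZMod.intCast_zmod_eq_zero_iff_dvd]
          simpa using h
        simp [this]
      · simp
    | succ k =>
      rw [Nat.add_sub_cancel, residueSum_monomial, residueSum_monomial]
      split_ifs with h
      · have h2 : (((k + 1 : ℕ) - r : ℤ) : ZMod p) = 0 := by
          rw [ZMod.intCast_zmod_eq_zero_iff_dvd]
          exact Int.dvd_of_emod_eq_zero h
        rw [Int.cast_sub, Int.cast_natCast, sub_eq_zero] at h2
        rw [h2, mul_comm]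
      · simp

theorem one_sub_X_pow_eq_sum (N : ℕ) : ((1 - X) ^ N : ℤ[X]) =
    ∑ k ∈ range (N + 1), monomial k ((-1) ^ k * N.choose k : ℤ) := by
  rw [sub_eq_neg_add, add_pow]
  refine sum_congr rfl fun k _ => ?_
  rw [← C_mul_X_pow_eq_monomial, neg_pow]
  simp
  ring

theorem Cp_eq_residueSum (p N : ℕ) (r : ℤ) :
    Cp p N r = (residueSum ℤ p r ((1 - X) ^ N) : ℤ) := by
  rw [one_sub_X_pow_eq_sum, map_sum, Cp, Int.cast_sum]
  refine sum_congr rfl fun k _ => ?_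
  rw [residueSum_monomial]
  split_ifs <;> simp

end residueSum

section fleckUnit

open Polynomial

theorem exists_fleckUnit {p : ℕ} (hp : p.Prime) :
    ∃ U : ℤ[X], (1 - X) ^ p = 1 - X ^ p - (p : ℤ[X]) * (1 - X) * U := by
  have := Fact.mk hp
  have h1 : C (p : ℤ) ∣ 1 - X ^ p - (1 - X) ^ p := by
    rw [C_dvd_iff_dvd_coeff]
    intro i
    rw [← ZMod.intCast_zmod_eq_zero_iff_dvd, ← eq_intCast (Int.castRingHom (ZMod p)),
      ← coeff_map]
    have h : ((1 - X) ^ p : (ZMod p)[X]) = 1 - X ^ p := by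
      rw [sub_pow_char, one_pow]
    simp [h]
  obtain ⟨V, hV⟩ := h1
  have h2 : (X - C 1) ∣ V := by
    rw [dvd_iff_isRoot, IsRoot.def]
    have := congrArg (eval 1) hV
    have hp0 : (p : ℤ) ≠ 0 := by exact_mod_cast hp.ne_zero
    simpa [hp.ne_zero] using this
  obtain ⟨W, hW⟩ := h2
  refine ⟨-W, ?_⟩
  rw [hW] at hV
  simp only [map_natCast, C_1] at hV
  linear_combination -hV

variable {p : ℕ} {U : ℤ[X]}

theorem X_pow_sub_one_dvd_one_sub_pow (hp : 1 ≤ p)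
    (hU : (1 - X) ^ p = 1 - X ^ p - (p : ℤ[X]) * (1 - X) * U) {a : ℕ} (ha : 1 ≤ a) (e : ℕ) :
    (X ^ p - 1 : ℤ[X]) ∣
      (1 - X) ^ (a + (p - 1) * e) - (-(p : ℤ[X])) ^ e * ((1 - X) ^ a * U ^ e) := by
  induction e with
  | zero => simp
  | succ e ih =>
    obtain ⟨d, hd⟩ := ih
    obtain ⟨a, rfl⟩ := Nat.exists_eq_add_of_le' ha
    obtain ⟨m, rfl⟩ := Nat.exists_eq_add_of_le' hp
    refine ⟨(1 - X) ^ m * d - (-((m + 1 : ℕ) : ℤ[X])) ^ e * ((1 - X) ^ a * U ^ e), ?_⟩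
    rw [Nat.add_sub_cancel] at hd ⊢
    rw [mul_add, mul_one, ← add_assoc, pow_add]
    push_cast at hU hd ⊢
    linear_combination (1 - X) ^ m * hd + (-(m + 1 : ℤ[X])) ^ e * (1 - X) ^ a * U ^ e * hU

theorem derivative_one_sub_X_mul_fleckUnit (hp : p ≠ 0)
    (hU : (1 - X) ^ p = 1 - X ^ p - (p : ℤ[X]) * (1 - X) * U) :
    derivative ((1 - X) * U) = (1 - X) ^ (p - 1) - X ^ (p - 1) := by
  have h := congrArg derivative hU
  rw [mul_assoc, ← C_eq_natCast, derivative_sub, derivative_C_mul, derivative_pow] at h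
  simp only [map_natCast, derivative_sub, derivative_one, derivative_X, zero_sub,
    derivative_X_pow] at h
  have hp0 : (p : ℤ[X]) ≠ 0 := by exact_mod_cast hp
  refine mul_left_cancel₀ hp0 ?_
  linear_combination h

theorem fleckUnit_eval_one (hp : 2 ≤ p)
    (hU : (1 - X) ^ p = 1 - X ^ p - (p : ℤ[X]) * (1 - X) * U) : U.eval 1 = 1 := by
  have h := congrArg (eval 1) (derivative_one_sub_X_mul_fleckUnit (by omega) hU)
  have hp1 : p - 1 ≠ 0 := by omega
  simpa [derivative_mul, hp1] using h

theorem two_mul_derivative_fleckUnit_eval_one (hp : 3 ≤ p)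
    (hU : (1 - X) ^ p = 1 - X ^ p - (p : ℤ[X]) * (1 - X) * U) :
    2 * (derivative U).eval 1 = p - 1 := by
  have h := congrArg (eval 1) (congrArg derivative
    (derivative_one_sub_X_mul_fleckUnit (by omega) hU))
  have hp1 : p - 1 - 1 ≠ 0 := by omega
  simp [derivative_mul, derivative_pow, hp1] at h
  rw [Nat.cast_sub (by omega)] at h
  push_cast at h
  linarith

theorem exists_fleckUnit_pow_eq (hp : p.Prime)
    (hU : (1 - X) ^ p = 1 - X ^ p - (p : ℤ[X]) * (1 - X) * U) :
    ∃ q : ℤ[X], U ^ p = expand ℤ p U + (p : ℤ[X]) * q ∧ q.eval 1 = 0 ∧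
      derivative q = U ^ (p - 1) * derivative U - expand ℤ p (derivative U) * X ^ (p - 1) := by
  have := Fact.mk hp
  have hp0 : (p : ℤ[X]) ≠ 0 := by exact_mod_cast hp.ne_zero
  have h1 : C (p : ℤ) ∣ U ^ p - expand ℤ p U := by
    rw [C_dvd_iff_dvd_coeff]
    intro i
    rw [← ZMod.intCast_zmod_eq_zero_iff_dvd, ← eq_intCast (Int.castRingHom (ZMod p)),
      ← coeff_map]
    simp [map_expand, ZMod.expand_card]
  obtain ⟨q, hq⟩ := h1
  rw [C_eq_natCast] at hq
  refine ⟨q, by linear_combination hq, ?_, ?_⟩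
  · have h := congrArg (eval 1) hq
    have h1 := fleckUnit_eval_one hp.two_le hU
    simpa [expand_eval, h1, hp.ne_zero] using h
  · refine mul_left_cancel₀ hp0 ?_
    have h := congrArg derivative hq
    rw [← C_eq_natCast, derivative_C_mul, derivative_sub, derivative_pow, derivative_expand] at h
    rw [C_eq_natCast] at h
    linear_combination -h

theorem X_pow_sub_one_dvd_expand_sub (f : ℤ[X]) (p : ℕ) :
    (X ^ p - 1 : ℤ[X]) ∣ expand ℤ p f - C (f.eval 1) := by
  have h : X - C 1 ∣ f - C (f.eval 1) := X_sub_C_dvd_sub_C_eval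
  simpa using map_dvd (expand ℤ p) h

theorem exists_one_add_pow_eq {S : Type*} [CommRing S] (z : S) (n : ℕ) :
    ∃ k, (1 + z) ^ n = 1 + n * z + n.choose 2 * z ^ 2 + k * z ^ 3 := by
  induction n with
  | zero => exact ⟨0, by simp⟩
  | succ n ih =>
    obtain ⟨k, hk⟩ := ih
    refine ⟨k + n.choose 2 + k * z, ?_⟩
    rw [pow_succ, hk, Nat.choose_succ_succ' n 1, Nat.choose_one_right]
    push_cast
    ring

theorem pow_succ_dvd_pow_sub_one_add {S : Type*} [CommRing S] {p : ℕ} (hp : p.Prime)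
    (hodd : Odd p) {u q : S} (h : (p : S) ^ 2 ∣ u ^ p - (1 + p * q)) {b : ℕ} (hb : 1 ≤ b) (d : ℕ) :
    (p : S) ^ (b + 1) ∣ u ^ (p ^ b * d) - (1 + (p : S) ^ b * d * q) := by
  have h3 : 3 ≤ p := by
    have := hp.two_le
    rcases this.eq_or_lt with h | h
    · rw [← h] at hodd; exact absurd hodd (by decide)
    · exact h
  have key : (p : S) ^ (b + 1) ∣ u ^ p ^ b - (1 + (p : S) ^ b * q) := by
    induction b, hb using Nat.le_induction with
    | base => simpa using h
    | succ b hb ih =>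
      have h1 := pow_succ_dvd_pow_sub_pow (by omega) ih
      rw [← pow_mul, ← pow_succ] at h1
      refine (dvd_add h1 ?_).trans (dvd_of_eq
        (sub_add_sub_cancel _ ((1 + (p : S) ^ b * q) ^ p) _))
      obtain ⟨k, hk⟩ := exists_one_add_pow_eq ((p : S) ^ b * q) p
      obtain ⟨m, hm⟩ : p ∣ p.choose 2 := hp.dvd_choose_self (by norm_num) (by omega)
      obtain ⟨c, rfl⟩ := Nat.exists_eq_add_of_le' hb
      rw [hk, hm]
      refine ⟨m * (p : S) ^ c * q ^ 2 + k * (p : S) ^ (2 * c) * q ^ 3, ?_⟩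
      push_cast
      ring
  obtain ⟨f, hf⟩ := key
  obtain ⟨k, hk⟩ := Polynomial.powAddExpansion (1 : S) ((p : S) ^ b * (q + p * f)) d
  obtain ⟨c, rfl⟩ := Nat.exists_eq_add_of_le' hb
  refine ⟨d * f + k * (p : S) ^ c * (q + p * f) ^ 2, ?_⟩
  rw [pow_mul, show u ^ p ^ (c + 1) = 1 + (p : S) ^ (c + 1) * (q + p * f) by
    linear_combination hf, hk]
  ring

theorem residueSum_fleckUnit_pow_add (hp : p.Prime) (hodd : Odd p)
    (hU : (1 - X) ^ p = 1 - X ^ p - (p : ℤ[X]) * (1 - X) * U) {q : ℤ[X]}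
    (hq : U ^ p = expand ℤ p U + (p : ℤ[X]) * q) {b : ℕ} (hb : 1 ≤ b) (a e d : ℕ) (r : ℤ) :
    residueSum ℤ p r ((1 - X) ^ a * U ^ (e + p ^ b * d)) ≡
      residueSum ℤ p r ((1 - X) ^ a * U ^ e) +
        (p : ℤ) ^ b * d * residueSum ℤ p r ((1 - X) ^ a * U ^ e * q) [ZMOD (p : ℤ) ^ (b + 1)] := by
  set I := Ideal.span {(X ^ p - 1 : ℤ[X])}
  set π := Ideal.Quotient.mk I
  have hu : π U ^ p = 1 + p * π q := by
    obtain ⟨g, hg⟩ := X_pow_sub_one_dvd_expand_sub U p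
    rw [fleckUnit_eval_one hp.two_le hU] at hg
    have : π (U ^ p) = π (1 + p * q) := by
      refine Ideal.Quotient.eq.2 (Ideal.mem_span_singleton.2 ⟨g, ?_⟩)
      rw [hq]
      simp only [C_1] at hg
      linear_combination hg
    simpa using this
  obtain ⟨f, hf⟩ := pow_succ_dvd_pow_sub_one_add hp hodd (u := π U) (q := π q)
    ⟨0, by rw [hu]; ring⟩ hb d
  obtain ⟨f, rfl⟩ := Ideal.Quotient.mk_surjective f
  have h1 : residueSum ℤ p r ((1 - X) ^ a * U ^ (e + p ^ b * d)) =
      residueSum ℤ p r ((1 - X) ^ a * U ^ e + ((p : ℤ) ^ b * d) • ((1 - X) ^ a * U ^ e * q)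
        + ((p : ℤ) ^ (b + 1)) • ((1 - X) ^ a * U ^ e * f)) := by
    refine residueSum_eq_of_dvd (Ideal.mem_span_singleton.1 (Ideal.Quotient.eq.1 ?_))
    simp only [zsmul_eq_mul, map_mul, map_add, map_pow, map_sub, map_one, pow_add, Int.cast_mul,
      Int.cast_pow, Int.cast_natCast, map_natCast] at hf ⊢
    linear_combination (1 - π X) ^ a * π U ^ e * hf
  rw [h1, map_add, map_add, map_smul, map_smul]
  refine (Int.modEq_iff_dvd.2 ⟨residueSum ℤ p r ((1 - X) ^ a * U ^ e * f), ?_⟩).symm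
  simp only [smul_eq_mul]
  ring

end fleckUnit

section repunit

/-- `a * (1 + p + ⋯ + p^(i-1))`. -/
def repdigit (p a i : ℕ) : ℕ := a * ∑ l ∈ range i, p ^ l

theorem repdigit_succ (p a i : ℕ) : repdigit p a (i + 1) = repdigit p a i + a * p ^ i := by
  rw [repdigit, repdigit, sum_range_succ, mul_add]

theorem repdigit_succ' (p a i : ℕ) : repdigit p a (i + 1) = p * repdigit p a i + a := by
  rw [repdigit, repdigit, sum_range_succ', mul_add]
  simp only [pow_succ', ← mul_sum, pow_zero, mul_one]
  ring

theorem repdigit_add (p a i j : ℕ) :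
    repdigit p a (i + j) = repdigit p a i + repdigit p a j * p ^ i := by
  induction j with
  | zero => simp [repdigit]
  | succ j ih => rw [← add_assoc, repdigit_succ, ih, repdigit_succ, pow_add]; ring

theorem sub_one_mul_repdigit_add {p : ℕ} (hp : 1 ≤ p) (a i : ℕ) :
    (p - 1) * repdigit p a i + a = a * p ^ i := by
  obtain ⟨m, rfl⟩ := Nat.exists_eq_add_of_le' hp
  induction i with
  | zero => simp [repdigit]
  | succ i ih =>
    rw [repdigit_succ, pow_succ, mul_add]
    simp only [Nat.add_sub_cancel] at ih ⊢
    linear_combination ih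

theorem le_repdigit {p a : ℕ} (hp : 1 ≤ p) (ha : 1 ≤ a) (i : ℕ) : i ≤ repdigit p a i := by
  rw [repdigit]
  calc i = ∑ l ∈ range i, 1 := by simp
    _ ≤ ∑ l ∈ range i, p ^ l := sum_le_sum fun l _ => Nat.one_le_pow _ _ hp
    _ ≤ _ := Nat.le_mul_of_pos_left _ ha

theorem neg_one_pow_repdigit {R : Type*} [CommRing R] {p : ℕ} (hodd : Odd p) (a i : ℕ) :
    (-1 : R) ^ repdigit p a i = (-1) ^ (a * i) := by
  induction i with
  | zero => simp [repdigit]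
  | succ i ih =>
    rw [repdigit_succ, pow_add, ih, mul_comm a (p ^ i), pow_mul (-1) (p ^ i),
      (hodd.pow).neg_one_pow, mul_add, pow_add, mul_one]

theorem unitFactorial_ratio_repdigit (p a D i : ℕ) (ha : a < p) :
    (p ^ i * repdigit p a (D + 1)).factorial *
        ∏ l ∈ range (i + 1), unitFactorial p (p ^ (l + 1) * repdigit p a D) =
      p ^ repdigit p a i * (p ^ (i + 1) * repdigit p a D).factorial *
        ∏ l ∈ range (i + 1), unitFactorial p (p ^ l * repdigit p a (D + 1)) := by
  have hp : 0 < p := by omega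
  induction i with
  | zero =>
    have h : repdigit p a (D + 1) / p = repdigit p a D := by
      rw [repdigit_succ', Nat.mul_add_div hp, Nat.div_eq_of_lt ha, add_zero]
    rw [pow_zero, one_mul, factorial_eq_pow_mul_unitFactorial p (repdigit p a (D + 1)), h,
      zero_add, pow_one, factorial_eq_pow_mul_unitFactorial p (p * repdigit p a D),
      Nat.mul_div_cancel_left _ hp]
    simp [repdigit]
    ring
  | succ i ih =>
    rw [prod_range_succ, prod_range_succ _ (i + 1),
      factorial_eq_pow_mul_unitFactorial p (p ^ (i + 1) * repdigit p a (D + 1)),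
      factorial_eq_pow_mul_unitFactorial p (p ^ (i + 1 + 1) * repdigit p a D),
      pow_succ' p i, pow_succ' p (i + 1), mul_assoc p, mul_assoc p,
      Nat.mul_div_cancel_left _ hp, Nat.mul_div_cancel_left _ hp, repdigit_succ p a i,
      pow_add p (repdigit p a i),
      show p ^ (p ^ i * repdigit p a (D + 1)) =
        p ^ (p ^ (i + 1) * repdigit p a D) * p ^ (a * p ^ i) by
          rw [← pow_add, repdigit_succ']; ring_nf]
    linear_combination p ^ (p ^ (i + 1) * repdigit p a D) * p ^ (a * p ^ i) *
      unitFactorial p (p * (p ^ i * repdigit p a (D + 1))) *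
      unitFactorial p (p * (p ^ (i + 1) * repdigit p a D)) * ih

theorem coprime_unitFactorial {p : ℕ} (hp : p.Prime) (m : ℕ) : p.Coprime (unitFactorial p m) := by
  rw [unitFactorial]
  refine Nat.Coprime.prod_right fun k _ => ?_
  rw [unitPart]
  split_ifs with h
  · exact Nat.coprime_one_right p
  · exact (Nat.Prime.coprime_iff_not_dvd hp).2 h

theorem unitFactorial_add_mul_pow_zmod {p c : ℕ} (hp : p.Prime) (hodd : Odd p) (hc : 1 ≤ c)
    (m i : ℕ) : (unitFactorial p (m + i * p ^ c) : ZMod (p ^ c)) =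
      (-1) ^ i * unitFactorial p m := by
  have h := unitFactorial_add_mul_pow hp hodd hc m i
  rw [← Nat.cast_pow, ← ZMod.intCast_eq_intCast_iff] at h
  push_cast at h
  exact h

theorem unitFactorial_ratio_zmod {p c a D : ℕ} (hp : p.Prime) (hodd : Odd p) (hc : 1 ≤ c)
    (ha : a < p) (hD : c ≤ D) {K : ℕ}
    (hK : (a * p ^ c).factorial = p ^ repdigit p a c * K) :
    (K * (p ^ (c - 1) * repdigit p a (D + 1)).choose (a * p ^ (c - 1)) : ZMod (p ^ c)) =
      (-1) ^ a * unitFactorial p (repdigit p a c) := by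
  obtain ⟨i, rfl⟩ := Nat.exists_eq_add_of_le' hc
  rw [Nat.add_sub_cancel]
  set P := ∏ l ∈ range (i + 1), unitFactorial p (p ^ (l + 1) * repdigit p a D) with hP
  set P' := ∏ l ∈ range (i + 1), unitFactorial p (p ^ l * repdigit p a (D + 1)) with hP'
  have e1 := unitFactorial_ratio_repdigit p a D i ha
  rw [← hP, ← hP'] at e1
  have hsum : p ^ i * repdigit p a (D + 1) = p ^ (i + 1) * repdigit p a D + a * p ^ i := by
    rw [repdigit_succ', pow_succ]; ring
  have e2 := Nat.add_choose_mul_factorial_mul_factorial (p ^ (i + 1) * repdigit p a D) (a * p ^ i)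
  rw [← hsum] at e2
  set b := (p ^ i * repdigit p a (D + 1)).choose (a * p ^ i)
  have e4 := factorial_eq_pow_mul_unitFactorial p (a * p ^ (i + 1))
  rw [show a * p ^ (i + 1) / p = a * p ^ i by
    rw [pow_succ, ← mul_assoc, Nat.mul_div_cancel _ hp.pos], hK] at e4
  have e5 : K * b * P = unitFactorial p (a * p ^ (i + 1)) * P' := by
    have hpos : 0 < p ^ repdigit p a (i + 1) * (a * p ^ i).factorial *
      (p ^ (i + 1) * repdigit p a D).factorial := by
      have := hp.pos
      positivity
    refine Nat.eq_of_mul_eq_mul_left hpos ?_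
    rw [repdigit_succ, pow_add] at e4 ⊢
    rw [← e2] at e1
    calc _ = (p ^ repdigit p a i * p ^ (a * p ^ i) * K) *
            (b * (p ^ (i + 1) * repdigit p a D).factorial * (a * p ^ i).factorial * P) := by ring
      _ = _ := by rw [e1, e4]; ring
  have hZ := unitFactorial_add_mul_pow_zmod hp hodd (c := i + 1) (by omega)
  set R := ZMod (p ^ (i + 1))
  have f1 : (unitFactorial p (a * p ^ (i + 1)) : R) = (-1) ^ a := by
    simpa [unitFactorial_zero] using hZ 0 a
  obtain ⟨k, rfl⟩ := Nat.exists_eq_add_of_le hD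
  set D := i + 1 + k
  have f2 : (P' : R) = (-1) ^ (a * (i + 1)) * ∏ l ∈ range (i + 1),
      (unitFactorial p (p ^ l * repdigit p a D) : R) := by
    have hcard : ((-1 : R) ^ a) ^ (i + 1) = ∏ l ∈ range (i + 1), (-1 : R) ^ a := by simp
    rw [hP', Nat.cast_prod, pow_mul, hcard, ← prod_mul_distrib]
    refine prod_congr rfl fun l _ => ?_
    have : p ^ l * repdigit p a (D + 1) = p ^ l * repdigit p a D +
        p ^ (l + k) * a * p ^ (i + 1) := by
      rw [repdigit_succ, show p ^ D = p ^ (i + 1) * p ^ k from pow_add _ _ _, pow_add]; ring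
    rw [this, hZ, pow_mul, (hodd.pow).neg_one_pow]
  have f3 : (∏ l ∈ range (i + 1), (unitFactorial p (p ^ l * repdigit p a D) : R)) *
      unitFactorial p (p ^ (i + 1) * repdigit p a D) = P * unitFactorial p (repdigit p a D) := by
    rw [← prod_range_succ (fun l => (unitFactorial p (p ^ l * repdigit p a D) : R)),
      prod_range_succ', hP, Nat.cast_prod, pow_zero, one_mul]
  have f4 : (unitFactorial p (p ^ (i + 1) * repdigit p a D) : R) = (-1) ^ (a * D) := by
    have := hZ 0 (repdigit p a D)
    rw [neg_one_pow_repdigit hodd] at this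
    simpa [unitFactorial_zero, mul_comm] using this
  have f5 : (unitFactorial p (repdigit p a D) : R) =
      (-1) ^ (a * k) * unitFactorial p (repdigit p a (i + 1)) := by
    rw [repdigit_add, hZ, neg_one_pow_repdigit hodd]
  rw [f4, f5] at f3
  have hu : IsUnit (P : R) := by
    rw [ZMod.isUnit_iff_coprime]
    refine (Nat.Coprime.pow_left _ ?_).symm
    exact Nat.Coprime.prod_right fun l _ => coprime_unitFactorial hp _
  refine hu.mul_right_cancel ?_
  have e6 := congrArg (Nat.cast : ℕ → R) e5
  rw [Nat.cast_mul, Nat.cast_mul, Nat.cast_mul] at e6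
  rw [e6, f1, f2]
  have hsq : ∀ x : ℕ, ((-1 : R) ^ x) * (-1) ^ x = 1 := fun x => by
    rw [← mul_pow, neg_mul_neg, one_mul, one_pow]
  have hD' : (-1 : R) ^ (a * D) = (-1) ^ (a * (i + 1)) * (-1) ^ (a * k) := by
    rw [← pow_add, ← mul_add]
  rw [hD'] at f3
  linear_combination (-1) ^ a * (-1) ^ (a * k) * f3 - (-1) ^ a * (-1) ^ (a * (i + 1)) *
      (∏ l ∈ range (i + 1), (unitFactorial p (p ^ l * repdigit p a (i + 1 + k)) : R)) *
      hsq (a * k) +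
    (-1) ^ a * P * unitFactorial p (repdigit p a (i + 1)) * hsq (a * k)

end repunit

section fourier

open Polynomial

theorem pow_prime_pow_modEq {p : ℕ} {x y : ℤ} (h : (p : ℤ) ∣ x - y) (B : ℕ) :
    x ^ p ^ B ≡ y ^ p ^ B [ZMOD (p : ℤ) ^ (B + 1)] :=
  (Int.modEq_iff_dvd.2 (dvd_sub_pow_of_dvd_sub h B)).symm

theorem pow_sub_one_mul_prime_pow_modEq_one {p : ℕ} (hp : p.Prime) {x : ℤ} (h : ¬ (p : ℤ) ∣ x)
    (B : ℕ) : x ^ ((p - 1) * p ^ B) ≡ 1 [ZMOD (p : ℤ) ^ (B + 1)] := by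
  suffices h : (p : ℤ) ∣ x ^ (p - 1) - 1 by
    simpa [pow_mul] using pow_prime_pow_modEq h B
  have := Fact.mk hp
  rw [← ZMod.intCast_zmod_eq_zero_iff_dvd] at h ⊢
  push_cast
  rw [ZMod.pow_card_sub_one_eq_one h, sub_self]

theorem sum_pow_mul_pow_modEq_ite {p : ℕ} (hp : p.Prime) {r : ℤ} (hr : ¬ (p : ℤ) ∣ r) (B : ℕ)
    (k : ℤ) :
    ∑ i ∈ range (p - 1), k ^ ((i + 1) * p ^ B) * r ^ ((p - 1 - 1 - i) * p ^ B) ≡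
      (if (k - r) % p = 0 then (p - 1 : ℤ) else 0) [ZMOD (p : ℤ) ^ (B + 1)] := by
  have hsum : ∑ i ∈ range (p - 1), k ^ ((i + 1) * p ^ B) * r ^ ((p - 1 - 1 - i) * p ^ B) =
      k ^ p ^ B * ∑ i ∈ range (p - 1), (k ^ p ^ B) ^ i * (r ^ p ^ B) ^ (p - 1 - 1 - i) := by
    rw [mul_sum]
    refine sum_congr rfl fun i _ => ?_
    rw [mul_comm (i + 1), mul_comm _ (p ^ B), pow_mul, pow_mul, pow_succ]
    ring
  have hp1 : 1 ≤ p := hp.one_le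
  have hone := pow_sub_one_mul_prime_pow_modEq_one hp hr B
  rw [mul_comm, pow_mul] at hone
  split_ifs with h
  · have h1 := pow_prime_pow_modEq (Int.dvd_of_emod_eq_zero h) B
    rw [hsum]
    have h2 : k ^ p ^ B * ∑ i ∈ range (p - 1), (k ^ p ^ B) ^ i * (r ^ p ^ B) ^ (p - 1 - 1 - i) ≡
        r ^ p ^ B * ∑ i ∈ range (p - 1), (r ^ p ^ B) ^ i * (r ^ p ^ B) ^ (p - 1 - 1 - i)
        [ZMOD (p : ℤ) ^ (B + 1)] := by
      refine h1.mul (Int.ModEq.sum fun i _ => (h1.pow i).mul_right _)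
    refine h2.trans ?_
    have h3 : r ^ p ^ B * ∑ i ∈ range (p - 1), (r ^ p ^ B) ^ i * (r ^ p ^ B) ^ (p - 1 - 1 - i) =
        (p - 1 : ℤ) * (r ^ p ^ B) ^ (p - 1) := by
      rw [mul_sum]
      rw [sum_congr rfl fun i hi => show
        r ^ p ^ B * ((r ^ p ^ B) ^ i * (r ^ p ^ B) ^ (p - 1 - 1 - i)) = (r ^ p ^ B) ^ (p - 1) by
          rw [← pow_add, ← pow_succ']
          congr 1
          have := mem_range.1 hi
          omega]
      rw [sum_const, card_range, nsmul_eq_mul, Nat.cast_sub hp1, Nat.cast_one]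
    rw [h3]
    simpa using hone.mul_left (p - 1 : ℤ)
  · rw [hsum, Int.modEq_zero_iff_dvd]
    by_cases hk : (p : ℤ) ∣ k
    · refine Dvd.dvd.mul_right ?_ _
      exact (pow_dvd_pow _ (Nat.succ_le_of_lt (Nat.lt_pow_self hp.one_lt))).trans
        (pow_dvd_pow_of_dvd hk _)
    · have hone' := pow_sub_one_mul_prime_pow_modEq_one hp hk B
      rw [mul_comm, pow_mul] at hone'
      have hg := geom_sum₂_mul (k ^ p ^ B) (r ^ p ^ B) (p - 1)
      have hcop : IsCoprime ((p : ℤ) ^ (B + 1)) (k ^ p ^ B - r ^ p ^ B) := by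
        refine IsCoprime.pow_left ?_
        rw [Prime.coprime_iff_not_dvd (Nat.prime_iff_prime_int.1 hp)]
        intro hd
        apply h
        have := Fact.mk hp
        rw [← ZMod.intCast_zmod_eq_zero_iff_dvd] at hd
        push_cast at hd
        rw [ZMod.pow_card_pow, ZMod.pow_card_pow] at hd
        refine Int.emod_eq_zero_of_dvd ?_
        rw [← ZMod.intCast_zmod_eq_zero_iff_dvd]
        push_cast
        exact hd
      refine Dvd.dvd.mul_left (hcop.dvd_of_dvd_mul_right ?_) _
      rw [hg]
      exact (Int.modEq_iff_dvd.1 (hone.trans hone'.symm))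

theorem sub_one_mul_residueSum_modEq {p : ℕ} (hp : p.Prime) {r : ℤ} (hr : ¬ (p : ℤ) ∣ r)
    (B N : ℕ) :
    (p - 1 : ℤ) * residueSum ℤ p r ((1 - X) ^ N) ≡ (-1) ^ N * N.factorial *
      ∑ i ∈ range (p - 1), r ^ ((p - 1 - 1 - i) * p ^ B) *
        Nat.stirlingSecond ((i + 1) * p ^ B) N [ZMOD (p : ℤ) ^ (B + 1)] := by
  have h1 : (-1 : ℤ) ^ N * N.factorial * ∑ i ∈ range (p - 1), r ^ ((p - 1 - 1 - i) * p ^ B) *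
        Nat.stirlingSecond ((i + 1) * p ^ B) N = ∑ k ∈ range (N + 1), (-1 : ℤ) ^ k * N.choose k *
      ∑ i ∈ range (p - 1), (k : ℤ) ^ ((i + 1) * p ^ B) * r ^ ((p - 1 - 1 - i) * p ^ B) := by
    simp only [mul_sum]
    rw [sum_comm]
    refine sum_congr rfl fun i _ => ?_
    rw [mul_left_comm, ← sum_neg_one_pow_choose_mul_pow, mul_sum]
    exact sum_congr rfl fun k _ => by ring
  rw [h1, one_sub_X_pow_eq_sum, map_sum, mul_sum]
  refine Int.ModEq.sum fun k _ => ?_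
  have h2 := (sum_pow_mul_pow_modEq_ite hp hr B k).symm.mul_left ((-1 : ℤ) ^ k * N.choose k)
  convert h2 using 1
  rw [residueSum_monomial]
  split_ifs <;> ring

theorem residueSum_one_sub_X_pow {p a : ℕ} {U : ℤ[X]} (hp : 1 ≤ p)
    (hU : (1 - X) ^ p = 1 - X ^ p - (p : ℤ[X]) * (1 - X) * U) (ha : 1 ≤ a) (e : ℕ) (r : ℤ) :
    residueSum ℤ p r ((1 - X) ^ (a + (p - 1) * e)) =
      (-(p : ℤ)) ^ e * residueSum ℤ p r ((1 - X) ^ a * U ^ e) := by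
  have h : ((-(p : ℤ[X])) ^ e * ((1 - X) ^ a * U ^ e)) =
      ((-(p : ℤ)) ^ e) • ((1 - X) ^ a * U ^ e) := by
    rw [smul_eq_C_mul]
    simp
  rw [residueSum_eq_of_dvd (X_pow_sub_one_dvd_one_sub_pow hp hU ha e), h,
    LinearMap.map_smul, smul_eq_mul]

theorem pow_repdigit_dvd_factorial {p : ℕ} (hp : 0 < p) (a c : ℕ) :
    p ^ repdigit p a c ∣ (a * p ^ c).factorial := by
  induction c with
  | zero => simp [repdigit]
  | succ c ih =>
    rw [factorial_eq_pow_mul_unitFactorial p (a * p ^ (c + 1)), pow_succ, ← mul_assoc,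
      Nat.mul_div_cancel _ hp, repdigit_succ, pow_add, mul_comm (p ^ repdigit p a c)]
    exact (mul_dvd_mul_left _ ih).mul_right _

theorem sub_one_mul_choose_eq {p a c D : ℕ} (hp : 1 ≤ p) (ha : 1 ≤ a) (hc : 1 ≤ c) :
    (p - 1) * (p ^ (c - 1) * repdigit p a (D + 1)).choose (a * p ^ (c - 1)) =
      (p ^ (D + 1) - 1) * (a * p ^ (c - 1) - 1 + p ^ c * repdigit p a D).choose
        (a * p ^ (c - 1) - 1) := by
  obtain ⟨i, rfl⟩ := Nat.exists_eq_add_of_le' hc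
  rw [Nat.add_sub_cancel]
  have hA : 0 < a * p ^ i := Nat.mul_pos ha (pow_pos hp _)
  obtain ⟨A, hA'⟩ := Nat.exists_eq_add_of_lt hA
  rw [zero_add] at hA'
  have hsum : p ^ i * repdigit p a (D + 1) = A + p ^ (i + 1) * repdigit p a D + 1 := by
    rw [repdigit_succ', mul_add, mul_comm (p ^ i) a, hA', pow_succ]; ring
  have h := Nat.add_one_mul_choose_eq (A + p ^ (i + 1) * repdigit p a D) A
  rw [← hsum, ← hA'] at h
  rw [hA', Nat.add_sub_cancel, ← hA']
  have h2 := sub_one_mul_repdigit_add hp a (D + 1)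
  have h3 : (p - 1) * repdigit p a (D + 1) = a * (p ^ (D + 1) - 1) := by
    rw [Nat.mul_sub, ← h2]; omega
  refine Nat.eq_of_mul_eq_mul_left hA ?_
  calc _ = (p - 1) * ((p ^ i * repdigit p a (D + 1)).choose (a * p ^ i) * (a * p ^ i)) := by ring
    _ = p ^ i * ((p - 1) * repdigit p a (D + 1)) *
        (A + p ^ (i + 1) * repdigit p a D).choose A := by rw [← h]; ring
    _ = _ := by rw [h3]; ring

/-- The Fleck quotient at `a * p ^ c` in terms of a product of integers prime to `p`. -/
theorem residueSum_fleckUnit_repdigit {p a c : ℕ} {U : ℤ[X]} (hp : p.Prime) (hodd : Odd p)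
    (hU : (1 - X) ^ p = 1 - X ^ p - (p : ℤ[X]) * (1 - X) * U) (ha : 1 ≤ a) (hap : a < p - 1)
    (hc : 1 ≤ c) {r : ℤ} (hr : ¬ (p : ℤ) ∣ r) {D : ℕ} (hD : repdigit p a c ≤ D) :
    residueSum ℤ p r ((1 - X) ^ a * U ^ repdigit p a c) * r ^ (a * p ^ (c + D)) ≡
      -(-1) ^ (a * c) * unitFactorial p (repdigit p a c) [ZMOD (p : ℤ) ^ c] := by
  have hp1 : 1 ≤ p := hp.one_le
  have hcD : c ≤ D := (le_repdigit hp1 ha c).trans hD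
  set M := repdigit p a c with hM
  set B := c + D with hB
  set φ := residueSum ℤ p r ((1 - X) ^ a * U ^ M) with hφ
  have hN : a + (p - 1) * M = a * p ^ c := by
    rw [← sub_one_mul_repdigit_add hp1 a c]; ring
  obtain ⟨K, hK⟩ := pow_repdigit_dvd_factorial hp.pos a c
  rw [← hM] at hK
  have e1 := sub_one_mul_residueSum_modEq hp hr B (a * p ^ c)
  set T := ∑ i ∈ range (p - 1), r ^ ((p - 1 - 1 - i) * p ^ B) *
        (Nat.stirlingSecond ((i + 1) * p ^ B) (a * p ^ c) : ℤ) with hS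
  rw [← hN, residueSum_one_sub_X_pow hp1 hU ha, hN, hK, ← hφ] at e1
  have e2 : (p : ℤ) ^ c ∣ (-1) ^ (a * p ^ c) * K * T - (p - 1) * (-1) ^ M * φ := by
    have h1 := Int.modEq_iff_dvd.1 e1
    have h2 : (p : ℤ) ^ (M + c) ∣ (p : ℤ) ^ (B + 1) := pow_dvd_pow _ (by omega)
    have h3 := h2.trans h1
    have hpM : (p : ℤ) ^ M ≠ 0 := pow_ne_zero _ (by exact_mod_cast hp.ne_zero)
    rw [pow_add] at h3
    refine (mul_dvd_mul_iff_left hpM).1 (h3.trans (dvd_of_eq ?_))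
    rw [neg_pow (p : ℤ)]
    push_cast
    ring
  have hS' : (T : ZMod (p ^ c)) = r ^ ((p - 1 - a) * p ^ B) *
      (a * p ^ (c - 1) - 1 + p ^ c * repdigit p a D).choose (a * p ^ (c - 1) - 1) := by
    rw [hS, Int.cast_sum, sum_eq_single_of_mem (a - 1) (mem_range.2 (by omega))]
    · have h1 : (a - 1 + 1) * p ^ B = a * p ^ c + (p - 1) * (p ^ c * repdigit p a D) := by
        rw [Nat.sub_add_cancel ha, hB, pow_add, mul_left_comm (p - 1),
          mul_left_comm a, ← sub_one_mul_repdigit_add hp1 a D]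
        ring
      rw [h1, show p - 1 - 1 - (a - 1) = p - 1 - a by omega]
      push_cast
      rw [stirlingSecond_mul_pow_zmod hp hodd hc ha, if_pos (dvd_mul_right _ _),
        Nat.mul_div_cancel_left _ (by omega)]
    · intro i hi hia
      rw [mem_range] at hi
      have hle : a * p ^ c ≤ (i + 1) * p ^ B := by
        have h1 : p ≤ p ^ D := Nat.le_self_pow (by omega) p
        rw [hB, pow_add]
        calc a * p ^ c ≤ p ^ D * p ^ c := Nat.mul_le_mul_right _ (by omega)
          _ = 1 * (p ^ c * p ^ D) := by ring
          _ ≤ _ := Nat.mul_le_mul_right _ (by omega)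
      obtain ⟨m, hm⟩ := Nat.exists_eq_add_of_le hle
      rw [hm]
      push_cast
      rw [stirlingSecond_mul_pow_zmod hp hodd hc ha, if_neg, mul_zero]
      intro hdvd
      apply hia
      have hone : ∀ j, p ^ j ≡ 1 [MOD (p - 1)] := fun j => by
        have : p ≡ 1 [MOD (p - 1)] := (Nat.modEq_iff_dvd' hp1).2 dvd_rfl |>.symm
        simpa using this.pow j
      have h1 : i + 1 ≡ a [MOD (p - 1)] := by
        have h2 : (i + 1) * 1 ≡ a * 1 + 0 [MOD (p - 1)] := by
          refine ((hone B).mul_left (i + 1)).symm.trans ?_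
          rw [hm]
          exact ((hone c).mul_left a).add ((Nat.modEq_zero_iff_dvd).2 hdvd)
        simpa using h2
      have h3 : i ≡ a - 1 [MOD (p - 1)] :=
        Nat.ModEq.add_right_cancel' 1 (by rwa [Nat.sub_add_cancel ha])
      exact Nat.ModEq.eq_of_lt_of_lt h3 hi (by omega)
  rw [← Nat.cast_pow, ← ZMod.intCast_zmod_eq_zero_iff_dvd] at e2
  rw [← Nat.cast_pow, ← ZMod.intCast_eq_intCast_iff]
  have e3 := unitFactorial_ratio_zmod hp hodd hc (by omega) hcD hK
  have e4 := congrArg (Nat.cast : ℕ → ZMod (p ^ c)) (sub_one_mul_choose_eq (D := D) hp1 ha hc)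
  have e5 := pow_sub_one_mul_prime_pow_modEq_one hp hr B
  have hz : ((p ^ c : ℕ) : ZMod (p ^ c)) = 0 := ZMod.natCast_self _
  have e6 : ((r : ZMod (p ^ c)) ^ ((p - 1 - a) * p ^ B)) *
      (r : ZMod (p ^ c)) ^ (a * p ^ B) = 1 := by
    have h1 := e5.of_dvd (pow_dvd_pow (p : ℤ) (show c ≤ B + 1 by omega))
    rw [← Nat.cast_pow, ← ZMod.intCast_eq_intCast_iff] at h1
    push_cast at h1
    rw [← pow_add, ← add_mul, Nat.sub_add_cancel hap.le, h1]
  have e7 : ((p - 1 : ℕ) : ZMod (p ^ c)) = p - 1 := by rw [Nat.cast_sub hp1, Nat.cast_one]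
  have e8 : ((p ^ (D + 1) - 1 : ℕ) : ZMod (p ^ c)) = -1 := by
    rw [Nat.cast_sub (Nat.one_le_pow _ _ hp1), show D + 1 = c + (D + 1 - c) by omega, pow_add,
      Nat.cast_mul, hz]
    simp
  have hu : IsUnit ((p - 1 : ℕ) : ZMod (p ^ c)) := by
    rw [ZMod.isUnit_iff_coprime]
    refine Nat.Coprime.pow_right _ ?_
    exact ((Nat.coprime_self_sub_left hp1).2 (Nat.coprime_one_left p))
  have hsq : ∀ x : ℕ, ((-1 : ZMod (p ^ c)) ^ x) * (-1) ^ x = 1 := fun x => by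
    rw [← mul_pow, neg_mul_neg, one_mul, one_pow]
  rw [Nat.cast_mul, Nat.cast_mul, e8] at e4
  refine hu.mul_left_cancel ?_
  rw [mul_comm a (p ^ c), pow_mul, hodd.pow.neg_one_pow] at e2
  push_cast at e2 ⊢
  rw [hS'] at e2
  rw [← neg_one_pow_repdigit hodd, ← hM]
  rw [e7] at e4 ⊢
  set ρ := (r : ZMod (p ^ c)) ^ (a * p ^ B)
  set σ := (-1 : ZMod (p ^ c)) ^ M
  set ε := (-1 : ZMod (p ^ c)) ^ a
  linear_combination -σ * ρ * e2 - (p - 1 : ZMod (p ^ c)) * φ * ρ * hsq M -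
    (p - 1 : ZMod (p ^ c)) * σ * ε * e3 - σ * ε * K *
      ((a * p ^ (c - 1) - 1 + p ^ c * repdigit p a D).choose (a * p ^ (c - 1) - 1)
        : ZMod (p ^ c)) * (-e6) + σ * ε * K * e4 -
    (p - 1 : ZMod (p ^ c)) * σ * (unitFactorial p M : ZMod (p ^ c)) * hsq a

end fourier

section modp

open Polynomial

variable {p : ℕ} [Fact p.Prime]

/-- The group ring of the cyclic group of order `p` over the field with `p` elements. -/
abbrev CyclicRing (p : ℕ) := (ZMod p)[X] ⧸ Ideal.span {(X ^ p - 1 : (ZMod p)[X])}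

/-- The reduction modulo `X ^ p - 1`. -/
noncomputable abbrev toCyclic (p : ℕ) : (ZMod p)[X] →+* CyclicRing p := Ideal.Quotient.mk _

theorem residueSum_eq_of_toCyclic_eq {f g : (ZMod p)[X]} (h : toCyclic p f = toCyclic p g) (r : ℤ) :
    residueSum (ZMod p) p r f = residueSum (ZMod p) p r g :=
  residueSum_eq_of_dvd (Ideal.mem_span_singleton.1 (Ideal.Quotient.eq.1 h))

theorem toCyclic_X_pow : toCyclic p X ^ p = 1 := by
  rw [← map_pow, ← map_one (toCyclic p)]
  exact Ideal.Quotient.eq.2 (Ideal.mem_span_singleton_self _)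

theorem toCyclic_one_sub_X_pow : (1 - toCyclic p X) ^ p = 0 := by
  rw [← map_one (toCyclic p), ← map_sub, ← map_pow, sub_pow_char, map_sub, one_pow, map_one,
    map_pow, toCyclic_X_pow, sub_self]

theorem toCyclic_expand (f : (ZMod p)[X]) :
    toCyclic p (expand (ZMod p) p f) = toCyclic p (C (f.eval 1)) := by
  refine Ideal.Quotient.eq.2 (Ideal.mem_span_singleton.2 ?_)
  have h : X - C 1 ∣ f - C (f.eval 1) := X_sub_C_dvd_sub_C_eval
  simpa using map_dvd (expand (ZMod p) p) h

theorem toCyclic_one_sub_X_pow_mul (f : (ZMod p)[X]) :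
    (1 - toCyclic p X) ^ (p - 1) * toCyclic p f =
      (1 - toCyclic p X) ^ (p - 1) * toCyclic p (C (f.eval 1)) := by
  have hp : p ≠ 0 := (Fact.out : p.Prime).ne_zero
  obtain ⟨g, hg⟩ : X - C 1 ∣ f - C (f.eval 1) := X_sub_C_dvd_sub_C_eval
  have h := congrArg (toCyclic p) hg
  rw [map_sub, map_mul, map_sub, C_1, map_one] at h
  have h0 := toCyclic_one_sub_X_pow (p := p)
  rw [← pow_sub_one_mul hp] at h0
  linear_combination (1 - toCyclic p X) ^ (p - 1) * h - toCyclic p g * h0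

theorem one_sub_X_pow_sub_one_eq_sum :
    ((1 - X) ^ (p - 1) : (ZMod p)[X]) = ∑ k ∈ range p, X ^ k := by
  have hp : p ≠ 0 := (Fact.out : p.Prime).ne_zero
  have hne : (X - 1 : (ZMod p)[X]) ≠ 0 := by
    rw [← C_1]; exact X_sub_C_ne_zero 1
  refine mul_right_cancel₀ hne ?_
  rw [geom_sum_mul]
  have h : ((1 - X) ^ p : (ZMod p)[X]) = 1 - X ^ p := by rw [sub_pow_char, one_pow]
  rw [← pow_sub_one_mul hp] at h
  linear_combination -h

theorem sum_ite_emod_eq {M : Type*} [AddCommMonoid M] (n : ℤ) (f : ℕ → M) :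
    ∑ k ∈ range p, (if (n - (k : ℤ)) % p = 0 then f k else 0) = f (n % p).toNat := by
  have hp0 : 0 < (p : ℤ) := by exact_mod_cast (Fact.out : p.Prime).pos
  have h1 := Int.emod_nonneg n hp0.ne'
  have h2 := Int.emod_lt_of_pos n hp0
  rw [sum_eq_single_of_mem (n % p).toNat (mem_range.2 (by omega))]
  · rw [if_pos]
    rw [Int.toNat_of_nonneg h1]
    simp
  · intro k hk hne
    rw [if_neg]
    intro h
    apply hne
    have h3 : n % p = (k : ℤ) % p := Int.emod_eq_emod_iff_emod_sub_eq_zero.2 h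
    have h4 := mem_range.1 hk
    rw [Int.emod_eq_of_lt (a := (k : ℤ)) (by omega) (by omega)] at h3
    omega

theorem residueSum_one_sub_X_pow_sub_one (r : ℤ) :
    residueSum (ZMod p) p r ((1 - X) ^ (p - 1)) = 1 := by
  rw [one_sub_X_pow_sub_one_eq_sum, map_sum]
  have h := sum_ite_emod_eq (p := p) r (fun _ => (1 : ZMod p))
  rw [← h]
  refine sum_congr rfl fun k _ => ?_
  rw [← monomial_one_right_eq_X_pow, residueSum_monomial]
  congr 1
  rw [← Int.dvd_iff_emod_eq_zero, ← Int.dvd_iff_emod_eq_zero, dvd_sub_comm]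

theorem toCyclic_eq_sum (f : (ZMod p)[X]) :
    toCyclic p f = ∑ k ∈ range p, toCyclic p (C (residueSum (ZMod p) p k f) * X ^ k) := by
  induction f using Polynomial.induction_on' with
  | add f g hf hg =>
    rw [map_add, hf, hg, ← sum_add_distrib]
    exact sum_congr rfl fun k _ => by rw [map_add, C_add, add_mul, map_add]
  | monomial n c =>
    have h := sum_ite_emod_eq (p := p) n (fun k => toCyclic p (C c * X ^ k))
    have h2 : ((n : ℤ) % p).toNat = n % p := by omega
    rw [h2] at h
    have h3 : ∑ k ∈ range p, toCyclic p (C (residueSum (ZMod p) p k (monomial n c)) * X ^ k) =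
        toCyclic p (C c * X ^ (n % p)) := by
      rw [← h]
      refine sum_congr rfl fun k _ => ?_
      rw [residueSum_monomial]
      split_ifs <;> simp
    rw [h3, ← C_mul_X_pow_eq_monomial, map_mul, map_mul, map_pow, map_pow]
    nth_rewrite 1 [← Nat.mod_add_div n p]
    rw [pow_add, pow_mul, toCyclic_X_pow, one_pow, mul_one]

theorem toCyclic_eq_C_of_derivative {f : (ZMod p)[X]} (hf : toCyclic p (X * derivative f) = 0) :
    toCyclic p f = toCyclic p (C (f.eval 1)) := by
  have hp := (Fact.out : p.Prime)
  have h0 : ∀ k ∈ range p, k ≠ 0 → toCyclic p (C (residueSum (ZMod p) p k f) * X ^ k) = 0 := by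
    intro k hk hk0
    have h1 := residueSum_X_mul_derivative (p := p) (r := k) f
    rw [residueSum_eq_of_toCyclic_eq (g := 0) (by rw [hf, map_zero]), map_zero] at h1
    have h2 : ((k : ℤ) : ZMod p) ≠ 0 := by
      rw [Int.cast_natCast, Ne, ZMod.natCast_eq_zero_iff]
      intro h
      have := Nat.le_of_dvd (by omega) h
      have := mem_range.1 hk
      omega
    rcases mul_eq_zero.1 h1.symm with h | h
    · exact absurd h h2
    · rw [h]; simp
  have h1 := toCyclic_eq_sum f
  rw [sum_eq_single_of_mem 0 (mem_range.2 hp.pos) h0, pow_zero, mul_one] at h1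
  obtain ⟨g, hg⟩ := Ideal.mem_span_singleton.1 (Ideal.Quotient.eq.1 h1)
  have h2 := congrArg (eval 1) hg
  simp only [eval_sub, eval_C, eval_mul, eval_pow, eval_X, one_pow, eval_one, sub_self,
    zero_mul, sub_eq_zero] at h2
  rw [h1, h2]

end modp

section logarithm

open Polynomial

variable {p : ℕ} [Fact p.Prime] {U : (ZMod p)[X]}

theorem toCyclic_X_mul_derivative_log
    (hd : derivative ((1 - X) * U) = (1 - X) ^ (p - 1) - X ^ (p - 1)) :
    toCyclic p (X * derivative ((1 - X) * U)) = (1 - toCyclic p X) ^ (p - 1) - 1 := by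
  have hp : p ≠ 0 := (Fact.out : p.Prime).ne_zero
  have h0 := toCyclic_one_sub_X_pow (p := p)
  have h1 := toCyclic_X_pow (p := p)
  rw [← pow_sub_one_mul hp] at h0 h1
  rw [hd]
  simp only [map_mul, map_sub, map_pow, map_one]
  linear_combination -h0 - h1

theorem toCyclic_log_mul_one_sub_X_pow :
    toCyclic p ((1 - X) * U) * (1 - toCyclic p X) ^ (p - 1) = 0 := by
  have hp : p ≠ 0 := (Fact.out : p.Prime).ne_zero
  have h0 := toCyclic_one_sub_X_pow (p := p)
  rw [← pow_sub_one_mul hp] at h0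
  simp only [map_mul, map_sub, map_one]
  linear_combination toCyclic p U * h0

theorem toCyclic_log_pow_char : toCyclic p ((1 - X) * U) ^ p = 0 := by
  rw [map_mul, mul_pow, map_sub, map_one, toCyclic_one_sub_X_pow, zero_mul]

theorem toCyclic_log_pow_sub_one (hU : U.eval 1 = 1) :
    toCyclic p ((1 - X) * U) ^ (p - 1) = (1 - toCyclic p X) ^ (p - 1) := by
  rw [map_mul, mul_pow, map_sub, map_one, ← map_pow, toCyclic_one_sub_X_pow_mul]
  simp [hU]

theorem residueSum_log_pow (hd : derivative ((1 - X) * U) = (1 - X) ^ (p - 1) - X ^ (p - 1))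
    {r : ℤ} (hr : (r : ZMod p) ≠ 0) (i : ℕ) :
    residueSum (ZMod p) p r (((1 - X) * U) ^ (i + 1)) =
      -(i + 1).factorial * ((-(r : ZMod p))⁻¹) ^ (i + 1) := by
  have hlog := toCyclic_X_mul_derivative_log hd
  have hz := toCyclic_log_mul_one_sub_X_pow (p := p) (U := U)
  induction i with
  | zero =>
    have hone : residueSum (ZMod p) p r 1 = 0 := by
      rw [← monomial_zero_one, residueSum_monomial, if_neg]
      intro h
      apply hr
      rw [ZMod.intCast_zmod_eq_zero_iff_dvd]
      simpa using h
    have h1 := residueSum_X_mul_derivative (p := p) (r := r) ((1 - X) * U)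
    rw [residueSum_eq_of_toCyclic_eq (g := (1 - X) ^ (p - 1) - 1) (by rw [hlog]; simp), map_sub,
      residueSum_one_sub_X_pow_sub_one, hone] at h1
    simp only [zero_add, pow_one, Nat.factorial_one, Nat.cast_one]
    refine mul_left_cancel₀ hr ?_
    rw [← h1, inv_neg]
    field_simp
    simp
  | succ i ih =>
    set w := (1 - X) * U
    have h1 := residueSum_X_mul_derivative (p := p) (r := r) (w ^ (i + 1 + 1))
    rw [residueSum_eq_of_toCyclic_eq (g := (-((i + 1 + 1 : ℕ) : ZMod p)) • w ^ (i + 1)), map_smul,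
      ih] at h1
    · refine mul_left_cancel₀ hr ?_
      rw [← h1, Nat.factorial_succ (i + 1), inv_neg, smul_eq_mul,
        pow_succ (-(r : ZMod p)⁻¹) (i + 1)]
      push_cast
      field_simp
    · rw [smul_eq_C_mul, derivative_pow, Nat.add_sub_cancel, C_neg, mul_left_comm]
      rw [map_mul, hlog, map_mul, map_mul, map_neg, map_pow, pow_succ]
      linear_combination toCyclic p (C ((i + 1 + 1 : ℕ) : ZMod p)) * toCyclic p w ^ i * hz

/-- The truncated exponential inverts the truncated logarithm in the group ring. -/
theorem toCyclic_X_mul_sum_log (hU : U.eval 1 = 1)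
    (hd : derivative ((1 - X) * U) = (1 - X) ^ (p - 1) - X ^ (p - 1)) :
    toCyclic p (X * ∑ j ∈ range p, C ((j.factorial : ZMod p)⁻¹) * ((1 - X) * U) ^ j) = 1 := by
  have hp := (Fact.out : p.Prime)
  have hlog := toCyclic_X_mul_derivative_log hd
  have hz := toCyclic_log_mul_one_sub_X_pow (p := p) (U := U)
  have hpow := toCyclic_log_pow_sub_one hU
  set w := (1 - X) * U with hw
  set T := (1 - toCyclic p X) ^ (p - 1)
  obtain ⟨m, hm⟩ : ∃ m, p = m + 1 := ⟨p - 1, by have := hp.pos; omega⟩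
  set E := ∑ j ∈ range p, C ((j.factorial : ZMod p)⁻¹) * w ^ j with hE
  have hfac : ∀ j < p, (j.factorial : ZMod p) ≠ 0 := fun j hj h => by
    rw [ZMod.natCast_eq_zero_iff, hp.dvd_factorial] at h
    omega
  have hE' : derivative E = derivative w *
      ∑ j ∈ range m, C ((j.factorial : ZMod p)⁻¹) * w ^ j := by
    have hE2 : E = (∑ j ∈ range m, C (((j + 1).factorial : ZMod p)⁻¹) * w ^ (j + 1)) + 1 := by
      rw [hE, show range p = range (m + 1) by rw [hm], sum_range_succ']
      simp
    rw [hE2, derivative_add, derivative_one, add_zero, derivative_sum, mul_sum]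
    refine sum_congr rfl fun j hj => ?_
    rw [derivative_C_mul, derivative_pow, Nat.add_sub_cancel]
    have h1 := hfac (j + 1) (by have := mem_range.1 hj; omega)
    have h2 : ((j + 1).factorial : ZMod p)⁻¹ * ((j + 1 : ℕ) : ZMod p) =
        (j.factorial : ZMod p)⁻¹ := by
      rw [Nat.factorial_succ] at h1 ⊢
      push_cast at h1 ⊢
      have h3 := left_ne_zero_of_mul h1
      have h4 := right_ne_zero_of_mul h1
      field_simp
    rw [← h2, C_mul]
    ring
  have hsum : ∑ j ∈ range m, C ((j.factorial : ZMod p)⁻¹) * w ^ j = E + w ^ (p - 1) := by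
    have h1 : ((m.factorial : ℕ) : ZMod p) = -1 := by
      have := ZMod.wilsons_lemma p
      rwa [show p - 1 = m by omega] at this
    rw [hE, show range p = range (m + 1) by rw [hm], sum_range_succ, h1, inv_neg, inv_one, C_neg,
      C_1, show p - 1 = m by omega]
    ring
  have hder : toCyclic p (X * derivative (X * E)) = 0 := by
    rw [derivative_mul, derivative_X, one_mul, hE', hsum]
    simp only [map_mul, map_add, map_pow] at hlog ⊢
    rw [hpow]
    have hT : T * toCyclic p E = T := by
      have := toCyclic_one_sub_X_pow_mul E
      have hev : E.eval 1 = 1 := by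
        rw [hE, eval_finsetSum, sum_eq_single_of_mem 0 (mem_range.2 hp.pos)]
        · simp
        · intro j _ hj
          simp [hw, hj]
      rw [hev, C_1, map_one, mul_one] at this
      exact this
    have hTT : T * T = 0 := by
      rw [← pow_add, show p - 1 + (p - 1) = p + (p - 2) by have := hp.two_le; omega, pow_add,
        toCyclic_one_sub_X_pow, zero_mul]
    linear_combination toCyclic p X * (toCyclic p E + T) * hlog + toCyclic p X * hT +
      toCyclic p X * hTT
  rw [toCyclic_eq_C_of_derivative hder, eval_mul, eval_X, one_mul, hE, eval_finsetSum,
    sum_eq_single_of_mem 0 (mem_range.2 hp.pos)]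
  · simp
  · intro j _ hj
    simp [hw, hj]

end logarithm

section bernoulliSum

open Polynomial

variable {p : ℕ} [Fact p.Prime] {U : (ZMod p)[X]}

theorem natCast_factorial_ne_zero {j : ℕ} (hj : j < p) : (j.factorial : ZMod p) ≠ 0 := fun h => by
  rw [ZMod.natCast_eq_zero_iff, (Fact.out : p.Prime).dvd_factorial] at h
  omega

/-- The truncated generating functions of `β k / k!` and `1 / (j + 1)!` are mutually inverse. -/
theorem X_pow_dvd_sum_mul_sum_sub_one {β : ℕ → ZMod p}
    (hβ : ∀ m < p, ∑ k ∈ range m, (m.choose k : ZMod p) * β k = if m = 1 then 1 else 0) :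
    (X : (ZMod p)[X]) ^ (p - 1) ∣
      (∑ k ∈ range (p - 1), C (β k * (k.factorial : ZMod p)⁻¹) * X ^ k) *
        (∑ j ∈ range (p - 1), C (((j + 1).factorial : ZMod p)⁻¹) * X ^ j) - 1 := by
  rw [X_pow_dvd_iff]
  intro d hd
  have hP : ∀ (f : ℕ → ZMod p), ∀ i ≤ d,
      (∑ k ∈ range (p - 1), C (f k) * X ^ k : (ZMod p)[X]).coeff i = f i := fun f i hi => by
    simp only [finsetSum_coeff, coeff_C_mul, coeff_X_pow]
    rw [sum_eq_single_of_mem i (mem_range.2 (by omega))]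
    · simp
    · intro j _ hj
      simp [hj.symm]
  rw [coeff_sub, coeff_mul, Nat.sum_antidiagonal_eq_sum_range_succ_mk]
  have h1 : ∀ i ∈ range d.succ,
      (∑ k ∈ range (p - 1), C (β k * (k.factorial : ZMod p)⁻¹) * X ^ k : (ZMod p)[X]).coeff i *
        (∑ j ∈ range (p - 1), C (((j + 1).factorial : ZMod p)⁻¹) * X ^ j :
          (ZMod p)[X]).coeff (d - i) =
      ((d + 1).factorial : ZMod p)⁻¹ * (((d + 1).choose i : ZMod p) * β i) := fun i hi => by
    have hi' : i ≤ d := Nat.lt_succ_iff.1 (mem_range.1 hi)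
    rw [hP _ i hi', hP (fun j => ((j + 1).factorial : ZMod p)⁻¹) (d - i) (Nat.sub_le _ _)]
    have h2 := Nat.choose_mul_factorial_mul_factorial (show i ≤ d + 1 by omega)
    rw [show d + 1 - i = d - i + 1 by omega] at h2
    have h3 := natCast_factorial_ne_zero (p := p) (j := i) (by omega)
    have h4 := natCast_factorial_ne_zero (p := p) (j := d - i + 1) (by omega)
    have h5 := natCast_factorial_ne_zero (p := p) (j := d + 1) (by omega)
    have h6 := congrArg (Nat.cast : ℕ → ZMod p) h2
    push_cast at h6
    field_simp
    linear_combination -β i * h6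
  rw [sum_congr rfl h1, ← mul_sum, hβ (d + 1) (by omega)]
  rcases Nat.eq_zero_or_pos d with rfl | hd0
  · simp
  · rw [if_neg (by omega), mul_zero, coeff_one, if_neg (by omega), sub_zero]

theorem toCyclic_log_mul_X_mul (hU : U.eval 1 = 1)
    (hd : derivative ((1 - X) * U) = (1 - X) ^ (p - 1) - X ^ (p - 1)) {β : ℕ → ZMod p}
    (hβ : ∀ m < p, ∑ k ∈ range m, (m.choose k : ZMod p) * β k = if m = 1 then 1 else 0) :
    toCyclic p ((1 - X) * U) * (toCyclic p X * toCyclic p U) = toCyclic p ((1 - X) * U) *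
      toCyclic p (∑ k ∈ range (p - 1), C (β k * (k.factorial : ZMod p)⁻¹) * ((1 - X) * U) ^ k) := by
  have hp := (Fact.out : p.Prime)
  have hexp := toCyclic_X_mul_sum_log hU hd
  have hnil := toCyclic_log_pow_char (p := p) (U := U)
  set w := (1 - X) * U with hw
  set P : (ZMod p)[X] := ∑ k ∈ range (p - 1), C (β k * (k.factorial : ZMod p)⁻¹) * X ^ k with hPdef
  set H : (ZMod p)[X] := ∑ j ∈ range (p - 1), C (((j + 1).factorial : ZMod p)⁻¹) * X ^ j with hHdef
  have hPw : ∑ k ∈ range (p - 1), C (β k * (k.factorial : ZMod p)⁻¹) * w ^ k = P.comp w := by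
    simp [hPdef]
  rw [hPw]
  have hE : ∑ j ∈ range p, C ((j.factorial : ZMod p)⁻¹) * w ^ j = 1 + w * H.comp w := by
    rw [show range p = range (p - 1 + 1) by rw [Nat.sub_add_cancel hp.pos], sum_range_succ']
    simp only [hHdef, Polynomial.sum_comp, mul_comp, C_comp, pow_comp, X_comp, mul_sum, pow_succ]
    rw [add_comm]
    exact congrArg₂ (· + ·) (by simp) (sum_congr rfl fun j _ => by ring)
  obtain ⟨Q, hQ⟩ := X_pow_dvd_sum_mul_sum_sub_one hβ
  have hQ' : P.comp w * H.comp w - 1 = w ^ (p - 1) * Q.comp w := by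
    have := congrArg (fun f => f.comp w) hQ
    rwa [sub_comp, mul_comp, one_comp, mul_comp, X_pow_comp] at this
  have hQ2 := congrArg (toCyclic p) hQ'
  rw [hE] at hexp
  obtain ⟨H2, hH2⟩ : X ∣ H - 1 := by
    rw [X_dvd_iff, coeff_sub, hHdef, finsetSum_coeff, sum_eq_single_of_mem 0
      (mem_range.2 (by have := hp.two_le; omega))]
    · simp
    · intro j _ hj
      simp [coeff_X_pow, hj.symm]
  have hunit : IsUnit (toCyclic p (H.comp w)) := by
    have h2 : H.comp w = 1 + w * H2.comp w := by
      have := congrArg (fun f => f.comp w) hH2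
      simp only [sub_comp, one_comp, mul_comp, X_comp] at this
      linear_combination this
    rw [h2, map_add, map_one, map_mul]
    refine IsNilpotent.isUnit_one_add ⟨p, ?_⟩
    rw [mul_pow, hnil, zero_mul]
  refine hunit.mul_right_cancel ?_
  rw [← pow_sub_one_mul hp.ne_zero] at hnil
  have hww : toCyclic p w = (1 - toCyclic p X) * toCyclic p U := by simp [hw]
  simp only [map_mul, map_sub, map_add, map_pow, map_one] at hexp hQ2
  generalize toCyclic p (H.comp w) = h at *
  generalize toCyclic p (P.comp w) = b at *
  generalize toCyclic p (Q.comp w) = c at *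
  linear_combination toCyclic p U * hexp - hww - toCyclic p w * hQ2 - c * hnil

theorem toCyclic_pow_char (hU : U.eval 1 = 1) : toCyclic p U ^ p = 1 := by
  rw [← map_pow, ← ZMod.expand_card U, toCyclic_expand, hU, C_1, map_one]

/-- The Euler operator applied to a power of the truncated logarithm times a Frobenius quotient. -/
theorem toCyclic_X_mul_derivative_log_pow_mul (h3 : 3 ≤ p) (hU : U.eval 1 = 1)
    (hd : derivative ((1 - X) * U) = (1 - X) ^ (p - 1) - X ^ (p - 1)) {β : ℕ → ZMod p}
    (hβ : ∀ m < p, ∑ k ∈ range m, (m.choose k : ZMod p) * β k = if m = 1 then 1 else 0)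
    (hU' : 2 * (derivative U).eval 1 = -1) {q : (ZMod p)[X]}
    (hq' : derivative q = U ^ (p - 1) * derivative U -
      expand (ZMod p) p (derivative U) * X ^ (p - 1)) (a : ℕ) :
    toCyclic p (X * derivative (((1 - X) * U) ^ (a + 2) * q)) =
      toCyclic p (-C ((a + 2 : ℕ) : ZMod p) * (((1 - X) * U) ^ (a + 1) * q) +
        ∑ k ∈ Ico 2 (p - 1), C (β k * (k.factorial : ZMod p)⁻¹) *
          ((1 - X) * U) ^ (a + 1 + k)) := by
  have hp := (Fact.out : p.Prime)
  have hlog := toCyclic_X_mul_derivative_log hd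
  have hz := toCyclic_log_mul_one_sub_X_pow (p := p) (U := U)
  have hb := toCyclic_log_mul_X_mul hU hd hβ
  have hβ0 : β 0 = 1 := by simpa using hβ 1 (by omega)
  have hβ1 : β 1 = (derivative U).eval 1 := by
    have h2 := hβ 2 (by omega)
    simp [sum_range_succ, hβ0] at h2
    have h2' : (2 : ZMod p) ≠ 0 := by
      have := natCast_factorial_ne_zero (p := p) (j := 2) (by omega)
      simpa using this
    refine mul_left_cancel₀ h2' ?_
    linear_combination h2 - hU'
  have hup := toCyclic_pow_char (p := p) hU
  have hxp := toCyclic_X_pow (p := p)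
  have hex := toCyclic_expand (derivative U)
  rw [← pow_sub_one_mul hp.ne_zero] at hup hxp
  set κ := (derivative U).eval 1 with hκ
  have hdw : derivative ((1 - X) * U) = -U + (1 - X) * derivative U := by
    rw [derivative_mul]; simp
  have hdw' := congrArg (toCyclic p) hdw
  have hw : toCyclic p ((1 - X) * U) = (1 - toCyclic p X) * toCyclic p U := by simp
  have hq2 := congrArg (toCyclic p) hq'
  set w := (1 - X) * U
  have hsum : ∑ k ∈ range (p - 1), C (β k * (k.factorial : ZMod p)⁻¹) * w ^ k =
      1 + C κ * w + ∑ k ∈ Ico 2 (p - 1), C (β k * (k.factorial : ZMod p)⁻¹) * w ^ k := by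
    rw [range_eq_Ico, sum_eq_sum_Ico_succ_bot (by omega), sum_eq_sum_Ico_succ_bot (by omega)]
    simp [hβ0, hβ1]
    ring
  have hshift : ∑ k ∈ Ico 2 (p - 1), C (β k * (k.factorial : ZMod p)⁻¹) * w ^ (a + 1 + k) =
      w ^ (a + 1) * ∑ k ∈ Ico 2 (p - 1), C (β k * (k.factorial : ZMod p)⁻¹) * w ^ k := by
    rw [mul_sum]
    exact sum_congr rfl fun k _ => by rw [pow_add]; ring
  rw [hsum] at hb
  rw [hshift, derivative_mul, derivative_pow, show a + 2 - 1 = a + 1 by omega]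
  generalize ∑ k ∈ Ico 2 (p - 1), C (β k * (k.factorial : ZMod p)⁻¹) * w ^ k = S at *
  simp only [map_mul, map_sub, map_add, map_pow, map_one, map_neg] at hlog hb hdw' hq2 ⊢
  rw [hex] at hq2
  generalize toCyclic p (C κ) = k at *
  generalize toCyclic p (C ((a + 2 : ℕ) : ZMod p)) = m at *
  generalize toCyclic p (derivative q) = q' at *
  generalize toCyclic p q = q₀ at *
  generalize toCyclic p (derivative U) = u' at *
  generalize toCyclic p (derivative w) = w' at *
  generalize toCyclic p w = ω at *
  generalize toCyclic p U = u at *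
  generalize toCyclic p S = s at *
  generalize toCyclic p X = x at *
  generalize x ^ (p - 1) = y at *
  generalize u ^ (p - 1) = v at *
  generalize (1 - x) ^ (p - 1) = T at *
  have key : ω * x * q' = T - 1 + x * u - k * ω := by
    linear_combination ω * x * hq2 + hlog - x * hdw' - k * ω * hxp + x * (1 - x) * u' * hup +
      x * v * u' * hw
  linear_combination m * ω ^ (a + 1) * q₀ * hlog + m * ω ^ a * q₀ * hz + ω ^ (a + 1) * key +
    ω ^ a * hz + ω ^ a * hb

/-- The mod `p` residue sums of a power of the truncated logarithm times a Frobenius quotient. -/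
theorem residueSum_log_pow_mul (h3 : 3 ≤ p) (hU : U.eval 1 = 1)
    (hd : derivative ((1 - X) * U) = (1 - X) ^ (p - 1) - X ^ (p - 1)) {β : ℕ → ZMod p}
    (hβ : ∀ m < p, ∑ k ∈ range m, (m.choose k : ZMod p) * β k = if m = 1 then 1 else 0)
    (hU' : 2 * (derivative U).eval 1 = -1) {q : (ZMod p)[X]} (hq1 : q.eval 1 = 0)
    (hq' : derivative q = U ^ (p - 1) * derivative U -
      expand (ZMod p) p (derivative U) * X ^ (p - 1))
    {r : ℤ} (hr : (r : ZMod p) ≠ 0) {a : ℕ} (ha : 1 ≤ a) (hap : a ≤ p - 1) :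
    residueSum (ZMod p) p r (((1 - X) * U) ^ a * q) =
      ∑ k ∈ Ico 2 (p - 1), β k * ((a + k).factorial : ZMod p) *
        ((k : ZMod p) * (k.factorial : ZMod p))⁻¹ * ((-(r : ZMod p))⁻¹) ^ (a + k) := by
  have hp := (Fact.out : p.Prime)
  induction hap using Nat.decreasingInduction with
  | self =>
    rw [residueSum_eq_of_toCyclic_eq (g := 0), map_zero, sum_eq_zero]
    · intro k hk
      have h0 : ((p - 1 + k).factorial : ZMod p) = 0 := by
        rw [ZMod.natCast_eq_zero_iff, hp.dvd_factorial]
        have := (mem_Ico.1 hk).1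
        omega
      rw [h0]
      ring
    · rw [map_mul, map_pow, toCyclic_log_pow_sub_one hU, toCyclic_one_sub_X_pow_mul, hq1]
      simp
  | of_succ a hap ih =>
    obtain ⟨a, rfl⟩ : ∃ c, a = c + 1 := ⟨a - 1, by omega⟩
    have h1 := residueSum_X_mul_derivative (p := p) (r := r) (((1 - X) * U) ^ (a + 2) * q)
    rw [residueSum_eq_of_toCyclic_eq
      (toCyclic_X_mul_derivative_log_pow_mul h3 hU hd hβ hU' hq' a)] at h1
    rw [ih (by omega), map_add, ← C_neg, ← smul_eq_C_mul, map_smul, map_sum] at h1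
    have ha2 : ((a + 2 : ℕ) : ZMod p) ≠ 0 := by
      rw [Ne, ZMod.natCast_eq_zero_iff]
      exact Nat.not_dvd_of_pos_of_lt (by omega) (by omega)
    refine mul_left_cancel₀ (neg_ne_zero.2 ha2) ?_
    rw [smul_eq_mul] at h1
    rw [eq_sub_of_add_eq h1, mul_sum, mul_sum, ← sum_sub_distrib]
    refine sum_congr rfl fun k hk => ?_
    have hk2 := mem_Ico.1 hk
    obtain ⟨j, rfl⟩ : ∃ j, k = j + 1 := ⟨k - 1, by omega⟩
    rw [← smul_eq_C_mul, map_smul, show a + 1 + (j + 1) = (a + 1 + j) + 1 by ring,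
      residueSum_log_pow hd hr, smul_eq_mul, show a + 1 + 1 + (j + 1) = (a + 1 + j + 1) + 1 by ring,
      Nat.factorial_succ (a + 1 + j + 1)]
    have hj0 : ((j + 1 : ℕ) : ZMod p) ≠ 0 := by
      rw [Ne, ZMod.natCast_eq_zero_iff]
      exact Nat.not_dvd_of_pos_of_lt (by omega) (by omega)
    have hj1 := natCast_factorial_ne_zero (p := p) (j := j + 1) (by omega)
    rw [pow_succ _ (a + 1 + j + 1), inv_neg]
    generalize (-(r : ZMod p)⁻¹) ^ (a + 1 + j + 1) = s
    push_cast at hj0 ⊢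
    field_simp
    ring

end bernoulliSum

section bernoulli

variable {p : ℕ} [Fact p.Prime]

theorem natCast_inv_mem_padicInt {n : ℕ} (h : ¬ p ∣ n) : ((n : ℚ_[p]))⁻¹ ∈ PadicInt.subring p := by
  rw [PadicInt.mem_subring_iff, norm_inv, Padic.norm_natCast_eq_one_iff.2, inv_one]
  exact ((Fact.out : p.Prime).coprime_iff_not_dvd).2 h

theorem prime_pow_div_mem_padicInt (h3 : 3 ≤ p) {j : ℕ} (hj : 1 ≤ j) :
    (p : ℚ_[p]) ^ (j - 1) / ((j + 1 : ℕ) : ℚ_[p]) ∈ PadicInt.subring p := by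
  have hp := (Fact.out : p.Prime)
  obtain ⟨v, u, hu, hv⟩ := Nat.exists_eq_pow_mul_and_not_dvd (n := j + 1) (by omega) p hp.ne_one
  have hvj : v ≤ j - 1 := by
    have h1 : p ^ v ≤ j + 1 := hv ▸ Nat.le_mul_of_pos_right _
      (Nat.pos_of_ne_zero fun h => hu (h ▸ dvd_zero p))
    have h2 : 3 ^ v ≤ j + 1 := (Nat.pow_le_pow_left h3 v).trans h1
    have h4 : 1 + j * 2 ≤ 3 ^ j := by
      have := one_add_mul_le_pow (a := (2 : ℤ)) (by norm_num) j
      zify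
      norm_num at this ⊢
      linarith
    have h5 : 3 ^ v < 3 ^ j := by omega
    have := (Nat.pow_lt_pow_iff_right (by norm_num)).1 h5
    omega
  have hp0 : (p : ℚ_[p]) ≠ 0 := Nat.cast_ne_zero.2 hp.ne_zero
  have hu0 : (u : ℚ_[p]) ≠ 0 := Nat.cast_ne_zero.2 fun h => hu (h ▸ dvd_zero p)
  have h6 : (p : ℚ_[p]) ^ (j - 1) / ((j + 1 : ℕ) : ℚ_[p]) =
      (p : ℚ_[p]) ^ (j - 1 - v) * (u : ℚ_[p])⁻¹ := by
    rw [hv, ← Nat.sub_add_cancel hvj, pow_add, Nat.add_sub_cancel]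
    push_cast
    field_simp
  rw [h6]
  exact mul_mem (pow_mem (natCast_mem _ _) _) (natCast_inv_mem_padicInt hu)

theorem bernoulli_mem_padicInt (k : ℕ) (hk : k + 1 < p) :
    ((bernoulli k : ℚ) : ℚ_[p]) ∈ PadicInt.subring p := by
  induction k using Nat.strong_induction_on with
  | _ k ih =>
    have h := congrArg (Rat.cast : ℚ → ℚ_[p]) (sum_bernoulli (k + 1))
    rw [sum_range_succ, Nat.choose_succ_self_right] at h
    push_cast at h
    have h0 : ((k + 1 : ℕ) : ℚ_[p]) ≠ 0 := Nat.cast_ne_zero.2 (by omega)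
    have h1 : ((bernoulli k : ℚ) : ℚ_[p]) = ((k + 1 : ℕ) : ℚ_[p])⁻¹ *
        (((if k + 1 = 1 then 1 else 0 : ℚ) : ℚ_[p]) -
          ∑ x ∈ range k, ((k + 1).choose x : ℚ_[p]) * ((bernoulli x : ℚ) : ℚ_[p])) := by
      rw [eq_inv_mul_iff_mul_eq₀ h0]
      push_cast
      linear_combination h
    rw [h1]
    refine mul_mem (natCast_inv_mem_padicInt fun hd => ?_) (sub_mem ?_ (sum_mem fun x hx => ?_))
    · have := Nat.le_of_dvd (by omega) hd
      omega
    · split_ifs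
      · simp
      · simp
    · have := mem_range.1 hx
      exact mul_mem (natCast_mem _ _) (ih x this (by omega))

theorem prime_mul_bernoulli_mem_padicInt (h3 : 3 ≤ p) (k : ℕ) :
    (p : ℚ_[p]) * ((bernoulli k : ℚ) : ℚ_[p]) ∈ PadicInt.subring p := by
  have hp := (Fact.out : p.Prime)
  rcases Nat.even_or_odd' k with ⟨m, rfl | rfl⟩
  · obtain ⟨z, hz⟩ := Bernoulli.vonStaudt_clausen m
    have h := congrArg (Rat.cast : ℚ → ℚ_[p]) hz
    push_cast at h
    have h1 : (p : ℚ_[p]) * ((bernoulli (2 * m) : ℚ) : ℚ_[p]) = p * (z : ℚ_[p]) -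
        ∑ q ∈ range (2 * m + 2) with q.Prime ∧ (q - 1) ∣ 2 * m,
          (p : ℚ_[p]) * (1 / (q : ℚ_[p])) := by
      rw [← mul_sum]
      linear_combination -(p : ℚ_[p]) * h
    rw [h1]
    refine sub_mem (mul_mem (natCast_mem _ _) (intCast_mem _ _)) (sum_mem fun q hq => ?_)
    have hq' := (mem_filter.1 hq).2.1
    rw [one_div]
    by_cases hpq : p ∣ q
    · rw [← (Nat.prime_dvd_prime_iff_eq hp hq').1 hpq, mul_inv_cancel₀]
      · exact one_mem _
      · exact Nat.cast_ne_zero.2 hp.ne_zero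
    · exact mul_mem (natCast_mem _ _) (natCast_inv_mem_padicInt hpq)
  · rcases Nat.eq_zero_or_pos m with rfl | hm
    · exact mul_mem (natCast_mem _ _) (bernoulli_mem_padicInt 1 (by omega))
    · rw [bernoulli_eq_zero_of_odd ⟨m, rfl⟩ (by omega)]
      simp

/-- The formula of Faulhaber modulo the square of the length of summation. -/
theorem exists_sum_range_pow_eq (h3 : 3 ≤ p) {b : ℕ} (hb : 1 ≤ b) :
    ∃ z ∈ PadicInt.subring p, ∑ k ∈ range (p ^ b), (k : ℚ_[p]) ^ (p ^ (b - 1) * (p - 1)) =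
      (p : ℚ_[p]) ^ b * ((bernoulli (p ^ (b - 1) * (p - 1)) : ℚ) : ℚ_[p]) +
        (p : ℚ_[p]) ^ (2 * b) * z := by
  have hp := (Fact.out : p.Prime)
  have hp0 : (p : ℚ_[p]) ≠ 0 := Nat.cast_ne_zero.2 hp.ne_zero
  set m := p ^ (b - 1) * (p - 1) with hm
  have heven : Even m := by
    rw [hm]
    exact (Nat.Odd.sub_odd (hp.odd_of_ne_two (by omega)) odd_one).mul_left _
  have hm0 : 0 < m := by
    rw [hm]
    exact Nat.mul_pos (pow_pos hp.pos _) (by omega)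
  have hterm : ∀ i ∈ range m, ∃ z ∈ PadicInt.subring p,
      ((bernoulli i : ℚ) : ℚ_[p]) * ((m + 1).choose i) * ((p ^ b : ℕ) : ℚ_[p]) ^ (m + 1 - i) /
        (m + 1) = (p : ℚ_[p]) ^ (2 * b) * z := by
    intro i hi
    obtain ⟨j, hj, hj1⟩ : ∃ j, m = i + j ∧ 1 ≤ j := ⟨m - i, by have := mem_range.1 hi; omega,
      by have := mem_range.1 hi; omega⟩
    have hc : (((m + 1).choose i : ℕ) : ℚ_[p]) / (m + 1) =
        (m.choose i : ℚ_[p]) / ((j + 1 : ℕ) : ℚ_[p]) := by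
      have := Nat.choose_mul_succ_eq m i
      rw [show m + 1 - i = j + 1 by omega] at this
      have h2 := congrArg (Nat.cast : ℕ → ℚ_[p]) this
      push_cast at h2
      have h4 : (m : ℚ_[p]) + 1 ≠ 0 := by exact_mod_cast Nat.succ_ne_zero m
      have h5 : (j : ℚ_[p]) + 1 ≠ 0 := by exact_mod_cast Nat.succ_ne_zero j
      push_cast
      rw [div_eq_div_iff h4 h5]
      linear_combination -h2
    have hdiv := prime_pow_div_mem_padicInt h3 hj1
    have hsplit : ((bernoulli i : ℚ) : ℚ_[p]) * ((m + 1).choose i) *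
        ((p ^ b : ℕ) : ℚ_[p]) ^ (m + 1 - i) / (m + 1) =
        ((bernoulli i : ℚ) : ℚ_[p]) * (m.choose i) * (p : ℚ_[p]) ^ (b * (j + 1)) /
          ((j + 1 : ℕ) : ℚ_[p]) := by
      rw [show m + 1 - i = j + 1 by omega, mul_right_comm, mul_div_assoc, hc, pow_mul]
      push_cast
      ring
    rw [hsplit]
    rcases Nat.eq_or_lt_of_le hb with hb1 | hb2
    · refine ⟨((bernoulli i : ℚ) : ℚ_[p]) * (m.choose i) *
        ((p : ℚ_[p]) ^ (j - 1) / ((j + 1 : ℕ) : ℚ_[p])), mul_mem (mul_mem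
          (bernoulli_mem_padicInt i ?_) (natCast_mem _ _)) hdiv, ?_⟩
      · have : m = p - 1 := by simp [hm, ← hb1]
        omega
      · rw [← hb1, show 1 * (j + 1) = 2 * 1 + (j - 1) by omega, pow_add]
        ring
    · rcases Nat.eq_or_lt_of_le hj1 with hj1' | hj2
      · rw [bernoulli_eq_zero_of_odd]
        · exact ⟨0, zero_mem _, by simp⟩
        · rw [Nat.even_iff] at heven
          rw [Nat.odd_iff]
          omega
        · have h4 : p ^ 1 ≤ p ^ (b - 1) := Nat.pow_le_pow_right hp.pos (by omega)
          rw [pow_one] at h4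
          have h5 : 3 * 2 ≤ m := by
            rw [hm]
            exact Nat.mul_le_mul (by omega) (by omega)
          omega
      · obtain ⟨e, he⟩ : ∃ e, b * (j + 1) = 2 * b + e + (j - 1) + 1 := by
          obtain ⟨b', rfl⟩ : ∃ b', b = b' + 2 := ⟨b - 2, by omega⟩
          obtain ⟨j', rfl⟩ : ∃ j', j = j' + 2 := ⟨j - 2, by omega⟩
          refine ⟨b' * j' + b' + j', ?_⟩
          rw [show j' + 2 - 1 = j' + 1 by omega]
          ring
        refine ⟨(p : ℚ_[p]) * ((bernoulli i : ℚ) : ℚ_[p]) * (m.choose i) * (p : ℚ_[p]) ^ e *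
          ((p : ℚ_[p]) ^ (j - 1) / ((j + 1 : ℕ) : ℚ_[p])), mul_mem (mul_mem (mul_mem
          (prime_mul_bernoulli_mem_padicInt h3 i) (natCast_mem _ _)) (pow_mem (natCast_mem _ _) _))
          hdiv, ?_⟩
        rw [he, pow_add, pow_add, pow_add]
        ring
  have h := congrArg (Rat.cast : ℚ → ℚ_[p]) (sum_range_pow (p ^ b) m)
  rw [sum_range_succ] at h
  choose! f hf hf' using hterm
  refine ⟨∑ i ∈ range m, f i, sum_mem hf, ?_⟩
  push_cast at h hf'
  rw [h, sum_congr rfl hf', ← mul_sum, add_comm]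
  congr 1
  have h4 : (m : ℚ_[p]) + 1 ≠ 0 := by exact_mod_cast Nat.succ_ne_zero m
  rw [show m + 1 - m = 1 by omega, Nat.choose_succ_self_right]
  push_cast
  field_simp

end bernoulli

section powerSum

theorem sq_dvd_prod_one_add_sub {ι R : Type*} [CommRing R] {t : R} (s : Finset ι) (g : ι → R) :
    t ^ 2 ∣ ∏ k ∈ s, (1 + t * g k) - (1 + t * ∑ k ∈ s, g k) := by
  classical
  induction s using Finset.induction_on with
  | empty => simp
  | insert a s ha ih =>
    obtain ⟨y, hy⟩ := ih
    rw [prod_insert ha, sum_insert ha]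
    exact ⟨y * (1 + t * g a) + g a * ∑ k ∈ s, g k, by linear_combination (1 + t * g a) * hy⟩

theorem unitFactorial_pow_eq_prod_coprime {p b : ℕ} (hp : p.Prime) (hb : 1 ≤ b) :
    unitFactorial p (p ^ b) = ∏ k ∈ range (p ^ b) with (p ^ b).Coprime k, k := by
  rw [unitFactorial_pow_eq p b hb, prod_filter]
  refine prod_congr rfl fun k _ => ?_
  simp only [unitPart, Nat.coprime_pow_left_iff (show 0 < b by omega), hp.coprime_iff_not_dvd,
    ite_not]

theorem sum_range_pow_totient_modEq {p b : ℕ} (hp : p.Prime) (hodd : Odd p) (hb : 1 ≤ b) :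
    ∑ k ∈ range (p ^ b), (k : ℤ) ^ (p ^ (b - 1) * (p - 1)) ≡
      -((p ^ (b - 1) * (p - 1) : ℕ) : ℤ) * unitFactorial p (p ^ b) [ZMOD (p : ℤ) ^ (2 * b)] := by
  have h3 : 3 ≤ p := by
    have := hp.two_le
    rcases hodd with ⟨k, rfl⟩
    omega
  have htot := Nat.totient_prime_pow hp (show 0 < b by omega)
  set m := p ^ (b - 1) * (p - 1) with hm
  have heven : Even m := by
    rw [hm]
    exact (Nat.Odd.sub_odd hodd odd_one).mul_left _
  have hm2 : 2 * b ≤ m := by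
    have h1 : b - 1 < p ^ (b - 1) := Nat.lt_pow_self hp.one_lt
    rw [hm, mul_comm]
    exact Nat.mul_le_mul (by omega) (by omega)
  set s := {k ∈ range (p ^ b) | (p ^ b).Coprime k} with hs
  have hcard : s.card = m := htot
  have hfilter : ∑ k ∈ range (p ^ b), (k : ℤ) ^ m ≡ ∑ k ∈ s, (k : ℤ) ^ m
      [ZMOD (p : ℤ) ^ (2 * b)] := by
    rw [hs, sum_filter]
    refine Int.ModEq.sum fun k _ => ?_
    split_ifs with h
    · rfl
    · rw [Nat.coprime_pow_left_iff (by omega), hp.coprime_iff_not_dvd, not_not] at h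
      exact Int.modEq_zero_iff_dvd.2
        ((pow_dvd_pow _ hm2).trans (pow_dvd_pow_of_dvd (Int.natCast_dvd_natCast.2 h) m))
  have hone : ∀ k ∈ s, ∃ g : ℤ, (k : ℤ) ^ m = 1 + (p : ℤ) ^ b * g := fun k hk => by
    have hk' := (mem_filter.1 hk).2
    have h1 := Nat.ModEq.pow_totient hk'.symm
    rw [htot, ← Int.natCast_modEq_iff] at h1
    obtain ⟨g, hg⟩ := Int.modEq_iff_dvd.1 h1.symm
    push_cast at hg
    exact ⟨g, by linear_combination hg⟩
  choose! g hg using hone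
  have hprod := sq_dvd_prod_one_add_sub (t := (p : ℤ) ^ b) s g
  rw [← prod_congr rfl hg, prod_pow] at hprod
  have hG : ∏ k ∈ s, (k : ℤ) = unitFactorial p (p ^ b) := by
    rw [unitFactorial_pow_eq_prod_coprime hp hb]
    push_cast
    rfl
  obtain ⟨w, hw⟩ := dvd_unitFactorial_pow_add_one hp hodd hb
  obtain ⟨y, hy⟩ := hprod
  obtain ⟨y', hy'⟩ := Polynomial.powAddExpansion (1 : ℤ) (-((p : ℤ) ^ b * w)) m
  have hGm : (unitFactorial p (p ^ b) : ℤ) ^ m = (1 + -((p : ℤ) ^ b * w)) ^ m := by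
    rw [← heven.neg_pow]
    congr 1
    linear_combination -hw
  rw [hG, hGm, hy'] at hy
  refine hfilter.trans (Int.modEq_iff_dvd.2 ?_)
  rw [sum_congr rfl hg, sum_add_distrib, ← mul_sum, sum_const, hcard, pow_mul']
  refine ⟨y - y' * w ^ 2, ?_⟩
  simp only [one_pow, nsmul_eq_mul, mul_one] at hy ⊢
  linear_combination hy - (m : ℤ) * hw

/-- The Bernoulli number of index `φ(p ^ b)` and the quotient of Wilson. -/
theorem exists_prime_mul_bernoulli_totient_eq {p b : ℕ} [Fact p.Prime] (hodd : Odd p)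
    (hb : 1 ≤ b) : ∃ z ∈ PadicInt.subring p,
      (p : ℚ_[p]) * ((bernoulli (Nat.totient (p ^ b)) : ℚ) : ℚ_[p]) =
        p + unitFactorial p (p ^ b) + (p : ℚ_[p]) ^ (b + 1) * z := by
  have hp := (Fact.out : p.Prime)
  have h3 : 3 ≤ p := by
    have := hp.two_le
    rcases hodd with ⟨k, rfl⟩
    omega
  obtain ⟨z, hz, hsum⟩ := exists_sum_range_pow_eq h3 hb
  obtain ⟨y, hy⟩ := Int.modEq_iff_dvd.1 (sum_range_pow_totient_modEq hp hodd hb)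
  obtain ⟨w, hw⟩ := dvd_unitFactorial_pow_add_one hp hodd hb
  have hy' := congrArg (Int.cast : ℤ → ℚ_[p]) hy
  have hw' := congrArg (Int.cast : ℤ → ℚ_[p]) hw
  push_cast [Nat.cast_sub hp.one_le] at hy' hw'
  rw [hsum] at hy'
  rw [Nat.totient_prime_pow hp (by omega)]
  obtain ⟨c, rfl⟩ : ∃ c, b = c + 1 := ⟨b - 1, by omega⟩
  rw [Nat.add_sub_cancel] at *
  refine ⟨-z - y - w, sub_mem (sub_mem (neg_mem hz) (intCast_mem _ _)) (intCast_mem _ _), ?_⟩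
  have hp0 : (p : ℚ_[p]) ≠ 0 := Nat.cast_ne_zero.2 hp.ne_zero
  refine mul_left_cancel₀ (pow_ne_zero c hp0) ?_
  rw [show 2 * (c + 1) = c + (c + 1 + 1) by ring, pow_add _ c (c + 1 + 1)] at hy'
  rw [pow_succ _ (c + 1)] at hy' ⊢
  linear_combination -hy' - (p : ℚ_[p]) ^ c * p * hw'

end powerSum

section wilson

variable {p : ℕ} [Fact p.Prime]

theorem padicInt_dvd_sub_of_toZMod_eq {x y : ℤ_[p]} (h : PadicInt.toZMod x = PadicInt.toZMod y) :
    (p : ℤ_[p]) ∣ x - y := by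
  rw [← Ideal.mem_span_singleton, ← PadicInt.maximalIdeal_eq_span_p, ← PadicInt.ker_toZMod,
    RingHom.mem_ker, map_sub, h, sub_self]

theorem padicInt_natCast_mul_inv {k : ℕ} (hk : ¬ p ∣ k) :
    (k : ℤ_[p]) * (k : ℤ_[p]).inv = 1 :=
  PadicInt.mul_inv (PadicInt.norm_natCast_eq_one_iff.2
    (((Fact.out : p.Prime).coprime_iff_not_dvd).2 hk))

theorem toZMod_inv_natCast {k : ℕ} (hk : ¬ p ∣ k) :
    PadicInt.toZMod (k : ℤ_[p]).inv = (k : ZMod p)⁻¹ := by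
  refine eq_inv_of_mul_eq_one_right ?_
  have := congrArg PadicInt.toZMod (padicInt_natCast_mul_inv hk)
  rwa [map_mul, map_natCast, map_one] at this

/-- The inverse of a natural number prime to `p`, and `0` for the multiples of `p`. -/
noncomputable def unitInv (p : ℕ) [Fact p.Prime] (k : ℕ) : ℤ_[p] :=
  if p ∣ k then 0 else (k : ℤ_[p]).inv

theorem toZMod_unitInv (k : ℕ) : PadicInt.toZMod (unitInv p k) = (k : ZMod p)⁻¹ := by
  unfold unitInv
  split_ifs with h
  · rw [map_zero, (ZMod.natCast_eq_zero_iff k p).2 h, inv_zero]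
  · exact toZMod_inv_natCast h

theorem unitPart_pow_add {b : ℕ} (hb : 1 ≤ b) (k : ℕ) :
    (unitPart p (p ^ b + k) : ℤ_[p]) =
      unitPart p k * (1 + (p : ℤ_[p]) ^ b * unitInv p k) := by
  have h : p ∣ p ^ b := dvd_pow_self p (by omega)
  simp only [unitPart, unitInv, Nat.dvd_add_right h]
  split_ifs with hk
  · simp
  · push_cast
    linear_combination -(p : ℤ_[p]) ^ b * padicInt_natCast_mul_inv hk

theorem pow_succ_dvd_unitFactorial_add_pow_sub {b : ℕ} (hb : 1 ≤ b) (m : ℕ) :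
    (p : ℤ_[p]) ^ (b + 1) ∣ unitFactorial p (m + p ^ b) - unitFactorial p (p ^ b) *
      unitFactorial p m * (1 + (p : ℤ_[p]) ^ b * ∑ k ∈ range m, unitInv p (k + 1)) := by
  have h1 : (unitFactorial p (m + p ^ b) : ℤ_[p]) = unitFactorial p (p ^ b) *
      unitFactorial p m * ∏ k ∈ range m, (1 + (p : ℤ_[p]) ^ b * unitInv p (k + 1)) := by
    have h0 : unitFactorial p m = ∏ k ∈ range m, unitPart p (k + 1) := by
      rw [unitFactorial, prod_range_succ']
      simp [unitPart]
    have h2 : unitFactorial p (m + p ^ b) = unitFactorial p (p ^ b) *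
        ∏ k ∈ range m, unitPart p (p ^ b + (k + 1)) := by
      rw [unitFactorial, show m + p ^ b + 1 = p ^ b + 1 + m by ring, prod_range_add, unitFactorial]
      exact congrArg _ (prod_congr rfl fun k _ => by
        rw [show p ^ b + 1 + k = p ^ b + (k + 1) by ring])
    rw [h2, h0]
    push_cast
    rw [mul_assoc, ← prod_mul_distrib]
    exact congrArg _ (prod_congr rfl fun k _ => unitPart_pow_add hb _)
  rw [h1, ← mul_sub]
  refine dvd_mul_of_dvd_right ((pow_dvd_pow _ ?_).trans
    (pow_mul (p : ℤ_[p]) b 2 ▸ sq_dvd_prod_one_add_sub _ _)) _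
  omega

theorem sum_range_inv_add_mul (hodd : Odd p) (m i : ℕ) :
    ∑ k ∈ range (m + i * p), ((k + 1 : ℕ) : ZMod p)⁻¹ =
      ∑ k ∈ range m, ((k + 1 : ℕ) : ZMod p)⁻¹ := by
  have hp := (Fact.out : p.Prime)
  have h3 : 3 ≤ p := by
    have := hp.two_le
    rcases hodd with ⟨k, rfl⟩
    omega
  have hS : ∑ k ∈ range p, ((k + 1 : ℕ) : ZMod p)⁻¹ = 0 := by
    have h1 : ∑ k ∈ range p, ((k + 1 : ℕ) : ZMod p)⁻¹ =
        ∑ k ∈ range (p - 1), ((k + 1 : ℕ) : ZMod p)⁻¹ := by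
      rw [show range p = range (p - 1 + 1) by rw [Nat.sub_add_cancel hp.one_le], sum_range_succ,
        Nat.sub_add_cancel hp.one_le, ZMod.natCast_self, inv_zero, add_zero]
    have h2 : ∑ k ∈ range (p - 1), ((k + 1 : ℕ) : ZMod p)⁻¹ =
        -∑ k ∈ range (p - 1), ((k + 1 : ℕ) : ZMod p)⁻¹ := by
      conv_lhs => rw [← sum_range_reflect]
      rw [← sum_neg_distrib]
      refine sum_congr rfl fun k hk => ?_
      have hk' := mem_range.1 hk
      rw [← inv_neg]
      congr 1
      rw [eq_neg_iff_add_eq_zero, ← Nat.cast_add, ZMod.natCast_eq_zero_iff,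
        show p - 1 - 1 - k + 1 + (k + 1) = p by omega]
    have h4 : (2 : ZMod p) ≠ 0 := by
      simpa using natCast_factorial_ne_zero (p := p) (j := 2) (by omega)
    rw [h1]
    refine mul_left_cancel₀ h4 ?_
    linear_combination h2
  induction i with
  | zero => simp
  | succ i ih =>
    rw [show m + (i + 1) * p = p + (m + i * p) by ring, sum_range_add, hS, zero_add, ← ih]
    refine sum_congr rfl fun k _ => ?_
    congr 1
    push_cast
    simp

theorem pow_succ_dvd_unitFactorial_add_mul_pow_sub (hodd : Odd p) {b : ℕ} (hb : 1 ≤ b) (m i : ℕ)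
    {h : ℤ_[p]} (hh : PadicInt.toZMod h = ∑ k ∈ range m, ((k + 1 : ℕ) : ZMod p)⁻¹) :
    (p : ℤ_[p]) ^ (b + 1) ∣ unitFactorial p (m + i * p ^ b) - unitFactorial p (p ^ b) ^ i *
      unitFactorial p m * (1 + i * (p : ℤ_[p]) ^ b * h) := by
  induction i with
  | zero => simp
  | succ i ih =>
    obtain ⟨y₁, hy₁⟩ := pow_succ_dvd_unitFactorial_add_pow_sub (p := p) hb (m + i * p ^ b)
    obtain ⟨y₂, hy₂⟩ := ih
    obtain ⟨t, ht⟩ : (p : ℤ_[p]) ∣ ∑ k ∈ range (m + i * p ^ b), unitInv p (k + 1) - h := by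
      refine padicInt_dvd_sub_of_toZMod_eq ?_
      rw [hh, map_sum, ← sum_range_inv_add_mul hodd m (i * p ^ (b - 1)), mul_assoc, ← pow_succ,
        Nat.sub_add_cancel hb]
      exact sum_congr rfl fun k _ => toZMod_unitInv _
    obtain ⟨c, rfl⟩ : ∃ c, b = c + 1 := ⟨b - 1, by omega⟩
    rw [show m + (i + 1) * p ^ (c + 1) = m + i * p ^ (c + 1) + p ^ (c + 1) by ring]
    set G := (unitFactorial p (m + i * p ^ (c + 1)) : ℤ_[p])
    set W := (unitFactorial p (p ^ (c + 1)) : ℤ_[p])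
    set V := ∑ k ∈ range (m + i * p ^ (c + 1)), unitInv p (k + 1)
    refine ⟨y₁ + W * G * t + W * (1 + (p : ℤ_[p]) ^ (c + 1) * h) * y₂ +
      W ^ (i + 1) * unitFactorial p m * i * h ^ 2 * (p : ℤ_[p]) ^ c, ?_⟩
    push_cast
    linear_combination hy₁ + W * G * (p : ℤ_[p]) ^ (c + 1) * ht +
      W * (1 + (p : ℤ_[p]) ^ (c + 1) * h) * hy₂

end wilson

section assembly

open Polynomial

theorem one_add_mul_pow_modEq {p : ℕ} (hp : p.Prime) (hodd : Odd p) (s : ℤ) (c m : ℕ) :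
    (p : ℤ) ^ (c + 2) ∣ (1 + p * s) ^ (p ^ c * m) - (1 + (p : ℤ) ^ (c + 1) * m * s) := by
  have h3 : 3 ≤ p := by
    have := hp.two_le
    rcases hodd with ⟨k, rfl⟩
    omega
  induction c with
  | zero =>
    obtain ⟨k, hk⟩ := Polynomial.powAddExpansion 1 ((p : ℤ) * s) m
    refine ⟨k * s ^ 2, ?_⟩
    rw [pow_zero, one_mul, hk]
    ring
  | succ c ih =>
    obtain ⟨y, hy⟩ := pow_succ_dvd_pow_sub_pow (by omega) ih
    obtain ⟨k, hk⟩ := exists_one_add_pow_eq ((p : ℤ) ^ (c + 1) * m * s) p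
    obtain ⟨j, hj⟩ := hp.dvd_choose_self (k := 2) (by norm_num) (by omega)
    rw [← pow_mul, hk, hj] at hy
    push_cast at hy
    rw [show p ^ (c + 1) * m = p ^ c * m * p by ring]
    refine ⟨y + j * (p : ℤ) ^ c * (m * s) ^ 2 + k * (p : ℤ) ^ (2 * c) * (m * s) ^ 3, ?_⟩
    linear_combination hy

/-- The power of `r` that normalizes the constant term. -/
theorem pow_mul_prime_pow_modEq {p a n b B : ℕ} (hp : p.Prime) (hodd : Odd p) {r : ℤ}
    (hr : ¬ (p : ℤ) ∣ r) (ha : a ≡ n [MOD (p - 1)]) (hb : 1 ≤ b) (hn : p ^ b ∣ p * n) (hB : b ≤ B)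
    (hnB : n ≤ a * p ^ B) :
    r ^ (a * p ^ B) ≡ r ^ n * (1 + n * (r ^ (p - 1) - 1)) [ZMOD (p : ℤ) ^ (b + 1)] := by
  obtain ⟨c, rfl⟩ : ∃ c, b = c + 1 := ⟨b - 1, by omega⟩
  have hdn : p ^ c ∣ n := by
    rw [pow_succ'] at hn
    exact Nat.dvd_of_mul_dvd_mul_left hp.pos hn
  have h1 : n ≡ a * p ^ B [MOD (p - 1)] := by
    have h2 : p ≡ 1 [MOD (p - 1)] := by
      have := (Nat.modEq_iff_dvd' hp.one_le).2 (dvd_refl (p - 1))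
      exact this.symm
    simpa using ha.symm.trans ((h2.symm.pow B).mul_left a |> fun h => by simpa using h)
  obtain ⟨E, hE⟩ := (Nat.modEq_iff_dvd' hnB).1 h1
  have hE' : a * p ^ B = n + (p - 1) * E := by omega
  have hcop : (p ^ c).Coprime (p - 1) :=
    Nat.Coprime.pow_left _ ((Nat.coprime_self_sub_right hp.one_le).2 (by simp))
  have hdE : p ^ c ∣ E := by
    refine hcop.dvd_of_dvd_mul_left ?_
    rw [← hE]
    exact Nat.dvd_sub ((pow_dvd_pow p (by omega)).mul_left a) hdn
  obtain ⟨E', rfl⟩ := hdE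
  obtain ⟨s, hs⟩ : (p : ℤ) ∣ r ^ (p - 1) - 1 := by
    have := pow_sub_one_mul_prime_pow_modEq_one hp hr 0
    simpa using Int.modEq_iff_dvd.1 this.symm
  have hs' : r ^ (p - 1) = 1 + p * s := by linear_combination hs
  obtain ⟨y, hy⟩ := one_add_mul_pow_modEq hp hodd s c E'
  rw [hE', pow_add r, pow_mul r, hs']
  refine (Int.modEq_iff_dvd.2 ?_).symm
  have h5 : (p : ℤ) ^ (c + 1) ∣ (p : ℤ) ^ c * E' - n := by
    have h6 := congrArg (Nat.cast : ℕ → ℤ) hE'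
    push_cast [Nat.cast_sub hp.one_le] at h6
    have h7 : (p : ℤ) ^ c * E' - n = (p : ℤ) ^ (c + 1) * E' - a * (p : ℤ) ^ B := by
      rw [h6]; ring
    rw [h7]
    exact dvd_sub (dvd_mul_right _ _) ((pow_dvd_pow _ hB).mul_left _)
  obtain ⟨t, ht⟩ := h5
  exact ⟨r ^ n * (y + t * s), by linear_combination r ^ n * hy + r ^ n * p * s * ht⟩

theorem exists_exponent_shift {p a n b e : ℕ} (hp : p.Prime) (hn : p ^ b ∣ p * n)
    (he : p * n = a + (p - 1) * e) :
    ∃ k d : ℕ, e + p ^ (b + 1) * k = repdigit p a (b + 1) + p ^ b * d ∧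
      (p : ℤ) ^ (b + 1) ∣ (p : ℤ) ^ b * d + p * n := by
  have hZ := sub_one_mul_repdigit_add hp.one_le a (b + 1)
  set Z := repdigit p a (b + 1)
  have hcop : IsCoprime ((p : ℤ) ^ b) ((p : ℤ) - 1) :=
    IsCoprime.pow_left ⟨1, -1, by ring⟩
  have he' := congrArg (Nat.cast : ℕ → ℤ) he
  have hZ' := congrArg (Nat.cast : ℕ → ℤ) hZ
  push_cast [Nat.cast_sub hp.one_le] at he' hZ'
  have h1 : (p : ℤ) ^ b ∣ e + (p : ℤ) ^ (b + 1) * Z - Z := by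
    refine hcop.dvd_of_dvd_mul_left ?_
    obtain ⟨m, hm⟩ := hn
    have hm' := congrArg (Nat.cast : ℕ → ℤ) hm
    push_cast at hm'
    exact ⟨m - a * p + (p - 1) * p * Z, by linear_combination -he' - hZ' + hm'⟩
  have hle : Z ≤ e + p ^ (b + 1) * Z :=
    (Nat.le_mul_of_pos_left Z (pow_pos hp.pos _)).trans (Nat.le_add_left _ _)
  have h2 : p ^ b ∣ e + p ^ (b + 1) * Z - Z := by
    zify [hle]
    exact h1
  obtain ⟨d, hd⟩ := h2
  refine ⟨Z, d, by omega, ?_⟩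
  have hdcast := congrArg (Nat.cast : ℕ → ℤ) hd
  push_cast [Nat.cast_sub hle] at hdcast
  exact ⟨a - (p - 1) * Z + d, by linear_combination he' + hZ' - (1 - (p : ℤ)) * hdcast⟩

/-- The normalized Fleck quotient in terms of a product prime to `p` and a correction term. -/
theorem neg_pow_mul_residueSum_modEq {p a n b e : ℕ} {U q : ℤ[X]} (hp : p.Prime) (hodd : Odd p)
    (hU : (1 - X) ^ p = 1 - X ^ p - (p : ℤ[X]) * (1 - X) * U)
    (hq : U ^ p = expand ℤ p U + (p : ℤ[X]) * q) (ha : 1 ≤ a) (hap : a < p - 1)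
    (hb : 1 ≤ b) (hn : p ^ b ∣ p * n) (han : a ≡ n [MOD (p - 1)])
    (he : p * n = a + (p - 1) * e) {r : ℤ} (hr : ¬ (p : ℤ) ∣ r) :
    (-r) ^ n * residueSum ℤ p r ((1 - X) ^ a * U ^ e) ≡
      -(-1) ^ (a * b) * unitFactorial p (repdigit p a (b + 1)) * (1 - n * (r ^ (p - 1) - 1)) -
        p * n * ((-r) ^ a * residueSum ℤ p r ((1 - X) ^ a * U ^ repdigit p a (b + 1) * q))
      [ZMOD (p : ℤ) ^ (b + 1)] := by
  obtain ⟨k, d, hkd, hd⟩ := exists_exponent_shift hp hn he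
  have h1 := residueSum_fleckUnit_pow_add hp hodd hU hq hb a e (p * k) r
  have h2 := residueSum_fleckUnit_pow_add hp hodd hU hq hb a (repdigit p a (b + 1)) d r
  rw [← mul_assoc, ← pow_succ, hkd] at h1
  set D := repdigit p a (b + 1) + n
  have h3 := residueSum_fleckUnit_repdigit hp hodd hU ha hap (show 1 ≤ b + 1 by omega) hr
    (D := D) (Nat.le_add_right _ _)
  have h4 := pow_mul_prime_pow_modEq (B := b + 1 + D) hp hodd hr han hb hn (by omega) (by
    have h5 : b + 1 + D < p ^ (b + 1 + D) := Nat.lt_pow_self hp.one_lt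
    calc n ≤ p ^ (b + 1 + D) := by omega
      _ ≤ a * p ^ (b + 1 + D) := Nat.le_mul_of_pos_left _ ha)
  set M := residueSum ℤ p r ((1 - X) ^ a * U ^ repdigit p a (b + 1))
  set x := residueSum ℤ p r ((1 - X) ^ a * U ^ e)
  set Y := residueSum ℤ p r ((1 - X) ^ a * U ^ repdigit p a (b + 1) * q)
  set G := (unitFactorial p (repdigit p a (b + 1)) : ℤ)
  generalize residueSum ℤ p r ((1 - X) ^ a * U ^ e * q) = Y₀ at h1
  obtain ⟨c, hc⟩ : ∃ c, n = a + (p - 1) * c ∨ a = n + (p - 1) * c := by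
    rcases le_total a n with h | h
    · obtain ⟨c, hc⟩ := (Nat.modEq_iff_dvd' h).1 han
      exact ⟨c, Or.inl (by omega)⟩
    · obtain ⟨c, hc⟩ := (Nat.modEq_iff_dvd' h).1 han.symm
      exact ⟨c, Or.inr (by omega)⟩
  have hev : Even (p - 1) := Nat.Odd.sub_odd hodd odd_one
  have hra : ∀ z : ℤ, ¬ (p : ℤ) ∣ z → (p : ℤ) ∣ z ^ n - z ^ a := by
    intro z hz
    have hF : z ^ ((p - 1) * c) ≡ 1 [ZMOD p] := by
      have := (pow_sub_one_mul_prime_pow_modEq_one hp hz 0).pow c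
      simpa [pow_mul] using this
    rcases hc with hc | hc
    · rw [hc, pow_add]
      have := hF.mul_left (z ^ a)
      rw [mul_one] at this
      exact Int.modEq_iff_dvd.1 this.symm
    · rw [hc, pow_add]
      have := hF.mul_left (z ^ n)
      rw [mul_one] at this
      exact Int.modEq_iff_dvd.1 this
  have hsign : (-1 : ℤ) ^ n = (-1) ^ a := by
    rcases hc with hc | hc
    · rw [hc, pow_add, pow_mul, hev.neg_one_pow]; simp
    · rw [hc, pow_add, pow_mul, hev.neg_one_pow]; simp
  have hsign2 : (-1 : ℤ) ^ (a * (b + 1)) * (-1) ^ a = (-1) ^ (a * b) := by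
    rw [mul_add, pow_add, mul_one, mul_assoc, ← mul_pow]; simp
  obtain ⟨s, hs⟩ : (p : ℤ) ∣ r ^ (p - 1) - 1 := by
    have := pow_sub_one_mul_prime_pow_modEq_one hp hr 0
    simpa using Int.modEq_iff_dvd.1 this.symm
  obtain ⟨m, hm⟩ := hn
  obtain ⟨f, hf⟩ : ∃ f, b = f + 1 := ⟨b - 1, by omega⟩
  have hm' := congrArg (Nat.cast : ℕ → ℤ) hm
  push_cast at hm'
  obtain ⟨t, ht⟩ := hra (-r) (by rwa [dvd_neg])
  rw [hs] at h4 ⊢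
  obtain ⟨y₁, hy₁⟩ := Int.modEq_iff_dvd.1 h1
  obtain ⟨y₂, hy₂⟩ := Int.modEq_iff_dvd.1 h2
  obtain ⟨y₃, hy₃⟩ := Int.modEq_iff_dvd.1 ((h4.mul_left M).symm.trans h3)
  obtain ⟨y₄, hy₄⟩ := hd
  have hneg : (-r) ^ n = (-1) ^ a * r ^ n := by rw [← hsign, ← mul_pow]; simp
  -- the square of `p * n * s` vanishes modulo `p ^ (b + 1)`
  have hsq : (n * (p * s)) ^ 2 = (p : ℤ) ^ (b + 1) * ((p : ℤ) ^ f * (m * s) ^ 2) := by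
    rw [hf] at hm' ⊢
    have h5 : (n * (p * s) : ℤ) = (p : ℤ) ^ (f + 1) * m * s := by linear_combination s * hm'
    rw [h5]
    ring
  have hx : x = M + (p : ℤ) ^ b * d * Y + (p : ℤ) ^ (b + 1) * (y₁ - y₂ - k * Y₀) := by
    push_cast at hy₁
    linear_combination hy₁ - hy₂
  refine (Int.modEq_iff_dvd.2 ?_).symm
  rw [hx]
  have hK : (-1) ^ a * (M * r ^ n) = -(-1) ^ (a * b) * G * (1 - n * (p * s)) +
      (p : ℤ) ^ (b + 1) * ((p : ℤ) ^ f * (m * s) ^ 2 * ((-1) ^ a * (M * r ^ n)) -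
        (-1) ^ a * (1 - n * (p * s)) * y₃) := by
    linear_combination (-(-1) ^ a * (1 - n * (p * s)) ) * hy₃ + ((-1) ^ a * (M * r ^ n)) * hsq
      - G * (1 - n * (p * s)) * hsign2
  refine ⟨(p : ℤ) ^ f * (m * s) ^ 2 * ((-1) ^ a * (M * r ^ n)) - (-1) ^ a * (1 - n * (p * s)) * y₃ +
    (-r) ^ n * (y₁ - y₂ - k * Y₀) + (-r) ^ n * Y * y₄ - m * t * Y, ?_⟩
  linear_combination hK + M * hneg + (-r) ^ n * Y * hy₄ - p * n * Y * ht - p * t * Y * hm'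

end assembly

section conclusion

open Polynomial

/-- The Fleck quotient as a residue sum of a power of the unit `U`. -/
theorem Fp_eq_residueSum {p a e N : ℕ} {U : ℤ[X]} (hp : p.Prime)
    (hU : (1 - X) ^ p = 1 - X ^ p - (p : ℤ[X]) * (1 - X) * U) (ha : 1 ≤ a) (hap : a ≤ p - 1)
    (hN : N = a + (p - 1) * e) (r : ℤ) :
    Fp p N r = (residueSum ℤ p r ((1 - X) ^ a * U ^ e) : ℤ) := by
  have hfd : Int.fdiv ((N : ℤ) - 1) ((p : ℤ) - 1) = e := by
    have h2 : (0 : ℤ) < (p : ℤ) - 1 := by have := hp.two_le; omega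
    rw [Int.fdiv_eq_ediv_of_nonneg _ h2.le,
      show (N : ℤ) - 1 = ((a : ℤ) - 1) + ((p : ℤ) - 1) * e by
        rw [hN]; push_cast [Nat.cast_sub hp.one_le]; ring,
      Int.add_mul_ediv_left _ _ h2.ne', Int.ediv_eq_zero_of_lt (by omega) (by omega), zero_add]
  have hp0 : (-(p : ℚ)) ≠ 0 := neg_ne_zero.2 (Nat.cast_ne_zero.2 hp.ne_zero)
  rw [Fp, if_neg (by omega), add_zero, hfd, Cp_eq_residueSum, hN,
    residueSum_one_sub_X_pow hp.one_le hU ha e r, zpow_neg, zpow_natCast]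
  push_cast
  rw [inv_mul_cancel_left₀ (pow_ne_zero e hp0)]

/-- The correction term modulo `p` in terms of Bernoulli numbers. -/
theorem toZMod_neg_pow_mul_residueSum {p : ℕ} [Fact p.Prime] {a b : ℕ} {U q : ℤ[X]}
    (hodd : Odd p) (hU : (1 - X) ^ p = 1 - X ^ p - (p : ℤ[X]) * (1 - X) * U)
    (hq1 : q.eval 1 = 0) (hq' : derivative q = U ^ (p - 1) * derivative U -
      expand ℤ p (derivative U) * X ^ (p - 1)) (ha : 1 ≤ a) (hap : a < p - 1)
    {r : ℤ} {ρ : ℤ_[p]} (hρ : (r : ℤ_[p]) * ρ = 1) {β : ℕ → ℤ_[p]}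
    (hβ : ∀ k, k + 1 < p → (β k : ℚ_[p]) = (bernoulli k : ℚ)) :
    PadicInt.toZMod (((-r) ^ a *
        residueSum ℤ p r ((1 - X) ^ a * U ^ repdigit p a (b + 1) * q) : ℤ) : ℤ_[p]) =
      PadicInt.toZMod ((a.factorial : ℤ_[p]) * ∑ k ∈ Icc 2 (p - a - 1),
        ((a + k).choose a : ℤ_[p]) * β k * unitInv p k * ρ ^ k) := by
  have hp := (Fact.out : p.Prime)
  have h3 : 3 ≤ p := by
    have := hp.two_le
    rcases hodd with ⟨k, rfl⟩
    omega
  let φ := Int.castRingHom (ZMod p)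
  have hρ' : (r : ZMod p) * PadicInt.toZMod ρ = 1 := by
    have := congrArg PadicInt.toZMod hρ
    rwa [map_mul, map_intCast, map_one] at this
  have hr0 : (r : ZMod p) ≠ 0 := left_ne_zero_of_mul_eq_one hρ'
  have hd := congrArg (map φ) (derivative_one_sub_X_mul_fleckUnit hp.ne_zero hU)
  have hU1 : (U.map φ).eval 1 = 1 := by
    rw [eval_one_map, fleckUnit_eval_one hp.two_le hU, map_one]
  have hU' : 2 * (derivative (U.map φ)).eval 1 = -1 := by
    have := congrArg φ (two_mul_derivative_fleckUnit_eval_one h3 hU)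
    rw [derivative_map, eval_one_map]
    simpa using this
  have hqd := congrArg (map φ) hq'
  simp only [← derivative_map, Polynomial.map_mul, Polynomial.map_sub, Polynomial.map_one, map_X,
    Polynomial.map_pow, map_expand] at hd hqd
  have hβ' : ∀ m < p, ∑ k ∈ range m, (m.choose k : ZMod p) * PadicInt.toZMod (β k) =
      if m = 1 then 1 else 0 := by
    intro m hm
    have h : ∑ k ∈ range m, (m.choose k : ℤ_[p]) * β k = if m = 1 then 1 else 0 := by
      apply PadicInt.ext
      have h' := congrArg (Rat.cast : ℚ → ℚ_[p]) (sum_bernoulli m)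
      have h'' : ((∑ k ∈ range m, (m.choose k : ℤ_[p]) * β k : ℤ_[p]) : ℚ_[p]) =
          ((∑ k ∈ range m, (m.choose k : ℚ) * _root_.bernoulli k : ℚ) : ℚ_[p]) := by
        rw [PadicInt.coe_sum]
        push_cast
        exact sum_congr rfl fun k hk => by rw [hβ k (by have := mem_range.1 hk; omega)]
      rw [h'', h']
      split_ifs <;> simp
    have := congrArg PadicInt.toZMod h
    simpa [apply_ite (PadicInt.toZMod : ℤ_[p] → ZMod p)] using this
  have key := residueSum_log_pow_mul h3 hU1 hd hβ' hU' (q := q.map φ)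
    (by rw [eval_one_map, hq1, map_zero]) hqd hr0 ha hap.le
  have hc : residueSum (ZMod p) p r
      (((1 - X) ^ a * U ^ repdigit p a (b + 1) * q).map φ) =
      residueSum (ZMod p) p r (((1 - X) * U.map φ) ^ a * q.map φ) := by
    refine residueSum_eq_of_toCyclic_eq ?_ r
    simp only [Polynomial.map_mul, Polynomial.map_sub, Polynomial.map_one, map_X,
      Polynomial.map_pow, map_mul, map_pow, mul_pow]
    rw [repdigit_succ', pow_add (toCyclic p (U.map φ)), pow_mul (toCyclic p (U.map φ)),
      toCyclic_pow_char hU1, one_pow, one_mul]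
  rw [residueSum_map, key] at hc
  rw [map_intCast]
  push_cast
  rw [show ((residueSum ℤ p r ((1 - X) ^ a * U ^ repdigit p a (b + 1) * q) : ℤ) : ZMod p) = _
    from hc, mul_sum, map_mul, map_sum, mul_sum]
  symm
  refine sum_subset_zero_on_sdiff (fun k hk => ?_) (fun k hk => ?_) (fun k hk => ?_)
  · simp only [mem_Icc, mem_Ico] at hk ⊢
    omega
  · simp only [mem_sdiff, mem_Icc, mem_Ico] at hk
    rw [(ZMod.natCast_eq_zero_iff _ p).2 (hp.dvd_factorial.2 (by omega))]
    ring
  · simp only [mem_Icc] at hk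
    simp only [map_mul, map_pow, map_natCast, toZMod_unitInv]
    rw [eq_inv_of_mul_eq_one_right hρ', inv_neg, mul_inv]
    have hkf := natCast_factorial_ne_zero (p := p) (j := k) (by omega)
    have hfac : ((a + k).factorial : ZMod p) =
        ((a + k).choose a) * (a.factorial : ZMod p) * (k.factorial : ZMod p) := by
      have := Nat.add_choose_mul_factorial_mul_factorial a k
      rw [← this, Nat.choose_symm_add]
      push_cast
      ring
    have hβk : PadicInt.toZMod (β k) * (-1 : ZMod p) ^ k = PadicInt.toZMod (β k) := by
      rcases Nat.even_or_odd k with h | h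
      · rw [h.neg_one_pow, mul_one]
      · have : β k = 0 := PadicInt.ext (by
          rw [hβ k (by omega), bernoulli_eq_zero_of_odd h (by omega)]
          simp)
        simp [this]
    have hkf' := mul_inv_cancel₀ hkf
    have hra := mul_inv_cancel₀ hr0
    have h1 : (-(r : ZMod p)) ^ a * (-(r : ZMod p)⁻¹) ^ a = 1 := by
      rw [← mul_pow, neg_mul_neg, hra, one_pow]
    rw [hfac, pow_add, neg_pow (r : ZMod p)⁻¹ k]
    linear_combination
      (-(k.factorial : ZMod p) * (k.factorial : ZMod p)⁻¹ * PadicInt.toZMod (β k) * (-1) ^ k *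
        (a + k).choose a * (a.factorial : ZMod p) * (k : ZMod p)⁻¹ * (r : ZMod p)⁻¹ ^ k) * h1 -
      (PadicInt.toZMod (β k) * (-1) ^ k *
        (a + k).choose a * (a.factorial : ZMod p) * (k : ZMod p)⁻¹ * (r : ZMod p)⁻¹ ^ k) * hkf' -
      ((a + k).choose a * (a.factorial : ZMod p) * (k : ZMod p)⁻¹ * (r : ZMod p)⁻¹ ^ k) * hβk

theorem modCong_of_padic_sub_eq {p : ℕ} [Fact p.Prime] {x y : ℚ} {c : ℕ} {z : ℤ_[p]}
    (h : (x : ℚ_[p]) - y = (p : ℚ_[p]) ^ c * z) : modCong p c x y := by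
  by_cases hxy : x = y
  · exact Or.inl hxy
  refine Or.inr ?_
  have hne : (((x - y : ℚ) : ℚ_[p])) ≠ 0 := Rat.cast_ne_zero.2 (sub_ne_zero.2 hxy)
  have h1 : ‖((x - y : ℚ) : ℚ_[p])‖ ≤ (p : ℝ) ^ (-(c : ℤ)) := by
    push_cast
    rw [h, norm_mul, norm_pow, Padic.norm_p, zpow_neg, zpow_natCast, inv_pow]
    exact mul_le_of_le_one_right (by positivity) z.2
  rw [Padic.norm_eq_zpow_neg_valuation hne, Padic.valuation_ratCast,
    zpow_le_zpow_iff_right₀ (by exact_mod_cast (Fact.out : p.Prime).one_lt)] at h1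
  omega

end conclusion

section conclusion

open Polynomial

theorem coe_unitInv {p : ℕ} [Fact p.Prime] {k : ℕ} (hk : ¬ p ∣ k) :
    (unitInv p k : ℚ_[p]) = (k : ℚ_[p])⁻¹ := by
  rw [unitInv, if_neg hk]
  refine eq_inv_of_mul_eq_one_right ?_
  exact_mod_cast congrArg (fun x : ℤ_[p] => (x : ℚ_[p])) (padicInt_natCast_mul_inv hk)

theorem coe_sum_unitInv_eq_harm {p : ℕ} [Fact p.Prime] {a : ℕ} (ha : a < p) :
    ((∑ k ∈ range a, unitInv p (k + 1) : ℤ_[p]) : ℚ_[p]) = (harm a : ℚ) := by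
  have h1 : harm a = ∑ k ∈ range a, 1 / ((k + 1 : ℕ) : ℚ) := by
    rw [harm, range_eq_Ico, sum_Ico_add' (fun k : ℕ => 1 / (k : ℚ)) 0 a 1]
    rfl
  rw [h1, PadicInt.coe_sum]
  push_cast
  refine sum_congr rfl fun k hk => ?_
  rw [coe_unitInv (Nat.not_dvd_of_pos_of_lt (by omega) (by have := mem_range.1 hk; omega))]
  simp

theorem unitFactorial_of_lt {p m : ℕ} (hm : m < p) : unitFactorial p m = m.factorial := by
  have := factorial_eq_pow_mul_unitFactorial p m
  rw [Nat.div_eq_of_lt hm] at this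
  simpa using this.symm

theorem neg_one_pow_mul_unitFactorial_repdigit_modEq {p a b : ℕ} (hp : p.Prime) (hodd : Odd p)
    (ha : a < p) (hb : 1 ≤ b) :
    (-1) ^ ((b - 1) * a) * (unitFactorial p (repdigit p a b) : ℤ) ≡ a.factorial [ZMOD p] := by
  obtain ⟨f, rfl⟩ : ∃ f, b = f + 1 := ⟨b - 1, by omega⟩
  have h := unitFactorial_add_mul_pow hp hodd le_rfl a (repdigit p a f)
  rw [pow_one, pow_one, show a + repdigit p a f * p = repdigit p a (f + 1) by
    rw [repdigit_succ']; ring, neg_one_pow_repdigit hodd, unitFactorial_of_lt ha] at h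
  have h2 := h.mul_left ((-1) ^ (f * a))
  rwa [← mul_assoc, mul_comm f a, ← mul_pow, neg_one_mul, neg_neg, one_pow, one_mul,
    mul_comm a f] at h2

theorem pow_succ_dvd_fleckQuotient_sub {p : ℕ} [Fact p.Prime] {a n b e : ℕ} {U q : ℤ[X]}
    (hodd : Odd p) (hU : (1 - X) ^ p = 1 - X ^ p - (p : ℤ[X]) * (1 - X) * U)
    (hq : U ^ p = expand ℤ p U + (p : ℤ[X]) * q)
    (hq1 : q.eval 1 = 0) (hq' : derivative q = U ^ (p - 1) * derivative U -
      expand ℤ p (derivative U) * X ^ (p - 1)) (ha : 1 ≤ a) (hap : a < p - 1)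
    (hb : 1 ≤ b) (hn : p ^ b ∣ p * n) (han : a ≡ n [MOD (p - 1)])
    (he : p * n = a + (p - 1) * e)
    {r : ℤ} {ρ : ℤ_[p]} (hρ : (r : ℤ_[p]) * ρ = 1) (hr : ¬ (p : ℤ) ∣ r) {β : ℕ → ℤ_[p]}
    (hβ : ∀ k, k + 1 < p → (β k : ℚ_[p]) = (bernoulli k : ℚ)) :
    (p : ℤ_[p]) ^ (b + 1) ∣
      ((-(r : ℤ_[p])) ^ n * ((residueSum ℤ p r ((1 - X) ^ a * U ^ e) : ℤ) : ℤ_[p]) +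
        (-1) ^ ((b - 1) * a) * (unitFactorial p (repdigit p a b) : ℤ_[p])) -
      (a.factorial : ℤ_[p]) * (a * (unitFactorial p (p ^ b) + 1) -
        (p : ℤ_[p]) ^ b * a * ∑ k ∈ range a, unitInv p (k + 1) +
        n * ((r : ℤ_[p]) ^ (p - 1) - 1) -
        p * n * ∑ k ∈ Icc 2 (p - a - 1),
          ((a + k).choose a : ℤ_[p]) * β k * unitInv p k * ρ ^ k) := by
  have hp := (Fact.out : p.Prime)
  obtain ⟨y₁, h1⟩ := Int.modEq_iff_dvd.1
    (neg_pow_mul_residueSum_modEq hp hodd hU hq ha hap hb hn han he hr).symm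
  set h : ℤ_[p] := ∑ k ∈ range a, unitInv p (k + 1)
  obtain ⟨f, rfl⟩ : ∃ f, b = f + 1 := ⟨b - 1, by omega⟩
  have hh : PadicInt.toZMod h = ∑ k ∈ range (repdigit p a (f + 1)), ((k + 1 : ℕ) : ZMod p)⁻¹ := by
    rw [show repdigit p a (f + 1) = a + repdigit p a f * p by rw [repdigit_succ']; ring,
      sum_range_inv_add_mul hodd, map_sum]
    exact sum_congr rfl fun k _ => toZMod_unitInv _
  obtain ⟨y₂, h2⟩ := pow_succ_dvd_unitFactorial_add_mul_pow_sub hodd hb (repdigit p a (f + 1)) a hh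
  rw [← repdigit_succ] at h2
  obtain ⟨w, hw⟩ := dvd_unitFactorial_pow_add_one hp hodd hb
  obtain ⟨k, hk⟩ := Polynomial.powAddExpansion (1 : ℤ_[p]) (-((p : ℤ_[p]) ^ (f + 1) * w)) a
  obtain ⟨y₄, h4⟩ := Int.modEq_iff_dvd.1
    (neg_one_pow_mul_unitFactorial_repdigit_modEq hp hodd (by omega : a < p) hb).symm
  obtain ⟨y₅, h5⟩ := padicInt_dvd_sub_of_toZMod_eq
    (toZMod_neg_pow_mul_residueSum (b := f + 1) hodd hU hq1 hq' ha hap hρ hβ)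
  obtain ⟨s, hs⟩ : (p : ℤ) ∣ r ^ (p - 1) - 1 := by
    have := pow_sub_one_mul_prime_pow_modEq_one hp hr 0
    simpa using Int.modEq_iff_dvd.1 this.symm
  obtain ⟨m, hm⟩ := hn
  replace h1 := congrArg (Int.cast : ℤ → ℤ_[p]) h1
  replace h4 := congrArg (Int.cast : ℤ → ℤ_[p]) h4
  replace hw := congrArg (Int.cast : ℤ → ℤ_[p]) hw
  replace hs := congrArg (Int.cast : ℤ → ℤ_[p]) hs
  replace hm := congrArg (Nat.cast : ℕ → ℤ_[p]) hm
  push_cast at h1 h4 hw hs hm h5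
  rw [Nat.add_sub_cancel]
  have hW : (unitFactorial p (p ^ (f + 1)) : ℤ_[p]) ^ a =
      (-1) ^ a * (1 + -((p : ℤ_[p]) ^ (f + 1) * w)) ^ a := by
    rw [← mul_pow]
    congr 1
    linear_combination hw
  have hsign : (-1 : ℤ_[p]) ^ (a * (f + 1)) * (-1) ^ a = (-1) ^ (f * a) := by
    rw [← pow_add, show a * (f + 1) + a = f * a + 2 * a by ring, pow_add, pow_mul _ 2]
    simp
  simp only [one_pow, mul_one] at hk
  rw [hW, hk] at h2
  generalize (unitFactorial p (repdigit p a (f + 1 + 1)) : ℤ_[p]) = G' at h1 h2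
  generalize (unitFactorial p (repdigit p a (f + 1)) : ℤ_[p]) = G at h2 h4 ⊢
  generalize (unitFactorial p (p ^ (f + 1)) : ℤ_[p]) = W at hw ⊢
  rw [hs] at h1 ⊢
  set σ := ∑ k ∈ Icc 2 (p - a - 1), ((a + k).choose a : ℤ_[p]) * β k * unitInv p k * ρ ^ k
  set A := (a.factorial : ℤ_[p])
  generalize (-(r : ℤ_[p])) ^ n * ((residueSum ℤ p r ((1 - X) ^ a * U ^ e) : ℤ) : ℤ_[p]) = x at h1 ⊢
  generalize (-(r : ℤ_[p])) ^ a *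
    ((residueSum ℤ p r ((1 - X) ^ a * U ^ repdigit p a (f + 1 + 1) * q) : ℤ) : ℤ_[p]) = Y at h1 h5
  set u : ℤ_[p] := (-1) ^ (a * (f + 1))
  set u' : ℤ_[p] := (-1) ^ (f * a)
  set v : ℤ_[p] := (-1) ^ a
  clear_value u u' v h σ A
  set P : ℤ_[p] := (p : ℤ_[p])
  set Q : ℤ_[p] := P ^ (f + 1) with hQ
  have hQP : Q = P * P ^ f := by rw [hQ, pow_succ']
  rw [pow_succ P (f + 1), ← hQ] at h1 h2 ⊢
  set T : ℤ_[p] := -(a * w * (a * h)) + k * w ^ 2 * (1 + a * Q * h)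
  set T' : ℤ_[p] := T - (a * h - a * w) * (m * s) - Q * T * (m * s)
  refine ⟨y₄ * (a * w - a * h + m * s) - P ^ f * (u' * G) * T' - u * y₂ * (1 - Q * m * s) -
    m * y₅ + y₁, ?_⟩
  linear_combination h1 - u * (1 - Q * m * s) * h2 + Q * (a * w - a * h + m * s) * h4 -
    Q * m * h5 - A * a * hw - Q * u' * G * T' * hQP + (u * G' * s - Y - A * s + A * σ) * hm -
    G * (1 + a * -(Q * w) + k * (Q * w) ^ 2) * (1 + a * Q * h) * (1 - Q * m * s) * hsign

end conclusion

theorem nLow_spec {p n : ℕ} (hp : p.Prime) (hn : ¬ (p - 1) ∣ n) :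
    1 ≤ nLow p n ∧ nLow p n < p - 1 ∧ nLow p n ≡ n [MOD (p - 1)] := by
  have h2 := hp.two_le
  have hpos : (0 : ℤ) < (p : ℤ) - 1 := by omega
  have h0 := Int.emod_nonneg ((n : ℤ) - 1) hpos.ne'
  have hlt := Int.emod_lt_of_pos ((n : ℤ) - 1) hpos
  have hdm := Int.emod_add_mul_ediv ((n : ℤ) - 1) ((p : ℤ) - 1)
  have ha : (nLow p n : ℤ) = ((n : ℤ) - 1) % ((p : ℤ) - 1) + 1 :=
    Int.toNat_of_nonneg (by omega)
  have hmod : nLow p n ≡ n [MOD (p - 1)] := by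
    rw [Nat.modEq_iff_dvd, Nat.cast_sub hp.one_le, Nat.cast_one]
    exact ⟨((n : ℤ) - 1) / ((p : ℤ) - 1), by linear_combination -hdm - ha⟩
  refine ⟨by omega, lt_of_le_of_ne (by omega) fun h => hn ?_, hmod⟩
  rw [h] at hmod
  exact (Nat.modEq_zero_iff_dvd.1 (hmod.symm.trans (by simp [Nat.ModEq])))

theorem stmt10 (p n : ℕ) (r : ℤ) (hp : p.Prime) (hodd : Odd p) (hn : 0 < n)
    (h1 : ¬ (p - 1) ∣ n) (h2 : ¬ (p:ℤ) ∣ r) (b : ℕ) (hb1 : 1 ≤ b)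
    (hb2 : b ≤ padicValNat p (p*n)) :
    modCong p ((b:ℤ) + 1)
      (((-(r:ℚ))^n * Fp p (p*n) r
          + (-1:ℚ)^((b-1)*n) *
            ∏ k ∈ (Finset.Icc 1 ((p^b - 1)/(p-1) * nLow p n)).filter (fun k => ¬ p ∣ k), (k:ℚ))
        / ((nLow p n).factorial : ℚ))
      ((nLow p n : ℚ) * ((p:ℚ) * bernoulli (Nat.totient (p^b)) - (p:ℚ) + 1)
        - (p:ℚ)^b * (nLow p n : ℚ) * harm (nLow p n)
        + (n:ℚ) * ((r:ℚ)^(p-1) - 1)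
        - (p:ℚ) * (n:ℚ) * ∑ k ∈ Finset.Icc 2 (p - nLow p n - 1),
            (((nLow p n + k).choose (nLow p n) : ℕ) : ℚ) * bernoulli k / ((k:ℚ) * (r:ℚ)^k)) := by
  have : Fact p.Prime := ⟨hp⟩
  obtain ⟨ha, hap, han⟩ := nLow_spec hp h1
  generalize nLow p n = a at ha hap han ⊢
  have hdvd : p ^ b ∣ p * n :=
    (padicValNat_dvd_iff_le (mul_ne_zero hp.ne_zero hn.ne')).2 hb2
  have hp1 : p ≡ 1 [MOD (p - 1)] :=
    ((Nat.modEq_iff_dvd' hp.one_le).2 (dvd_refl (p - 1))).symm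
  obtain ⟨e, he⟩ : ∃ e, p * n = a + (p - 1) * e := by
    have hle : a ≤ p * n := by
      have := Nat.le_mul_of_pos_right p hn
      omega
    obtain ⟨e, he⟩ := (Nat.modEq_iff_dvd' hle).1
      (han.trans (by simpa using (hp1.mul_right n).symm))
    exact ⟨e, by omega⟩
  obtain ⟨U, hU⟩ := exists_fleckUnit hp
  obtain ⟨q, hq, hq1, hq'⟩ := exists_fleckUnit_pow_eq hp hU
  obtain ⟨ρ, hρ⟩ : ∃ ρ : ℤ_[p], (r : ℤ_[p]) * ρ = 1 := by
    refine ⟨_, PadicInt.mul_inv (le_antisymm (PadicInt.norm_le_one _) (not_lt.1 fun h => h2 ?_))⟩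
    exact (PadicInt.norm_int_lt_one_iff_dvd r).1 h
  have hβ : ∀ k, ∃ x : ℤ_[p], k + 1 < p → (x : ℚ_[p]) = (bernoulli k : ℚ) := by
    intro k
    by_cases hk : k + 1 < p
    · exact ⟨⟨_, bernoulli_mem_padicInt k hk⟩, fun _ => rfl⟩
    · exact ⟨0, fun h => absurd h hk⟩
  choose β hβ using hβ
  obtain ⟨y, hy⟩ := pow_succ_dvd_fleckQuotient_sub hodd hU hq hq1 hq' ha hap hb1 hdvd han he
    hρ h2 hβ
  obtain ⟨z, hz, hB⟩ := exists_prime_mul_bernoulli_totient_eq hodd hb1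
  obtain ⟨z, rfl⟩ : ∃ z' : ℤ_[p], (z' : ℚ_[p]) = z := ⟨⟨z, hz⟩, rfl⟩
  have hρ' : (ρ : ℚ_[p]) = (r : ℚ_[p])⁻¹ := by
    refine eq_inv_of_mul_eq_one_right ?_
    exact_mod_cast congrArg (fun x : ℤ_[p] => (x : ℚ_[p])) hρ
  have hsign : (-1 : ℚ) ^ ((b - 1) * n) = (-1) ^ ((b - 1) * a) := by
    have hmod : a ≡ n [MOD 2] := han.of_dvd (Nat.Odd.sub_odd hodd odd_one).two_dvd
    refine neg_one_pow_congr ?_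
    rw [Nat.even_mul, Nat.even_mul, Nat.even_iff, Nat.even_iff, Nat.even_iff, hmod]
  have hprod : ∏ k ∈ (Icc 1 ((p ^ b - 1) / (p - 1) * a)).filter (fun k => ¬ p ∣ k), (k : ℚ) =
      (unitFactorial p (repdigit p a b) : ℚ) := by
    rw [unitFactorial_eq_prod_filter, repdigit, Nat.geomSum_eq hp.two_le, mul_comm a]
    push_cast
    rfl
  have haf : ¬ p ∣ a.factorial := by
    rw [hp.dvd_factorial]
    omega
  have haf0 : (a.factorial : ℚ_[p]) ≠ 0 := Nat.cast_ne_zero.2 a.factorial_ne_zero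
  have hσ : ((∑ k ∈ Icc 2 (p - a - 1),
      ((a + k).choose a : ℤ_[p]) * β k * unitInv p k * ρ ^ k : ℤ_[p]) : ℚ_[p]) =
      ((∑ k ∈ Icc 2 (p - a - 1), (((a + k).choose a : ℕ) : ℚ) * bernoulli k /
        ((k : ℚ) * (r : ℚ) ^ k) : ℚ) : ℚ_[p]) := by
    rw [PadicInt.coe_sum]
    push_cast
    refine sum_congr rfl fun k hk => ?_
    rw [mem_Icc] at hk
    rw [hβ k (by omega), coe_unitInv (Nat.not_dvd_of_pos_of_lt (by omega) (by omega)), hρ',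
      div_eq_mul_inv, mul_inv, inv_pow]
    ring
  rw [Fp_eq_residueSum hp hU ha hap.le he, hsign, hprod]
  have hy' := congrArg (fun x : ℤ_[p] => (x : ℚ_[p])) hy
  simp only [PadicInt.coe_sub, PadicInt.coe_add, PadicInt.coe_mul, PadicInt.coe_pow,
    PadicInt.coe_neg, PadicInt.coe_natCast, PadicInt.coe_intCast, PadicInt.coe_one,
    coe_sum_unitInv_eq_harm (show a < p by omega), hσ] at hy'
  refine modCong_of_padic_sub_eq (c := b + 1) (z := unitInv p a.factorial * y - a * z) ?_
  simp only [Rat.cast_sub, Rat.cast_add, Rat.cast_mul, Rat.cast_div, Rat.cast_pow, Rat.cast_neg,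
    Rat.cast_natCast, Rat.cast_intCast, Rat.cast_one, PadicInt.coe_sub, PadicInt.coe_mul,
    PadicInt.coe_natCast, coe_unitInv haf]
  rw [hB]
  field_simp
  linear_combination hy'
end
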